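/- arXiv:1904.01794 — 2 statements merged into one kernel-verified Lean document; each statement's English description precedes it below -/
import Mathlib

section
/- Let s ≥ 3 and k ≥ 1 be integers. Let G be a bipartite graph with bipartition (X,Y) such that |X| = |Y| ≥ s·k. If the minimum degree of G is at least (s−1)k + 1, then G contains k vertex-disjoint cycles, each of length at least 2s. -/
set_option autoImplicit false
set_option linter.unusedSectionVars false
set_option linter.unnecessarySimpa false
namespace Wang
section basics
variable {V : Type*} [DecidableEq V] (G : SimpleGraph V)

def IsCyc (l : List V) : Prop :=
  l.Nodup ∧ 3 ≤ l.length ∧ l.IsChain G.Adj ∧ ∀ a ∈ l.getLast?, ∀ b ∈ l.head?, G.Adj a b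

def CycSet (C : Finset V) : Prop := ∃ l, IsCyc G l ∧ l.toFinset = C

variable {G}

lemma IsCyc.rot {l1 l2 : List V} (h : IsCyc G (l1 ++ l2)) : IsCyc G (l2 ++ l1) := by
  rcases l1 with _ | ⟨a, l1⟩
  · simpa using h
  rcases l2 with _ | ⟨b, l2⟩
  · simpa using h
  obtain ⟨h1, h2, h3, h4⟩ := h
  refine ⟨List.nodup_append_comm.1 h1, by simp at h2 ⊢; omega, ?_, ?_⟩
  · rw [List.isChain_append] at h3 ⊢
    refine ⟨h3.2.1, h3.1, ?_⟩
    intro x hx y hy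
    apply h4
    · rw [List.getLast?_append, Option.mem_def.1 hx]; rfl
    · simpa using hy
  · rw [List.isChain_append] at h3
    intro x hx y hy
    apply h3.2.2
    · rw [List.getLast?_append] at hx
      simpa [List.getLast?_cons] using hx
    · simpa using hy

lemma IsCyc.exists_rot {l : List V} (h : IsCyc G l) {x : V} (hx : x ∈ l) :
    ∃ t, IsCyc G (x :: t) ∧ l ~r (x :: t) := by
  obtain ⟨s, t, rfl⟩ := List.append_of_mem hx
  refine ⟨t ++ s, h.rot, ?_⟩
  have := List.IsRotated.symm (List.isRotated_append (l := x :: t) (l' := s))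
  simpa using this

lemma cycSet_head {C : Finset V} (h : CycSet G C) {x : V} (hx : x ∈ C) :
    ∃ t, IsCyc G (x :: t) ∧ (x :: t).toFinset = C := by
  obtain ⟨l, hl, rfl⟩ := h
  obtain ⟨t, ht, hr⟩ := hl.exists_rot (List.mem_toFinset.1 hx)
  refine ⟨t, ht, ?_⟩
  ext y
  simp only [List.mem_toFinset]
  exact hr.mem_iff.symm

lemma IsCyc.card {l : List V} (h : IsCyc G l) : l.toFinset.card = l.length :=
  List.toFinset_card_of_nodup h.1

lemma IsCyc.replace {x u : V} {t : List V} (h : IsCyc G (x :: t)) (hu : u ∉ t)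
    (h1 : ∀ a ∈ t.getLast?, G.Adj u a) (h2 : ∀ a ∈ t.head?, G.Adj u a) : IsCyc G (u :: t) := by
  obtain ⟨a1, a2, a3, a4⟩ := h
  refine ⟨?_, by simpa using a2, ?_, ?_⟩
  · rw [List.nodup_cons] at a1 ⊢
    exact ⟨hu, a1.2⟩
  · rw [List.isChain_cons] at a3 ⊢
    exact ⟨h2, a3.2⟩
  · intro a ha b hb
    simp at hb
    subst hb
    rcases t with _ | ⟨y, t⟩
    · simp at a2
    · apply (h1 _ _).symm
      simpa [List.getLast?_cons] using ha

lemma cyc_perm {C : Finset V} (hC : CycSet G C) :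
    ∃ σ : Equiv.Perm V, (∀ x ∈ C, σ x ∈ C ∧ σ.symm x ∈ C ∧ G.Adj x (σ x)) ∧
      ∀ x ∈ C, ∀ u, u ∉ C → G.Adj u (σ x) → G.Adj u (σ.symm x) →
        CycSet G (insert u (C.erase x)) := by
  obtain ⟨l, hl, rfl⟩ := hC
  have key : ∀ x ∈ l, ∃ y z t, IsCyc G (x :: t) ∧ l ~r (x :: t) ∧ l.formPerm x = y ∧
      l.formPerm.symm x = z ∧ t.head? = some y ∧ t.getLast? = some z := by
    intro x hx
    obtain ⟨t, ht, hr⟩ := hl.exists_rot hx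
    have hp := List.formPerm_eq_of_isRotated hl.1 hr
    rcases t with _ | ⟨y, t⟩
    · have := ht.2.1
      simp at this
    rcases List.eq_nil_or_concat (y :: t) with h0 | ⟨t', z, h0⟩
    · simp at h0
    refine ⟨y, z, y :: t, ht, hr, ?_, ?_, rfl, ?_⟩
    · rw [hp]; exact List.formPerm_apply_head _ _ _ ht.1
    · rw [Equiv.symm_apply_eq, hp, h0]
      simpa using (List.formPerm_cons_concat_apply_last x z t').symm
    · rw [h0]; simp
  refine ⟨l.formPerm, ?_, ?_⟩
  · intro x hx
    rw [List.mem_toFinset] at hx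
    obtain ⟨y, z, t, ht, hr, hy, hz, hh, hla⟩ := key x hx
    have hyt : y ∈ t := List.mem_of_head? hh
    have hzt : z ∈ t := List.mem_of_getLast? hla
    rw [hy, hz]
    refine ⟨?_, ?_, ?_⟩
    · rw [List.mem_toFinset, hr.mem_iff]; exact List.mem_cons_of_mem _ hyt
    · rw [List.mem_toFinset, hr.mem_iff]; exact List.mem_cons_of_mem _ hzt
    · have := ht.2.2.1
      rw [List.isChain_cons] at this
      exact this.1 y hh
  · intro x hx u hu h1 h2
    rw [List.mem_toFinset] at hx
    obtain ⟨y, z, t, ht, hr, hy, hz, hh, hla⟩ := key x hx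
    rw [hy] at h1
    rw [hz] at h2
    rw [List.mem_toFinset, hr.mem_iff, List.mem_cons, not_or] at hu
    refine ⟨u :: t, ht.replace hu.2 ?_ ?_, ?_⟩
    · rw [hla]; simpa using h2
    · rw [hh]; simpa using h1
    · have hxt := (List.nodup_cons.1 ht.1).1
      ext w
      simp only [List.toFinset_cons, Finset.mem_insert, List.mem_toFinset, Finset.mem_erase,
        hr.mem_iff, List.mem_cons]
      constructor
      · rintro (h | h)
        · exact Or.inl h
        · exact Or.inr ⟨fun h' => hxt (h' ▸ h), Or.inr h⟩
      · rintro (h | ⟨h, h' | h'⟩)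
        · exact Or.inl h
        · exact absurd h' h
        · exact Or.inr h'

lemma walk_of_chain : ∀ (t : List V) (x : V), (x :: t).IsChain G.Adj →
    ∃ z, ∃ w : G.Walk x z, w.support = x :: t ∧ (x :: t).getLast? = some z
  | [], x, _ => ⟨x, SimpleGraph.Walk.nil, by simp, by simp⟩
  | y :: t, x, h => by
    rw [List.isChain_cons_cons] at h
    obtain ⟨z, w, hw, hz⟩ := walk_of_chain t y h.2
    exact ⟨z, SimpleGraph.Walk.cons h.1 w, by simp [hw], by simpa [List.getLast?_cons] using hz⟩

lemma cycSet_walk {C : Finset V} (hC : CycSet G C) :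
    ∃ z, ∃ w : G.Walk z z, w.IsCycle ∧ w.length = C.card ∧ ∀ v ∈ w.support, v ∈ C := by
  obtain ⟨l, hl, rfl⟩ := hC
  rcases l with _ | ⟨x, t⟩
  · have := hl.2.1
    simp at this
  obtain ⟨z, w, hw, hz⟩ := walk_of_chain t x hl.2.2.1
  have hadj : G.Adj z x := hl.2.2.2 z hz x rfl
  have hp : w.IsPath := by
    rw [SimpleGraph.Walk.isPath_def, hw]; exact hl.1
  have hlen : w.length = t.length := by
    have := w.length_support
    rw [hw] at this
    simpa using this.symm
  have h3 := hl.2.1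
  refine ⟨z, SimpleGraph.Walk.cons hadj w, ?_, ?_, ?_⟩
  · rw [SimpleGraph.Walk.cons_isCycle_iff]
    refine ⟨hp, ?_⟩
    intro hmem
    rw [Sym2.eq_swap] at hmem
    have := hp.length_eq_one_of_mem_edges hmem
    simp at h3
    omega
  · rw [hl.card]
    simp [hlen]
  · intro v hv
    rw [List.mem_toFinset]
    rw [SimpleGraph.Walk.support_cons, List.mem_cons, hw] at hv
    rcases hv with rfl | hv
    · exact List.mem_of_getLast? hz
    · exact hv
end basics
end Wang
namespace Wang
section counting
variable {V : Type*} [DecidableEq V] (G : SimpleGraph V) [DecidableRel G.Adj]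

def dg (v : V) (C : Finset V) : ℕ := (C.filter (fun w => G.Adj v w)).card

variable {G}

lemma dg_mono {v : V} {A B : Finset V} (h : A ⊆ B) : dg G v A ≤ dg G v B :=
  Finset.card_le_card (Finset.filter_subset_filter _ h)

lemma dg_le_card {v : V} {A : Finset V} : dg G v A ≤ A.card := Finset.card_filter_le _ _

lemma dg_union {v : V} {A B : Finset V} (h : Disjoint A B) :
    dg G v (A ∪ B) = dg G v A + dg G v B := by
  unfold dg
  rw [Finset.filter_union, Finset.card_union_of_disjoint]
  exact Finset.disjoint_filter_filter h

lemma dg_insert_le {v x : V} {A : Finset V} : dg G v (insert x A) ≤ dg G v A + 1 := by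
  unfold dg
  rw [Finset.filter_insert]
  split_ifs
  · exact Finset.card_insert_le _ _
  · omega

lemma dg_insert_not {v x : V} {A : Finset V} (h : ¬ G.Adj v x) :
    dg G v (insert x A) = dg G v A := by
  unfold dg
  rw [Finset.filter_insert, if_neg h]

lemma dg_zero {v : V} {A : Finset V} (h : ∀ x ∈ A, ¬ G.Adj v x) : dg G v A = 0 := by
  unfold dg
  rw [Finset.card_eq_zero, Finset.filter_eq_empty_iff]
  exact h

variable {col : V → Bool} (hcol : ∀ a b, G.Adj a b → col a ≠ col b)
include hcol

lemma cyc_color_le {C : Finset V} (hC : CycSet G C) (c : Bool) :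
    (C.filter (fun x => col x = c)).card ≤ (C.filter (fun x => col x = !c)).card := by
  obtain ⟨σ, h1, -⟩ := cyc_perm hC
  apply Finset.card_le_card_of_injOn σ _ (σ.injective.injOn)
  intro x hx
  simp only [Finset.coe_filter, Set.mem_ofPred_eq] at hx ⊢
  refine ⟨(h1 x hx.1).1, ?_⟩
  have := hcol _ _ (h1 x hx.1).2.2
  rw [hx.2] at this
  revert this
  cases c <;> cases col (σ x) <;> simp

lemma cyc_color {C : Finset V} (hC : CycSet G C) (c : Bool) :
    2 * (C.filter (fun x => col x = c)).card = C.card := by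
  have h1 := cyc_color_le hcol hC c
  have h2 := cyc_color_le hcol hC (!c)
  rw [Bool.not_not] at h2
  have h3 := Finset.card_filter_add_card_filter_not (s := C) (fun x => col x = c)
  have h4 : C.filter (fun x => ¬ col x = c) = C.filter (fun x => col x = !c) := by
    apply Finset.filter_congr
    intro x _
    cases c <;> cases col x <;> simp
  rw [h4] at h3
  omega

lemma nbr_sub (v : V) (C : Finset V) :
    C.filter (fun w => G.Adj v w) ⊆ C.filter (fun x => col x = !(col v)) := by
  intro x hx
  rw [Finset.mem_filter] at hx ⊢
  refine ⟨hx.1, ?_⟩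
  have := hcol _ _ hx.2
  revert this
  cases col v <;> cases col x <;> simp

lemma dg_le_s {C : Finset V} (hC : CycSet G C) {s : ℕ} (hs : C.card = 2 * s) (v : V) :
    dg G v C ≤ s := by
  have h1 := Finset.card_le_card (nbr_sub hcol v C)
  have h2 := cyc_color hcol hC (!(col v))
  unfold dg
  omega

lemma pickZ {C Z : Finset V} (hC : CycSet G C) {s : ℕ} (hs : C.card = 2 * s) {u : V}
    (hu : u ∉ C) (hZ : Z ⊆ C) (hZc : ∀ z ∈ Z, col z = col u)
    (h : 2 * s < Z.card + 2 * dg G u C) : ∃ x ∈ Z, CycSet G (insert u (C.erase x)) := by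
  obtain ⟨σ, h1, h2⟩ := cyc_perm hC
  by_contra hcon
  push Not at hcon
  set M := (C.filter (fun x => col x = !(col u))) \ C.filter (fun w => G.Adj u w) with hM
  have hMc : M.card + dg G u C = s := by
    have h5 := cyc_color hcol hC (!(col u))
    rw [hM, Finset.card_sdiff_of_subset (nbr_sub hcol u C)]
    have := Finset.card_le_card (nbr_sub hcol u C)
    unfold dg
    omega
  have hcl : ∀ x ∈ Z, ∀ y, y ∈ C → col x ≠ col y → ¬ G.Adj u y → y ∈ M := by
    intro x hx y hy hxy hn
    rw [hM, Finset.mem_sdiff, Finset.mem_filter, Finset.mem_filter]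
    refine ⟨⟨hy, ?_⟩, fun h => hn h.2⟩
    rw [hZc x hx] at hxy
    revert hxy
    cases col u <;> cases col y <;> simp
  have hA : (Z.filter (fun x => ¬ G.Adj u (σ x))).card ≤ M.card := by
    apply Finset.card_le_card_of_injOn σ _ (σ.injective.injOn)
    intro x hx
    simp only [Finset.coe_filter, Set.mem_ofPred_eq] at hx
    exact hcl x hx.1 _ (h1 x (hZ hx.1)).1 (hcol _ _ (h1 x (hZ hx.1)).2.2) hx.2
  have hB : (Z.filter (fun x => ¬ G.Adj u (σ.symm x))).card ≤ M.card := by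
    apply Finset.card_le_card_of_injOn σ.symm _ (σ.symm.injective.injOn)
    intro x hx
    simp only [Finset.coe_filter, Set.mem_ofPred_eq] at hx
    have hx' := (h1 x (hZ hx.1)).2.1
    refine hcl x hx.1 _ hx' ?_ hx.2
    have := hcol _ _ (h1 _ hx').2.2
    rw [Equiv.apply_symm_apply] at this
    exact this.symm
  have hU : Z ⊆ Z.filter (fun x => ¬ G.Adj u (σ x)) ∪ Z.filter (fun x => ¬ G.Adj u (σ.symm x)) := by
    intro x hx
    rw [Finset.mem_union, Finset.mem_filter, Finset.mem_filter]
    by_contra hc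
    push Not at hc
    exact hcon x hx (h2 x (hZ hx) u hu (hc.1 hx) (hc.2 hx))
  have := (Finset.card_le_card hU).trans (Finset.card_union_le _ _)
  omega

/-- swap target adjacent to one vertex -/
lemma pick1 {C : Finset V} (hC : CycSet G C) {s : ℕ} (hs : C.card = 2 * s) {u v : V}
    (hu : u ∉ C) (huv : col u ≠ col v) (h : 2 * s < dg G v C + 2 * dg G u C) :
    ∃ x ∈ C, G.Adj v x ∧ CycSet G (insert u (C.erase x)) := by
  obtain ⟨x, hx, hx'⟩ := pickZ hcol hC hs hu (Z := C.filter (fun w => G.Adj v w))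
    (Finset.filter_subset _ _) (by
      intro z hz
      have := hcol _ _ (Finset.mem_filter.1 hz).2
      revert this huv
      cases col u <;> cases col v <;> cases col z <;> simp) h
  rw [Finset.mem_filter] at hx
  exact ⟨x, hx.1, hx.2, hx'⟩

lemma pick2 {C : Finset V} (hC : CycSet G C) {s : ℕ} (hs : C.card = 2 * s) {u v w : V}
    (hu : u ∉ C) (huv : col u ≠ col v) (huw : col u ≠ col w)
    (h : 3 * s < dg G v C + dg G w C + 2 * dg G u C) :
    ∃ x ∈ C, G.Adj v x ∧ G.Adj w x ∧ CycSet G (insert u (C.erase x)) := by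
  obtain ⟨x, hx, hx'⟩ := pickZ hcol hC hs hu
    (Z := C.filter (fun x => G.Adj v x) ∩ C.filter (fun x => G.Adj w x))
    (Finset.inter_subset_left.trans (Finset.filter_subset _ _)) (by
      intro z hz
      have := hcol _ _ (Finset.mem_filter.1 (Finset.mem_inter.1 hz).1).2
      revert this huv
      cases col u <;> cases col v <;> cases col z <;> simp) (by
      have h1 := Finset.card_union_add_card_inter (C.filter (fun x => G.Adj v x))
        (C.filter (fun x => G.Adj w x))
      have h2 : (C.filter (fun x => G.Adj v x) ∪ C.filter (fun x => G.Adj w x)).card ≤ s := by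
        have h3 := cyc_color hcol hC (!(col v))
        have h4 : C.filter (fun x => G.Adj v x) ∪ C.filter (fun x => G.Adj w x) ⊆
            C.filter (fun x => col x = !(col v)) := by
          apply Finset.union_subset (nbr_sub hcol v C)
          have : col v = col w := by
            revert huv huw
            cases col u <;> cases col v <;> cases col w <;> simp
          rw [this]
          exact nbr_sub hcol w C
        have := Finset.card_le_card h4
        omega
      unfold dg at h ⊢
      omega)
  rw [Finset.mem_inter, Finset.mem_filter, Finset.mem_filter] at hx
  exact ⟨x, hx.1.1, hx.1.2, hx.2.2, hx'⟩

lemma count_col (c : Bool) : ∀ (t : List V) (a : V), (a :: t).IsChain G.Adj →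
    (a :: t).countP (fun x => col x = c) =
      if col a = c then (t.length + 2) / 2 else (t.length + 1) / 2
  | [], a, _ => by by_cases h : col a = c <;> simp [h]
  | b :: t, a, h => by
    rw [List.isChain_cons_cons] at h
    have ih := count_col c t b h.2
    have hab := hcol _ _ h.1
    rw [List.countP_cons, ih]
    by_cases ha : col a = c
    · have hb : ¬ col b = c := fun hb => hab (ha.trans hb.symm)
      simp [ha, hb]
    · have hb : col b = c := by
        revert hab ha
        cases col a <;> cases col b <;> cases c <;> simp
      simp [ha, hb] <;> omega

lemma filter_card_countP (p : V → Prop) [DecidablePred p] {l : List V} (hl : l.Nodup) :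
    (l.toFinset.filter p).card = l.countP (fun x => decide (p x)) := by
  have : l.toFinset.filter p = (l.filter (fun x => decide (p x))).toFinset := by
    ext x
    simp
  rw [this, List.toFinset_card_of_nodup (hl.filter _), List.countP_eq_length_filter]

lemma dg_le_countP {v : V} {l : List V} (hl : l.Nodup) :
    dg G v l.toFinset ≤ l.countP (fun x => col x = !(col v)) := by
  rw [← filter_card_countP hcol (fun x => col x = !(col v)) hl]
  exact Finset.card_le_card (nbr_sub hcol v _)

lemma dg_list_le {v : V} {l : List V} (hl : l.Nodup) (hc : l.IsChain G.Adj) :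
    2 * dg G v l.toFinset ≤ l.length + 1 := by
  have h := dg_le_countP hcol (v := v) hl
  rcases l with _ | ⟨a, t⟩
  · simp [dg]
  · rw [count_col hcol _ t a hc] at h
    simp only [List.length_cons]
    split_ifs at h <;> omega

lemma dg_list_le' {v : V} {l : List V} (hl : l.Nodup) (hc : l.IsChain G.Adj)
    (h0 : ∀ a ∈ l.head?, ¬ G.Adj v a ∧ col a = col v) : 2 * dg G v l.toFinset ≤ l.length := by
  have h := dg_le_countP hcol (v := v) hl
  rcases l with _ | ⟨a, t⟩
  · simp [dg]
  · rw [count_col hcol _ t a hc] at h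
    have := (h0 a rfl).2
    rw [this, if_neg (by simp)] at h
    simp only [List.length_cons]
    omega

lemma dg_list_even {v : V} {l : List V} (hl : l.Nodup) (hc : l.IsChain G.Adj)
    (he : Even l.length) : 2 * dg G v l.toFinset ≤ l.length := by
  have := dg_list_le hcol (v := v) hl hc
  obtain ⟨r, hr⟩ := he
  omega

lemma long_of_path {s : ℕ} (hs : 2 ≤ s) {v : V} : ∀ (n : ℕ) (l : List V), l.length = n →
    l.Nodup → l.IsChain G.Adj → v ∉ l → s ≤ dg G v l.toFinset →
    ∃ C, CycSet G C ∧ C ⊆ insert v l.toFinset ∧ 2 * s ≤ C.card := by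
  intro n
  induction n with
  | zero =>
    intro l hl _ _ _ hd
    rw [List.length_eq_zero_iff] at hl
    subst hl
    simp [dg] at hd
    omega
  | succ n ih =>
    intro l hl hn hc hv hd
    rcases l with _ | ⟨a, t⟩
    · simp at hl
    by_cases ha : G.Adj v a
    · rcases List.eq_nil_or_concat (a :: t) with h0 | ⟨t', z, h0⟩
      · simp at h0
      rw [List.concat_eq_append] at h0
      by_cases hz : G.Adj v z
      · refine ⟨(v :: a :: t).toFinset, ⟨v :: a :: t, ⟨?_, ?_, ?_, ?_⟩, rfl⟩, ?_, ?_⟩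
        · exact List.nodup_cons.2 ⟨hv, hn⟩
        · have := dg_list_le hcol (v := v) hn hc
          simp only [List.length_cons] at this ⊢
          omega
        · rw [List.isChain_cons_cons]
          exact ⟨ha, hc⟩
        · intro x hx y hy
          simp at hy
          subst hy
          rw [h0] at hx
          rw [List.getLast?_cons] at hx
          simp at hx
          subst hx
          exact hz.symm
        · simp
        · rw [List.toFinset_card_of_nodup (List.nodup_cons.2 ⟨hv, hn⟩)]
          have := dg_list_le hcol (v := v) hn hc
          simp only [List.length_cons] at this ⊢
          omega
      · rw [h0] at hl hn hc hv hd
        obtain ⟨C, hC1, hC2, hC3⟩ := ih t' (by simpa using hl) (List.Nodup.of_append_left hn)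
          hc.left_of_append (fun h => hv (List.mem_append_left _ h)) (by
            have : (t' ++ [z]).toFinset = insert z t'.toFinset := by
              ext; simp
            rw [this, dg_insert_not hz] at hd
            exact hd)
        refine ⟨C, hC1, hC2.trans ?_, hC3⟩
        rw [h0]
        apply Finset.insert_subset_insert
        intro x; simp +contextual
    · obtain ⟨C, hC1, hC2, hC3⟩ := ih t (by simpa using hl) (List.nodup_cons.1 hn).2
        (List.isChain_cons.1 hc).2 (fun h => hv (List.mem_cons_of_mem _ h)) (by
          rw [List.toFinset_cons, dg_insert_not ha] at hd
          exact hd)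
      refine ⟨C, hC1, hC2.trans ?_, hC3⟩
      apply Finset.insert_subset_insert
      intro x; simp +contextual

end counting
end Wang
namespace Wang
section shorter
variable {V : Type*} [DecidableEq V] {G : SimpleGraph V} [DecidableRel G.Adj]
variable {col : V → Bool} (hcol : ∀ a b, G.Adj a b → col a ≠ col b)
include hcol

lemma shorter_out {s : ℕ} (hs : 2 ≤ s) {D : Finset V} (hD : CycSet G D) (hDs : 2 * s < D.card)
    {v : V} (hv : v ∉ D) (hd : s ≤ dg G v D) :
    ∃ C, CycSet G C ∧ C ⊆ insert v D ∧ 2 * s ≤ C.card ∧ C.card < D.card := by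
  have hcc := cyc_color hcol hD (!(col v))
  have hsub := nbr_sub hcol v D
  obtain ⟨y, hy, hyd⟩ : ∃ y ∈ D.filter (fun x => col x = !(col v)), s ≤ dg G v (D.erase y) := by
    by_cases h : dg G v D = s
    · have hlt : (D.filter (fun w => G.Adj v w)).card < (D.filter (fun x => col x = !(col v))).card := by
        unfold dg at h
        omega
      obtain ⟨y, hy, hyn⟩ := Finset.exists_mem_notMem_of_card_lt_card hlt
      refine ⟨y, hy, ?_⟩
      have hyD := (Finset.mem_filter.1 hy).1
      have hna : ¬ G.Adj v y := fun h => hyn (Finset.mem_filter.2 ⟨hyD, h⟩)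
      have := dg_insert_not (A := D.erase y) hna
      rw [Finset.insert_erase hyD] at this
      omega
    · obtain ⟨y, hy⟩ : (D.filter (fun w => G.Adj v w)).Nonempty := by
        rw [← Finset.card_pos]
        unfold dg at hd
        omega
      refine ⟨y, hsub hy, ?_⟩
      have := dg_insert_le (G := G) (v := v) (x := y) (A := D.erase y)
      rw [Finset.insert_erase (Finset.mem_filter.1 hy).1] at this
      omega
  rw [Finset.mem_filter] at hy
  obtain ⟨t, ht, htD⟩ := cycSet_head hD hy.1
  have hnd := List.nodup_cons.1 ht.1
  have hDe : D.erase y = t.toFinset := by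
    rw [← htD]
    ext x
    simp only [Finset.mem_erase, List.mem_toFinset, List.mem_cons]
    constructor
    · tauto
    · intro h
      exact ⟨fun h' => hnd.1 (h' ▸ h), Or.inr h⟩
  have hlen : D.card = t.length + 1 := by
    rw [← htD, ht.card]; simp
  rw [hDe] at hyd
  rcases t with _ | ⟨z, t⟩
  · have := ht.2.1
    simp at this
  have hch := List.isChain_cons_cons.1 ht.2.2.1
  have hna : ¬ G.Adj v z := by
    intro h
    have h1 := hcol _ _ h
    have h2 := hcol _ _ hch.1
    rw [hy.2] at h2
    revert h1 h2
    cases col v <;> cases col z <;> simp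
  rw [List.toFinset_cons, dg_insert_not hna] at hyd
  have hvt : v ∉ t := by
    intro h
    apply hv
    rw [← htD]
    simp [h]
  obtain ⟨C, h1, h2, h3⟩ := long_of_path hcol hs t.length t rfl (List.nodup_cons.1 hnd.2).2
    (List.isChain_cons.1 hch.2).2 hvt hyd
  refine ⟨C, h1, h2.trans ?_, h3, ?_⟩
  · apply Finset.insert_subset_insert
    rw [← htD]
    intro x; simp +contextual
  · have h4 := Finset.card_le_card h2
    have h5 := Finset.card_insert_le v t.toFinset
    have h6 := List.toFinset_card_le t
    simp at hlen
    omega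

lemma trim_right {v : V} : ∀ (n : ℕ) (l : List V), l.length = n → 0 < dg G v l.toFinset →
    ∃ l1 l2, l = l1 ++ l2 ∧ dg G v l1.toFinset = dg G v l.toFinset ∧
      ∃ z, l1.getLast? = some z ∧ G.Adj v z := by
  intro n
  induction n with
  | zero =>
    intro l hl hd
    rw [List.length_eq_zero_iff] at hl
    subst hl
    simp [dg] at hd
  | succ n ih =>
    intro l hl hd
    rcases List.eq_nil_or_concat l with h0 | ⟨t', z, h0⟩
    · simp [h0] at hl
    rw [List.concat_eq_append] at h0
    by_cases hz : G.Adj v z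
    · exact ⟨l, [], by simp, rfl, z, by rw [h0]; simp, hz⟩
    · have h1 : l.toFinset = insert z t'.toFinset := by
        rw [h0]; ext; simp
      rw [h1, dg_insert_not hz] at hd ⊢
      obtain ⟨l1, l2, h2, h3⟩ := ih t' (by rw [h0] at hl; simpa using hl) hd
      exact ⟨l1, l2 ++ [z], by rw [h0, h2]; simp, h3⟩

lemma shorter_in {s : ℕ} (hs : 3 ≤ s) {D : Finset V} (hD : CycSet G D) (hDs : 2 * s + 1 < D.card)
    {v : V} (hv : v ∈ D) (hd : s ≤ dg G v D) :
    ∃ C, CycSet G C ∧ C ⊆ D ∧ 2 * s ≤ C.card ∧ C.card < D.card := by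
  obtain ⟨t, ht, htD⟩ := cycSet_head hD hv
  have hlen : D.card = t.length + 1 := by
    rw [← htD, ht.card]; simp
  rcases t with _ | ⟨d1, _ | ⟨d2, _ | ⟨d3, t⟩⟩⟩
  · simp at hlen; omega
  · simp at hlen; omega
  · simp at hlen; omega
  simp at hlen
  obtain ⟨a1, a2, a3, a4⟩ := ht
  simp only [List.isChain_cons_cons] at a3
  by_cases h3 : G.Adj v d3
  · have hnd : (v :: d3 :: t).Nodup := by
      simp at a1 ⊢; tauto
    refine ⟨(v :: d3 :: t).toFinset, ⟨_, ⟨hnd, ?_, ?_, ?_⟩, rfl⟩, ?_, ?_, ?_⟩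
    · simp; omega
    · rw [List.isChain_cons_cons]; exact ⟨h3, a3.2.2.2⟩
    · intro x hx y hy
      apply a4 x _ y (by simpa using hy)
      simpa [List.getLast?_cons] using hx
    · rw [← htD]; intro x; simp; tauto
    · rw [List.toFinset_card_of_nodup hnd]; simp; omega
    · rw [List.toFinset_card_of_nodup hnd]; simp; omega
  · rcases List.eq_nil_or_concat t with h0 | ⟨t0, z, h0⟩
    · subst h0; simp at hlen; omega
    rw [List.concat_eq_append] at h0
    have hvd2 : col d2 = col v := by
      have h1 := hcol _ _ a3.1
      have h2 := hcol _ _ a3.2.1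
      revert h1 h2
      cases col v <;> cases col d1 <;> cases col d2 <;> simp
    have hnd2 : ¬ G.Adj v d2 := fun h => hcol _ _ h hvd2.symm
    have hcnt : s ≤ dg G v t0.toFinset + 2 := by
      rw [← htD] at hd
      have e : (v :: d1 :: d2 :: d3 :: t).toFinset =
          insert v (insert d2 (insert d3 (insert d1 (insert z t0.toFinset)))) := by
        rw [h0]; ext x; simp; tauto
      rw [e, dg_insert_not (G.loopless.irrefl v), dg_insert_not hnd2, dg_insert_not h3] at hd
      have i1 := dg_insert_le (G := G) (v := v) (x := d1) (A := insert z t0.toFinset)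
      have i2 := dg_insert_le (G := G) (v := v) (x := z) (A := t0.toFinset)
      omega
    obtain ⟨l1, l2, hl, hl1, w, hw, hvw⟩ := trim_right hcol _ t0 rfl (v := v) (by omega)
    have hch : (d3 :: l1).IsChain G.Adj := by
      have := a3.2.2.2
      rw [h0, hl] at this
      have e : d3 :: (l1 ++ l2 ++ [z]) = (d3 :: l1) ++ (l2 ++ [z]) := by simp
      rw [e] at this
      exact this.left_of_append
    have hnd : (v :: d1 :: d2 :: d3 :: l1).Nodup := by
      rw [h0, hl] at a1
      have e : v :: d1 :: d2 :: d3 :: (l1 ++ l2 ++ [z]) =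
          (v :: d1 :: d2 :: d3 :: l1) ++ (l2 ++ [z]) := by simp
      rw [e] at a1
      exact a1.of_append_left
    have hl1len : 2 * dg G v l1.toFinset ≤ l1.length := by
      have := dg_list_le' hcol (v := v) (l := d2 :: d3 :: l1)
        (by simp at hnd ⊢; tauto) (by rw [List.isChain_cons_cons]; exact ⟨a3.2.2.1, hch⟩)
        (by simp; exact ⟨hnd2, hvd2⟩)
      have hq := dg_list_le' hcol (v := v) (l := l1)
        (by simp at hnd; tauto) (List.isChain_cons.1 hch).2 (by
          intro a ha
          have h5 := (List.isChain_cons.1 hch).1 a ha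
          have h1 := hcol _ _ h5
          have h2 := hcol _ _ a3.2.2.1
          have h6 : col a = col v := by
            rw [← hvd2]
            revert h1 h2
            cases col a <;> cases col d3 <;> cases col d2 <;> simp
          exact ⟨fun h => hcol _ _ h h6.symm, h6⟩)
      exact hq
    have hlt : t.length = l1.length + l2.length + 1 := by
      rw [h0, hl]; simp; omega
    refine ⟨(v :: d1 :: d2 :: d3 :: l1).toFinset, ⟨_, ⟨hnd, ?_, ?_, ?_⟩, rfl⟩, ?_, ?_, ?_⟩
    · simp
    · simp only [List.isChain_cons_cons]
      exact ⟨a3.1, a3.2.1, a3.2.2.1, hch⟩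
    · intro x hx y hy
      simp at hy
      subst hy
      simp only [List.getLast?_cons, hw] at hx
      simp at hx
      subst hx
      exact hvw.symm
    · rw [← htD, h0, hl]; intro x; simp; tauto
    · rw [List.toFinset_card_of_nodup hnd]; simp; omega
    · rw [List.toFinset_card_of_nodup hnd]; simp; omega

end shorter
end Wang
namespace Wang
section families
variable {V : Type*} [Fintype V] [DecidableEq V] (G : SimpleGraph V) [DecidableRel G.Adj] (s : ℕ)

def Fam (F : Finset (Finset V)) : Prop :=
  (∀ C ∈ F, CycSet G C ∧ 2 * s ≤ C.card) ∧ ∀ C ∈ F, ∀ D ∈ F, C ≠ D → Disjoint C D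

def bs (V : Type*) [Fintype V] : ℕ := Fintype.card (Finset V) + 1

def phi (F : Finset (Finset V)) : ℕ := ∑ C ∈ F, bs V ^ (Fintype.card V - C.card)

def Opt (F : Finset (Finset V)) : Prop := Fam G s F ∧ ∀ F', Fam G s F' → phi F' ≤ phi F

def HH (F : Finset (Finset V)) : Finset V := Finset.univ \ F.biUnion id

variable {G s}

lemma opt_exists : ∃ F, Opt G s F := by
  classical
  obtain ⟨F, hF, hm⟩ := Finset.exists_max_image (Finset.univ.filter (fun F => Fam G s F)) phi
    ⟨∅, Finset.mem_filter.2 ⟨Finset.mem_univ _, by simp [Fam]⟩⟩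
  refine ⟨F, by simpa using hF, fun F' h => hm F' (by simpa using h)⟩

lemma CycSet.nonempty {C : Finset V} (h : CycSet G C) : C.Nonempty := by
  obtain ⟨l, hl, rfl⟩ := h
  have := hl.2.1
  rcases l with _ | ⟨a, l⟩
  · simp at this
  · exact ⟨a, by simp⟩

lemma improve {F R T : Finset (Finset V)} (hF : Opt G s F) (hR : R ⊆ F) (hT : Fam G s T) (b : ℕ)
    (hd : ∀ C ∈ F, C ∉ R → C.card ≤ b → ∀ D ∈ T, Disjoint C D)
    (hphi : phi R + bs V ^ (Fintype.card V - b) ≤ phi T) : False := by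
  set K := (F \ R).filter (fun C => C.card ≤ b) with hK
  set K' := (F \ R).filter (fun C => ¬ C.card ≤ b) with hK'
  have hKm : ∀ C, C ∈ K ↔ (C ∈ F ∧ C ∉ R) ∧ C.card ≤ b := by
    intro C; rw [hK, Finset.mem_filter, Finset.mem_sdiff]
  have hfam : Fam G s (T ∪ K) := by
    constructor
    · intro C hC
      rcases Finset.mem_union.1 hC with h | h
      · exact hT.1 C h
      · exact hF.1.1 C ((hKm C).1 h).1.1
    · intro C hC D hD hne
      rcases Finset.mem_union.1 hC with h | h <;> rcases Finset.mem_union.1 hD with h' | h'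
      · exact hT.2 C h D h' hne
      · have := (hKm D).1 h'
        exact (hd D this.1.1 this.1.2 this.2 C h).symm
      · have := (hKm C).1 h
        exact hd C this.1.1 this.1.2 this.2 D h'
      · exact hF.1.2 C ((hKm C).1 h).1.1 D ((hKm D).1 h').1.1 hne
  have hdis : Disjoint T K := by
    rw [Finset.disjoint_left]
    intro C h h'
    have := (hKm C).1 h'
    have h2 := hd C this.1.1 this.1.2 this.2 C h
    rw [disjoint_self] at h2
    have h3 := (hT.1 C h).1.nonempty
    rw [h2] at h3
    simp at h3
  have h1 := hF.2 _ hfam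
  have h2 : phi (T ∪ K) = phi T + phi K := Finset.sum_union hdis
  have h3 : phi F = phi R + (phi K + phi K') := by
    unfold phi
    rw [hK, hK', Finset.sum_filter_add_sum_filter_not, add_comm, Finset.sum_sdiff hR]
  have h4 : phi K' < bs V ^ (Fintype.card V - b) := by
    rcases Finset.eq_empty_or_nonempty K' with h | ⟨C0, hC0⟩
    · rw [h]
      simp [phi, bs]
    · have hb : ∀ C ∈ K', b < C.card := by
        intro C hC
        have := (Finset.mem_filter.1 hC).2
        omega
      have hb0 : b < Fintype.card V := (hb C0 hC0).trans_le (Finset.card_le_univ _)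
      have h5 : phi K' ≤ K'.card • bs V ^ (Fintype.card V - b - 1) := by
        apply Finset.sum_le_card_nsmul
        intro C hC
        apply Nat.pow_le_pow_right
        · simp [bs]
        · have := hb C hC
          omega
      have h6 : K'.card < bs V := by
        have := Finset.card_le_univ K'
        unfold bs
        omega
      have h7 : bs V ^ (Fintype.card V - b) = bs V * bs V ^ (Fintype.card V - b - 1) := by
        rw [← pow_succ']
        congr 1
        omega
      rw [h7]
      refine lt_of_le_of_lt h5 ?_
      rw [smul_eq_mul]
      apply Nat.mul_lt_mul_of_pos_right h6
      apply Nat.pow_pos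
      simp [bs]
  omega

lemma star {F : Finset (Finset V)} (hF : Opt G s F) {D : Finset V} (hD : CycSet G D)
    (hs : 2 * s ≤ D.card) : ∃ C ∈ F, C.card ≤ D.card ∧ ¬ Disjoint C D := by
  by_contra hcon
  push Not at hcon
  apply improve hF (R := ∅) (T := {D}) (by simp) (by
    constructor
    · intro C hC
      rw [Finset.mem_singleton] at hC
      subst hC
      exact ⟨hD, hs⟩
    · intro C hC E hE hne
      rw [Finset.mem_singleton] at hC hE
      exact absurd (hC.trans hE.symm) hne) D.card
  · intro C hC _ hc E hE
    rw [Finset.mem_singleton] at hE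
    subst hE
    exact hcon C hC hc
  · simp [phi]

lemma imp2 {F : Finset (Finset V)} (hF : Opt G s F) {A B C : Finset V} (hC : C ∈ F)
    (hCs : C.card = 2 * s) (hA : CycSet G A) (hB : CycSet G B) (hAs : A.card = 2 * s)
    (hBs : 2 * s ≤ B.card) (hAB : Disjoint A B)
    (hd : ∀ C' ∈ F, C' ≠ C → C'.card ≤ B.card → Disjoint C' A ∧ Disjoint C' B) : False := by
  have hne : A ≠ B := by
    rintro rfl
    rw [disjoint_self] at hAB
    have := hA.nonempty
    rw [hAB] at this
    simp at this
  apply improve hF (R := {C}) (T := {A, B}) (by simpa using hC) (by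
    constructor
    · intro C hC
      rw [Finset.mem_insert, Finset.mem_singleton] at hC
      rcases hC with rfl | rfl
      · exact ⟨hA, hAs.ge⟩
      · exact ⟨hB, hBs⟩
    · intro C hC E hE hn'
      rw [Finset.mem_insert, Finset.mem_singleton] at hC hE
      rcases hC with rfl | rfl <;> rcases hE with rfl | rfl
      · exact (hn' rfl).elim
      · exact hAB
      · exact hAB.symm
      · exact (hn' rfl).elim) B.card
  · intro C' hC' hn hc E hE
    rw [Finset.mem_singleton] at hn
    rw [Finset.mem_insert, Finset.mem_singleton] at hE
    have := hd C' hC' hn hc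
    rcases hE with rfl | rfl
    · exact this.1
    · exact this.2
  · unfold phi
    rw [Finset.sum_pair hne, Finset.sum_singleton, hAs, hCs]

lemma mem_HH {F : Finset (Finset V)} {v : V} : v ∈ HH F ↔ ∀ C ∈ F, v ∉ C := by
  simp [HH]

lemma HH_disj {F : Finset (Finset V)} {C : Finset V} (hC : C ∈ F) : Disjoint C (HH F) := by
  rw [Finset.disjoint_left]
  intro x hx h
  exact mem_HH.1 h C hC hx

/-- two cycles inside `H ∪ C` are impossible -/
lemma imp2H {F : Finset (Finset V)} (hF : Opt G s F) {A B C : Finset V} (hC : C ∈ F)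
    (hCs : C.card = 2 * s) (hA : CycSet G A) (hB : CycSet G B) (hAs : A.card = 2 * s)
    (hBs : 2 * s ≤ B.card) (hAB : Disjoint A B) (hAsub : A ⊆ HH F ∪ C) (hBsub : B ⊆ HH F ∪ C) :
    False := by
  refine imp2 hF hC hCs hA hB hAs hBs hAB ?_
  intro C' hC' hne _
  have : Disjoint C' (HH F ∪ C) := by
    rw [Finset.disjoint_union_right]
    exact ⟨HH_disj hC', hF.1.2 C' hC' C hC hne⟩
  exact ⟨this.mono_right hAsub, this.mono_right hBsub⟩

lemma exchange {F : Finset (Finset V)} (hF : Opt G s F) {A C : Finset V} (hC : C ∈ F)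
    (hCs : C.card = 2 * s) (hA : CycSet G A) (hAs : A.card = 2 * s) (hAsub : A ⊆ HH F ∪ C) :
    Opt G s (insert A (F.erase C)) ∧ HH (insert A (F.erase C)) = (HH F ∪ C) \ A := by
  have hdis : ∀ C' ∈ F.erase C, Disjoint C' A := by
    intro C' hC'
    rw [Finset.mem_erase] at hC'
    have : Disjoint C' (HH F ∪ C) := by
      rw [Finset.disjoint_union_right]
      exact ⟨HH_disj hC'.2, hF.1.2 C' hC'.2 C hC hC'.1⟩
    exact this.mono_right hAsub
  have hAn : A ∉ F.erase C := by
    intro h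
    have h1 := hdis A h
    rw [disjoint_self] at h1
    have := hA.nonempty
    rw [h1] at this
    simp at this
  have hphi : phi (insert A (F.erase C)) = phi F := by
    unfold phi
    rw [Finset.sum_insert hAn, hAs, ← hCs]
    exact Finset.add_sum_erase F (fun C => bs V ^ (Fintype.card V - C.card)) hC
  refine ⟨⟨⟨?_, ?_⟩, ?_⟩, ?_⟩
  · intro D hD
    rcases Finset.mem_insert.1 hD with rfl | h
    · exact ⟨hA, hAs.ge⟩
    · exact hF.1.1 D (Finset.mem_of_mem_erase h)
  · intro D hD E hE hne
    rcases Finset.mem_insert.1 hD with rfl | h <;> rcases Finset.mem_insert.1 hE with rfl | h'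
    · exact absurd rfl hne
    · exact (hdis E h').symm
    · exact hdis D h
    · exact hF.1.2 D (Finset.mem_of_mem_erase h) E (Finset.mem_of_mem_erase h') hne
  · intro F' hF'
    rw [hphi]
    exact hF.2 F' hF'
  · ext x
    rw [mem_HH, Finset.mem_sdiff, Finset.mem_union, mem_HH]
    constructor
    · intro h
      refine ⟨?_, h A (Finset.mem_insert_self _ _)⟩
      by_cases hx : x ∈ C
      · exact Or.inr hx
      · left
        intro D hD
        by_cases hDC : D = C
        · rw [hDC]; exact hx
        · exact h D (Finset.mem_insert_of_mem (Finset.mem_erase.2 ⟨hDC, hD⟩))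
    · rintro ⟨h, hx⟩ D hD
      rcases Finset.mem_insert.1 hD with rfl | h'
      · exact hx
      · rw [Finset.mem_erase] at h'
        rcases h with h | h
        · exact h D h'.2
        · intro hxD
          exact (Finset.disjoint_left.1 (hF.1.2 D h'.2 C hC h'.1)) hxD h

/-- swapping one vertex -/
lemma swap1 {F : Finset (Finset V)} (hF : Opt G s F) {C : Finset V} (hC : C ∈ F)
    (hCs : C.card = 2 * s) {u x : V} (hu : u ∈ HH F) (hx : x ∈ C)
    (hA : CycSet G (insert u (C.erase x))) :
    Opt G s (insert (insert u (C.erase x)) (F.erase C)) ∧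
      HH (insert (insert u (C.erase x)) (F.erase C)) = insert x ((HH F).erase u) := by
  have huC : u ∉ C := mem_HH.1 hu C hC
  have hxH : x ∉ HH F := fun h => mem_HH.1 h C hC hx
  have hux : u ≠ x := by rintro rfl; exact huC hx
  obtain ⟨h1, h2⟩ := exchange hF hC hCs hA (by
      rw [Finset.card_insert_of_notMem (fun h => huC (Finset.mem_of_mem_erase h)),
        Finset.card_erase_of_mem hx]
      have := Finset.card_pos.2 ⟨x, hx⟩
      omega) (by
      intro y hy
      rcases Finset.mem_insert.1 hy with rfl | h
      · exact Finset.mem_union_left _ hu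
      · exact Finset.mem_union_right _ (Finset.mem_of_mem_erase h))
  refine ⟨h1, h2.trans ?_⟩
  ext y
  have hd := fun h : y ∈ C => fun h' : y ∈ HH F => mem_HH.1 h' C hC h
  simp only [Finset.mem_sdiff, Finset.mem_union, Finset.mem_insert, Finset.mem_erase]
  by_cases hyx : y = x
  · subst hyx; simp [hx, hux.symm]
  · by_cases hyu : y = u
    · subst hyu; simp [hyx]
    · simp only [hyx, hyu, ne_eq, not_false_eq_true, true_and, false_or]
      tauto

/-! degrees -/
variable (G s) in
def ex (v : V) (C : Finset V) : ℤ := (dg G v C : ℤ) - ((s : ℤ) - 1)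

lemma dg_biUnion {F : Finset (Finset V)} (hF : ∀ C ∈ F, ∀ D ∈ F, C ≠ D → Disjoint C D) (v : V) :
    dg G v (F.biUnion id) = ∑ C ∈ F, dg G v C := by
  unfold dg
  rw [Finset.filter_biUnion, Finset.card_biUnion]
  · rfl
  · intro C hC D hD hne
    exact Finset.disjoint_filter_filter (hF C hC D hD hne)

lemma sum_ex {F : Finset (Finset V)} (hF : ∀ C ∈ F, ∀ D ∈ F, C ≠ D → Disjoint C D) (v : V) :
    ∑ C ∈ F, ex G s v C = (dg G v (F.biUnion id) : ℤ) - F.card * ((s : ℤ) - 1) := by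
  unfold ex
  rw [Finset.sum_sub_distrib, dg_biUnion hF]
  simp
  ring

lemma good {F : Finset (Finset V)} (hF : Fam G s F) {k j : ℕ} (hk : F.card < k) (hs : 1 ≤ s)
    {v : V} (hdeg : (s - 1) * k + 1 ≤ dg G v Finset.univ) (h : dg G v (HH F) + 1 ≤ s + j) :
    (1 : ℤ) - j ≤ ∑ C ∈ F, ex G s v C := by
  rw [sum_ex hF.2]
  have h1 : dg G v Finset.univ = dg G v (HH F) + dg G v (F.biUnion id) := by
    rw [← dg_union]
    · congr 1
      unfold HH
      simp
    · exact Finset.sdiff_disjoint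
  obtain ⟨s', rfl⟩ : ∃ s', s = s' + 1 := ⟨s - 1, by omega⟩
  obtain ⟨k', rfl⟩ : ∃ k', k = F.card + 1 + k' := ⟨k - F.card - 1, by omega⟩
  simp only [Nat.add_sub_cancel] at hdeg
  push_cast
  have h2 : s' * (F.card + 1) ≤ s' * (F.card + 1 + k') := Nat.mul_le_mul_left _ (by omega)
  have h3 : s' * F.card + s' + 1 ≤ dg G v (HH F) + dg G v (F.biUnion id) := by
    rw [← h1]
    refine le_trans ?_ hdeg
    rw [mul_add, mul_one] at h2
    omega
  zify at h3 h
  nlinarith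

lemma exists_pos {F : Finset (Finset V)} {f : Finset V → ℤ} (h : 0 < ∑ C ∈ F, f C) :
    ∃ C ∈ F, 0 < f C := by
  by_contra hcon
  push Not at hcon
  exact absurd (Finset.sum_nonpos hcon) (by omega)

variable {col : V → Bool} (hcol : ∀ a b, G.Adj a b → col a ≠ col b)
include hcol

lemma ex_nonpos {F : Finset (Finset V)} (hF : Opt G s F) (hs : 2 ≤ s) {C : Finset V} (hC : C ∈ F)
    (hCs : C.card ≠ 2 * s) {v : V} (hv : v ∉ C) (hv' : ∀ E ∈ F, v ∈ E → C.card ≤ E.card) :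
    ex G s v C ≤ 0 := by
  by_contra hcon
  have hCc := hF.1.1 C hC
  obtain ⟨D, h1, h2, h3, h4⟩ := shorter_out hcol hs hCc.1 (by omega) hv (by
    unfold ex at hcon
    omega)
  obtain ⟨E, hE, hEc, hEd⟩ := star hF h1 h3
  rw [Finset.not_disjoint_iff] at hEd
  obtain ⟨x, hxE, hxD⟩ := hEd
  have hne : E ≠ C := by
    rintro rfl
    omega
  rcases Finset.mem_insert.1 (h2 hxD) with rfl | h
  · have := hv' E hE hxE
    omega
  · exact Finset.disjoint_left.1 (hF.1.2 E hE C hC hne) hxE h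

lemma ex_nonpos_H {F : Finset (Finset V)} (hF : Opt G s F) (hs : 2 ≤ s) {C : Finset V} (hC : C ∈ F)
    (hCs : C.card ≠ 2 * s) {v : V} (hv : v ∈ HH F) : ex G s v C ≤ 0 :=
  ex_nonpos hcol hF hs hC hCs (mem_HH.1 hv C hC) (fun E hE h => absurd h (mem_HH.1 hv E hE))

lemma no_long {F : Finset (Finset V)} (hF : Opt G s F) {D : Finset V} (hD : CycSet G D)
    (hs : 2 * s ≤ D.card) (hsub : D ⊆ HH F) : False := by
  obtain ⟨C, hC, -, h⟩ := star hF hD hs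
  exact h ((HH_disj hC).mono_right hsub)

/-- the end of a path in `H` whose `H`-neighbours all lie on the path -/
lemma end_deg {F : Finset (Finset V)} (hF : Opt G s F) (hs : 2 ≤ s) {v : V} {q : List V}
    (hn : (v :: q).Nodup) (hc : (v :: q).IsChain G.Adj) (hsub : ∀ x ∈ v :: q, x ∈ HH F)
    (hall : ∀ y ∈ HH F, G.Adj v y → y ∈ q) : dg G v (HH F) + 1 ≤ s := by
  by_contra hcon
  have h1 : dg G v (HH F) ≤ dg G v q.toFinset := by
    apply Finset.card_le_card
    intro y hy
    rw [Finset.mem_filter] at hy ⊢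
    exact ⟨List.mem_toFinset.2 (hall y hy.1 hy.2), hy.2⟩
  obtain ⟨C, h2, h3, h4⟩ := long_of_path hcol hs q.length q rfl (List.nodup_cons.1 hn).2
    (List.isChain_cons.1 hc).2 (List.nodup_cons.1 hn).1 (v := v) (by omega)
  refine no_long hcol hF h2 h4 (h3.trans ?_)
  intro x hx
  apply hsub
  rw [Finset.mem_insert, List.mem_toFinset] at hx
  exact List.mem_cons.2 hx

end families
end Wang
namespace Wang
section matching
variable {V : Type*} [DecidableEq V] (G : SimpleGraph V) [DecidableRel G.Adj]

inductive PM : Finset V → Prop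
  | empty : PM ∅
  | pair {a b : V} {W : Finset V} : a ∉ W → b ∉ W → G.Adj a b → PM W → PM (insert a (insert b W))

variable {G}

lemma exists_max {α : Type*} (P : α → Prop) (f : α → ℕ) (B : ℕ) (hB : ∀ a, P a → f a ≤ B)
    (h : ∃ a, P a) : ∃ a, P a ∧ ∀ b, P b → f b ≤ f a := by
  obtain ⟨a, ha⟩ := h
  by_contra hcon
  push Not at hcon
  have : ∀ n, ∃ a, P a ∧ n ≤ f a := by
    intro n
    induction n with
    | zero => exact ⟨a, ha, Nat.zero_le _⟩
    | succ n ih =>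
      obtain ⟨b, hb, hn⟩ := ih
      obtain ⟨c, hc, hlt⟩ := hcon b hb
      exact ⟨c, hc, by omega⟩
  obtain ⟨b, hb, hn⟩ := this (B + 1)
  have := hB b hb
  omega

lemma PM.mate {W : Finset V} (h : PM G W) : ∀ z ∈ W, ∃ z' ∈ W, G.Adj z z' ∧
    PM G ((W.erase z).erase z') := by
  induction h with
  | empty => intro z hz; simp at hz
  | @pair a b W ha hb hab hW ih =>
    have hne := hab.ne
    intro z hz
    have e1 : ((insert a (insert b W)).erase a).erase b = W := by
      ext y; simp only [Finset.mem_erase, Finset.mem_insert]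
      constructor
      · tauto
      · intro hy
        exact ⟨fun h => hb (h ▸ hy), fun h => ha (h ▸ hy), Or.inr (Or.inr hy)⟩
    by_cases hza : z = a
    · subst hza
      exact ⟨b, by simp, hab, by rw [e1]; exact hW⟩
    by_cases hzb : z = b
    · subst hzb
      exact ⟨a, by simp, hab.symm, by rw [Finset.erase_right_comm, e1]; exact hW⟩
    have hzW : z ∈ W := by
      simp only [Finset.mem_insert] at hz
      tauto
    obtain ⟨z', hz', hadj, hpm⟩ := ih z hzW
    refine ⟨z', by simp [hz'], hadj, ?_⟩
    have e2 : ((insert a (insert b W)).erase z).erase z' =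
        insert a (insert b ((W.erase z).erase z')) := by
      have h1 : a ≠ z' := fun h => ha (h ▸ hz')
      have h2 : b ≠ z' := fun h => hb (h ▸ hz')
      ext y
      simp only [Finset.mem_erase, Finset.mem_insert]
      constructor
      · tauto
      · rintro (rfl | rfl | h)
        · exact ⟨h1, Ne.symm hza, Or.inl rfl⟩
        · exact ⟨h2, Ne.symm hzb, Or.inr (Or.inl rfl)⟩
        · tauto
    rw [e2]
    exact PM.pair (by simp [ha]) (by simp [hb]) hab hpm

lemma PM.union {A B : Finset V} (hA : PM G A) (hB : PM G B) : Disjoint A B → PM G (A ∪ B) := by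
  induction hA with
  | empty => intro _; simpa using hB
  | @pair a b W ha hb hab hW ih =>
    intro h
    rw [Finset.disjoint_insert_left, Finset.disjoint_insert_left] at h
    rw [Finset.insert_union, Finset.insert_union]
    exact PM.pair (by simp [ha, h.1]) (by simp [hb, h.2.1]) hab (ih h.2.2)

lemma PM.path : ∀ (n : ℕ) (l : List V), l.length = 2 * n → l.Nodup → l.IsChain G.Adj →
    PM G l.toFinset
  | 0, l, h, _, _ => by
    have : l = [] := List.length_eq_zero_iff.1 (by omega)
    subst this
    exact PM.empty
  | n + 1, [], h, _, _ => by simp at h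
  | n + 1, [a], h, _, _ => by simp at h; omega
  | n + 1, a :: b :: l, h, hn, hc => by
    rw [List.nodup_cons, List.nodup_cons] at hn
    rw [List.isChain_cons_cons] at hc
    have := PM.path n l (by simp at h; omega) hn.2.2 (List.isChain_cons.1 hc.2).2
    rw [List.toFinset_cons, List.toFinset_cons]
    simp only [List.mem_cons, not_or] at hn
    exact PM.pair (by simpa using hn.1.2) (by simpa using hn.2.1) hc.1 this

lemma PM.pathE {l : List V} (he : Even l.length) (hn : l.Nodup) (hc : l.IsChain G.Adj) :
    PM G l.toFinset := by
  obtain ⟨r, hr⟩ := he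
  exact PM.path r l (by omega) hn hc

lemma PM.color {col : V → Bool} (hcol : ∀ a b, G.Adj a b → col a ≠ col b) {W : Finset V}
    (h : PM G W) : (W.filter (fun x => col x = true)).card = (W.filter (fun x => col x = false)).card := by
  induction h with
  | empty => simp
  | @pair a b W ha hb hab hW ih =>
    have h1 := hcol a b hab
    have h2 : a ∉ insert b W := by simp [ha, hab.ne]
    rw [Finset.filter_insert, Finset.filter_insert, Finset.filter_insert, Finset.filter_insert]
    cases hca : col a <;> cases hcb : col b <;> simp_all

end matching

section step1
variable {V : Type*} [Fintype V] [DecidableEq V] {G : SimpleGraph V} [DecidableRel G.Adj] {s k : ℕ}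
variable {col : V → Bool} (hcol : ∀ a b, G.Adj a b → col a ≠ col b)
include hcol

lemma col_of_PM {x y : V} {A B : Finset V} (hA : PM G A) (hB : PM G B) (hx : x ∉ A) (hy : y ∉ B)
    (h : insert x A = insert y B) : col x = col y := by
  have h1 := hA.color hcol
  have h2 := hB.color hcol
  have h3 := congrArg (fun S : Finset V => (S.filter (fun x => col x = true)).card) h
  have h4 := congrArg (fun S : Finset V => (S.filter (fun x => col x = false)).card) h
  simp only [Finset.filter_insert] at h3 h4
  cases hcx : col x <;> cases hcy : col y <;> simp_all <;> omega

lemma claimA {F : Finset (Finset V)} (hF : Opt G s F) (hs : 2 ≤ s) {W : Finset V}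
    (hmax : ∀ W', W' ⊆ HH F → PM G W' → W'.card ≤ W.card) {x : V} (hx : x ∉ W)
    (hxW : insert x W ⊆ HH F) :
    ∀ (n : ℕ) (W' : Finset V) (x' : V) (q : List V), W'.card = n → (x' :: q).Nodup →
      (x' :: q).IsChain G.Adj → Even q.length → PM G W' → Disjoint (x' :: q).toFinset W' →
      (x' :: q).toFinset ∪ W' = insert x W →
      ∃ x2 W2, x2 ∉ W2 ∧ PM G W2 ∧ insert x2 W2 = insert x W ∧ dg G x2 (HH F) + 1 ≤ s := by
  intro n
  induction n using Nat.strong_induction_on with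
  | _ n ih =>
  intro W' x' q hn hnd hch hev hpm hdis hun
  have hndq := List.nodup_cons.1 hnd
  have hchq := (List.isChain_cons.1 hch).2
  rw [List.toFinset_cons, Finset.disjoint_insert_left] at hdis
  rw [List.toFinset_cons, Finset.insert_union] at hun
  have hW2 : PM G (q.toFinset ∪ W') := (PM.pathE hev hndq.2 hchq).union hpm hdis.2
  have hx2 : x' ∉ q.toFinset ∪ W' := by
    rw [Finset.mem_union, List.mem_toFinset]
    rintro (h | h)
    · exact hndq.1 h
    · exact hdis.1 h
  have hsubH : ∀ y, y = x' ∨ y ∈ q ∨ y ∈ W' → y ∈ HH F := by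
    intro y hy
    apply hxW
    rw [← hun, Finset.mem_insert, Finset.mem_union, List.mem_toFinset]
    exact hy
  by_cases hall : ∀ y ∈ HH F, G.Adj x' y → y ∈ q
  · refine ⟨x', q.toFinset ∪ W', hx2, hW2, hun, ?_⟩
    refine end_deg hcol hF hs hnd hch ?_ hall
    intro y hy
    apply hsubH
    rw [List.mem_cons] at hy
    tauto
  · push Not at hall
    obtain ⟨z, hzH, hadj, hzq⟩ := hall
    by_cases hzW : z ∈ W'
    · obtain ⟨z', hz', hzz, hpm'⟩ := hpm.mate z hzW
      have hz'q : z' ∉ q := fun h => Finset.disjoint_left.1 hdis.2 (List.mem_toFinset.2 h) hz'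
      have hz'x : z' ≠ x' := fun h => hdis.1 (h ▸ hz')
      have hzx : z ≠ x' := fun h => hdis.1 (h ▸ hzW)
      have hmem' : z' ∈ W'.erase z := Finset.mem_erase.2 ⟨hzz.ne', hz'⟩
      refine ih ((W'.erase z).erase z').card ?_ ((W'.erase z).erase z') z' (z :: x' :: q) rfl ?_ ?_ ?_
        hpm' ?_ ?_
      · rw [Finset.card_erase_of_mem hmem', Finset.card_erase_of_mem hzW]
        have := Finset.card_pos.2 ⟨z, hzW⟩
        omega
      · rw [List.nodup_cons, List.nodup_cons]
        refine ⟨?_, ?_, hnd⟩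
        · simp only [List.mem_cons, not_or]
          exact ⟨hzz.ne', hz'x, hz'q⟩
        · simp only [List.mem_cons, not_or]
          exact ⟨hzx, hzq⟩
      · rw [List.isChain_cons_cons, List.isChain_cons_cons]
        exact ⟨hzz.symm, hadj.symm, hch⟩
      · simp only [List.length_cons]
        rw [Nat.even_add_one, Nat.even_add_one, not_not]
        exact hev
      · rw [Finset.disjoint_left]
        intro y hy hy'
        simp only [List.mem_toFinset, List.mem_cons] at hy
        simp only [Finset.mem_erase] at hy'
        rcases hy with h | h | h | h
        · exact hy'.1 h
        · exact hy'.2.1 h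
        · exact hdis.1 (h ▸ hy'.2.2)
        · exact Finset.disjoint_left.1 hdis.2 (List.mem_toFinset.2 h) hy'.2.2
      · rw [← hun]
        ext y
        simp only [Finset.mem_union, List.mem_toFinset, List.mem_cons, Finset.mem_erase,
          Finset.mem_insert]
        constructor
        · rintro ((rfl | rfl | h | h) | h)
          · exact Or.inr (Or.inr hz')
          · exact Or.inr (Or.inr hzW)
          · exact Or.inl h
          · exact Or.inr (Or.inl h)
          · exact Or.inr (Or.inr h.2.2)
        · tauto
    · exfalso
      have hzn : z ∉ q.toFinset ∪ W' := by
        rw [Finset.mem_union, List.mem_toFinset]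
        tauto
      have h1 := hmax (insert x' (insert z (q.toFinset ∪ W'))) (by
        intro y hy
        rw [Finset.mem_insert, Finset.mem_insert, Finset.mem_union, List.mem_toFinset] at hy
        rcases hy with h | rfl | h
        · exact hsubH y (Or.inl h)
        · exact hzH
        · exact hsubH y (Or.inr h)) (PM.pair hx2 hzn hadj hW2)
      have h2 := congrArg Finset.card hun
      rw [Finset.card_insert_of_notMem hx2, Finset.card_insert_of_notMem hx] at h2
      rw [Finset.card_insert_of_notMem (by
        rw [Finset.mem_insert, not_or]; exact ⟨hadj.ne, hx2⟩), Finset.card_insert_of_notMem hzn] at h1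
      omega

variable (hs : 3 ≤ s) (hno : ∀ F, Fam G s F → F.card < k)
  (hdeg : ∀ v, (s - 1) * k + 1 ≤ dg G v Finset.univ)
include hs hno hdeg

theorem step1 (hbal : ∀ F, Opt G s F → ((HH F).filter (fun x => col x = true)).card =
      ((HH F).filter (fun x => col x = false)).card) :
    ∃ F, Opt G s F ∧ PM G (HH F) := by
  classical
  obtain ⟨F0, hF0⟩ := opt_exists (G := G) (s := s)
  obtain ⟨⟨F, W⟩, ⟨hF, hWH, hW⟩, hmax⟩ := exists_max
    (fun p : Finset (Finset V) × Finset V => Opt G s p.1 ∧ p.2 ⊆ HH p.1 ∧ PM G p.2)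
    (fun p => p.2.card) (Fintype.card V) (fun p _ => Finset.card_le_univ _)
    ⟨(F0, ∅), hF0, by simp, PM.empty⟩
  simp only at hF hWH hW hmax
  refine ⟨F, hF, ?_⟩
  by_cases hWe : W = HH F
  · rw [← hWe]; exact hW
  exfalso
  have key : ∀ c, ∃ x ∈ HH F, x ∉ W ∧ col x = c := by
    intro c
    by_contra hcon
    push Not at hcon
    have h1 := hbal F hF
    have h2 := hW.color hcol
    have h3 : (HH F).filter (fun x => col x = c) = W.filter (fun x => col x = c) := by
      ext x
      simp only [Finset.mem_filter]
      constructor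
      · rintro ⟨h, h'⟩
        refine ⟨?_, h'⟩
        by_contra hx
        exact hcon x h hx h'
      · rintro ⟨h, h'⟩
        exact ⟨hWH h, h'⟩
    have h4 : ((HH F).filter (fun x => col x = !c)).card = (W.filter (fun x => col x = !c)).card := by
      have h5 := congrArg Finset.card h3
      cases c
      · simp only [Bool.not_false]; omega
      · simp only [Bool.not_true]; omega
    have h6 := Finset.eq_of_subset_of_card_le (Finset.filter_subset_filter (fun x => col x = !c) hWH)
      h4.le
    apply hWe
    apply Finset.Subset.antisymm hWH
    intro x hx
    by_cases hxc : col x = c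
    · have : x ∈ W.filter (fun x => col x = c) := h3 ▸ Finset.mem_filter.2 ⟨hx, hxc⟩
      exact (Finset.mem_filter.1 this).1
    · have : x ∈ W.filter (fun x => col x = !c) := by
        rw [h6, Finset.mem_filter]
        refine ⟨hx, ?_⟩
        cases c <;> simpa using hxc
      exact (Finset.mem_filter.1 this).1
  obtain ⟨x, hxH, hxW, hxc⟩ := key true
  obtain ⟨y, hyH, hyW, hyc⟩ := key false
  have hxy : y ≠ x := by rintro rfl; rw [hxc] at hyc; simp at hyc
  obtain ⟨x2, W2, hx2, hW2, heq2, hd2⟩ := claimA hcol hF (by omega) (W := W) (x := x)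
    (fun W' h h' => hmax (F, W') ⟨hF, h, h'⟩) hxW (Finset.insert_subset hxH hWH) _ W x [] rfl
    (by simp) (by simp) (by simp) hW (by simpa using hxW) (by simp)
  have hcard2 : W2.card = W.card := by
    have := congrArg Finset.card heq2
    rw [Finset.card_insert_of_notMem hx2, Finset.card_insert_of_notMem hxW] at this
    omega
  have hyn : y ∉ insert x2 W2 := by
    rw [heq2, Finset.mem_insert]; tauto
  have hs2 : insert x2 W2 ⊆ HH F := by rw [heq2]; exact Finset.insert_subset hxH hWH
  rw [Finset.mem_insert, not_or] at hyn
  obtain ⟨y3, W3, hy3, hW3, heq3, hd3⟩ := claimA hcol hF (by omega) (W := W2) (x := y)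
    (fun W' h h' => by rw [hcard2]; exact hmax (F, W') ⟨hF, h, h'⟩) hyn.2
    (Finset.insert_subset hyH ((Finset.subset_insert _ _).trans hs2)) _ W2 y [] rfl
    (by simp) (by simp) (by simp) hW2 (by simpa using hyn.2) (by simp)
  have hcard3 : W3.card = W.card := by
    have := congrArg Finset.card heq3
    rw [Finset.card_insert_of_notMem hy3, Finset.card_insert_of_notMem hyn.2] at this
    omega
  have hxn : x2 ∉ insert y3 W3 := by
    rw [heq3, Finset.mem_insert]
    have := hyn.1
    tauto
  rw [Finset.mem_insert, not_or] at hxn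
  have hs3 : insert y3 W3 ⊆ HH F := by
    rw [heq3]; exact Finset.insert_subset hyH ((Finset.subset_insert _ _).trans hs2)
  have hc2 := col_of_PM hcol hW2 hW hx2 hxW heq2
  have hc3 := col_of_PM hcol hW3 hW2 hy3 hyn.2 heq3
  have hcc : col x2 ≠ col y3 := by rw [hc2, hc3, hxc, hyc]; simp
  have hx2H : x2 ∈ HH F := hs2 (Finset.mem_insert_self _ _)
  have hy3H : y3 ∈ HH F := hs3 (Finset.mem_insert_self _ _)
  have g2 := good hF.1 (hno F hF.1) (by omega) (hdeg x2) (j := 0) (by omega)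
  have g3 := good hF.1 (hno F hF.1) (by omega) (hdeg y3) (j := 0) (by omega)
  obtain ⟨C, hC, hpos⟩ := exists_pos (F := F) (f := fun C => ex G s x2 C + ex G s y3 C) (by
    rw [Finset.sum_add_distrib]
    push_cast at g2 g3
    omega)
  have hCs : C.card = 2 * s := by
    by_contra h
    have h1 := ex_nonpos_H hcol hF (by omega) hC h hx2H
    have h2 := ex_nonpos_H hcol hF (by omega) hC h hy3H
    omega
  have hCc := (hF.1.1 C hC).1
  have l1 := dg_le_s hcol hCc hCs x2
  have l2 := dg_le_s hcol hCc hCs y3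
  unfold ex at hpos
  obtain ⟨z, hz, hadj, hcyc⟩ := pick1 hcol hCc hCs (mem_HH.1 hx2H C hC) hcc (by omega)
  obtain ⟨ho, hHH⟩ := swap1 hF hC hCs hx2H hz hcyc
  have hzH : z ∉ HH F := fun h => mem_HH.1 h C hC hz
  have hzW : z ∉ W3 := fun h => hzH (hs3 (Finset.mem_insert_of_mem h))
  have h9 := hmax (_, insert y3 (insert z W3)) ⟨ho, ?_, PM.pair hy3 hzW hadj hW3⟩
  · simp only at h9
    rw [Finset.card_insert_of_notMem (by
      rw [Finset.mem_insert, not_or]; exact ⟨hadj.ne, hy3⟩), Finset.card_insert_of_notMem hzW] at h9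
    omega
  · simp only
    rw [hHH]
    intro w hw
    rw [Finset.mem_insert, Finset.mem_insert] at hw
    rw [Finset.mem_insert, Finset.mem_erase]
    rcases hw with rfl | h | h
    · exact Or.inr ⟨Ne.symm hxn.1, hy3H⟩
    · exact Or.inl h
    · exact Or.inr ⟨fun h' => hxn.2 (h' ▸ h), hs3 (Finset.mem_insert_of_mem h)⟩

end step1
end Wang
namespace Wang
section configs
variable {V : Type*} [Fintype V] [DecidableEq V] (G : SimpleGraph V) [DecidableRel G.Adj] (s : ℕ)

def Cfg (F : Finset (Finset V)) (P : List V) : Prop :=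
  Opt G s F ∧ P.Nodup ∧ P.IsChain G.Adj ∧ (∀ x ∈ P, x ∈ HH F) ∧ Even P.length ∧
    PM G (HH F \ P.toFinset)

def MaxCfg (F : Finset (Finset V)) (P : List V) : Prop :=
  Cfg G s F P ∧ ∀ F' P', Cfg G s F' P' → P'.length ≤ P.length

variable {G s} {F : Finset (Finset V)} {k : ℕ}

lemma glc1 (a b : V) (l : List V) : (a :: (l ++ [b])).getLast? = some b := by
  rw [← List.cons_append, List.getLast?_append]; simp

lemma glc2 (a b c : V) (l : List V) : (a :: (l ++ [b, c])).getLast? = some c := by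
  rw [← List.cons_append, List.getLast?_append]; simp

lemma prop_aux {H l1 y l2 a Q : Prop} (e1 : l1 ∨ y ∨ l2 → H) (e2 : l1 ∨ y ∨ l2 → ¬ (a ∨ Q))
    (e3 : l2 → ¬ y) (e4 : l2 → ¬ l1) : (H ∧ ¬ ((l1 ∨ y) ∨ (a ∨ Q))) ↔
      (l2 ∨ (H ∧ ¬ ((l1 ∨ y ∨ l2) ∨ (a ∨ Q)))) := by tauto

lemma chain_reverse {l : List V} (h : l.IsChain G.Adj) : l.reverse.IsChain G.Adj := by
  rw [List.isChain_reverse]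
  exact h.imp (fun a b hab => hab.symm)

lemma Cfg.reverse {P : List V} (h : Cfg G s F P) : Cfg G s F P.reverse := by
  obtain ⟨h1, h2, h3, h4, h5, h6⟩ := h
  exact ⟨h1, List.nodup_reverse.2 h2, chain_reverse h3, by simpa using h4, by simpa using h5,
    by simpa using h6⟩

lemma MaxCfg.reverse {P : List V} (h : MaxCfg G s F P) : MaxCfg G s F P.reverse :=
  ⟨h.1.reverse, by simpa using h.2⟩

lemma MaxCfg.nbr {p : V} {q : List V} (h : MaxCfg G s F (p :: q)) :
    ∀ y ∈ HH F, G.Adj p y → y ∈ q := by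
  intro y hy hadj
  by_contra hyq
  obtain ⟨⟨h1, h2, h3, h4, h5, h6⟩, hmax⟩ := h
  have hyP : y ∈ HH F \ (p :: q).toFinset := by
    rw [Finset.mem_sdiff, List.mem_toFinset, List.mem_cons]
    exact ⟨hy, fun h => h.elim (fun h => hadj.ne h.symm) hyq⟩
  obtain ⟨z, hz, hyz, hpm⟩ := h6.mate y hyP
  have := hmax F (z :: y :: p :: q) ⟨h1, ?_, ?_, ?_, ?_, ?_⟩
  · simp at this
  · rw [Finset.mem_sdiff, List.mem_toFinset] at hz hyP
    rw [List.nodup_cons, List.nodup_cons]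
    refine ⟨?_, hyP.2, h2⟩
    rw [List.mem_cons, not_or]
    exact ⟨hyz.ne', hz.2⟩
  · rw [List.isChain_cons_cons, List.isChain_cons_cons]
    exact ⟨hyz.symm, hadj.symm, h3⟩
  · intro x hx
    rw [List.mem_cons, List.mem_cons] at hx
    rcases hx with rfl | rfl | h
    · exact (Finset.mem_sdiff.1 hz).1
    · exact hy
    · exact h4 x h
  · rw [List.length_cons, List.length_cons, Nat.even_add_one, Nat.even_add_one, not_not]
    exact h5
  · convert hpm using 1
    ext x
    simp only [Finset.mem_sdiff, List.mem_toFinset, List.mem_cons, Finset.mem_erase]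
    tauto

/-- two disjoint paths -/
def Two (G : SimpleGraph V) [DecidableRel G.Adj] (s : ℕ) (F : Finset (Finset V)) (A B : List V) : Prop :=
  Opt G s F ∧ A.Nodup ∧ B.Nodup ∧ (∀ x ∈ A, x ∉ B) ∧ A.IsChain G.Adj ∧ B.IsChain G.Adj ∧
    (∀ x ∈ A, x ∈ HH F) ∧ (∀ x ∈ B, x ∈ HH F) ∧ Even A.length ∧ Even B.length ∧
    PM G (HH F \ (A.toFinset ∪ B.toFinset))

lemma Two.symm {A B : List V} (h : Two G s F A B) : Two G s F B A := by
  obtain ⟨h1, h2, h3, h4, h5, h6, h7, h8, h9, h10, h11⟩ := h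
  exact ⟨h1, h3, h2, fun x hx hx' => h4 x hx' hx, h6, h5, h8, h7, h10, h9, by
    rw [Finset.union_comm]; exact h11⟩

lemma Two.revA {A B : List V} (h : Two G s F A B) : Two G s F A.reverse B := by
  obtain ⟨h1, h2, h3, h4, h5, h6, h7, h8, h9, h10, h11⟩ := h
  exact ⟨h1, List.nodup_reverse.2 h2, h3, by simpa using h4, chain_reverse h5, h6,
    by simpa using h7, h8, by simpa using h9, h10, by simpa using h11⟩

lemma Two.revB {A B : List V} (h : Two G s F A B) : Two G s F A B.reverse := h.symm.revA.symm

/-- the joining move -/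
lemma Two.join {u : V} {A B : List V} (h : Two G s F (u :: A) B) {C : Finset V} (hC : C ∈ F)
    (hCs : C.card = 2 * s) {x : V} (hx : x ∈ C) (hcyc : CycSet G (insert u (C.erase x)))
    (hA : ∀ v ∈ A.getLast?, G.Adj v x) (hB : ∀ w ∈ B.getLast?, G.Adj w x) :
    ∃ F', Cfg G s F' (A ++ x :: B.reverse) ∧ HH F' = insert x ((HH F).erase u) := by
  obtain ⟨h1, h2, h3, h4, h5, h6, h7, h8, h9, h10, h11⟩ := h
  have huH : u ∈ HH F := h7 u (by simp)
  obtain ⟨ho, hHH⟩ := swap1 h1 hC hCs huH hx hcyc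
  have hxH : x ∉ HH F := fun h => mem_HH.1 h C hC hx
  rw [List.nodup_cons] at h2
  refine ⟨_, ⟨ho, ?_, ?_, ?_, ?_, ?_⟩, hHH⟩
  · rw [List.nodup_append]
    refine ⟨h2.2, ?_, ?_⟩
    · rw [List.nodup_cons]
      exact ⟨fun h => hxH (h8 x (by simpa using h)), List.nodup_reverse.2 h3⟩
    · intro a ha b hb hab
      subst hab
      rw [List.mem_cons, List.mem_reverse] at hb
      rcases hb with rfl | hb
      · exact hxH (h7 a (List.mem_cons_of_mem _ ha))
      · exact h4 a (List.mem_cons_of_mem _ ha) hb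
  · rw [List.isChain_append]
    refine ⟨(List.isChain_cons.1 h5).2, ?_, ?_⟩
    · rw [List.isChain_cons]
      refine ⟨?_, chain_reverse h6⟩
      intro y hy
      rw [List.head?_reverse] at hy
      exact (hB y hy).symm
    · intro y hy z hz
      simp only [List.head?_cons, Option.mem_def, Option.some.injEq] at hz
      subst hz
      exact hA y hy
  · rw [hHH]
    intro y hy
    rw [List.mem_append, List.mem_cons, List.mem_reverse] at hy
    rw [Finset.mem_insert, Finset.mem_erase]
    rcases hy with h | h | h
    · exact Or.inr ⟨fun e => h2.1 (e ▸ h), h7 y (List.mem_cons_of_mem _ h)⟩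
    · exact Or.inl h
    · exact Or.inr ⟨fun e => h4 u (by simp) (e ▸ h), h8 y h⟩
  · rw [List.length_append, List.length_cons, List.length_reverse]
    rw [List.length_cons] at h9
    have e : A.length + (B.length + 1) = A.length + 1 + B.length := by omega
    rw [e]
    exact h9.add h10
  · rw [hHH]
    convert h11 using 1
    ext y
    simp only [Finset.mem_sdiff, List.mem_toFinset, List.mem_cons, Finset.mem_erase,
      Finset.mem_insert, Finset.mem_union, List.mem_append, List.mem_reverse]
    constructor
    · tauto
    · rintro ⟨ha, hb⟩
      have : y ≠ x := fun e => hxH (e ▸ ha)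
      tauto

variable {col : V → Bool} (hcol : ∀ a b, G.Adj a b → col a ≠ col b)
include hcol

lemma col_last : ∀ (t : List V) (x : V), (x :: t).IsChain G.Adj → ∀ y ∈ (x :: t).getLast?,
    (col y = col x ↔ Even t.length)
  | [], x, _, y, hy => by
    simp only [List.getLast?_singleton, Option.mem_def, Option.some.injEq] at hy
    simp [hy]
  | b :: t, x, h, y, hy => by
    rw [List.isChain_cons_cons] at h
    rw [List.getLast?_cons_cons] at hy
    have h1 := col_last t b h.2 y hy
    have h2 := hcol x b h.1
    rw [List.length_cons, Nat.even_add_one, ← h1]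
    cases hx : col x <;> cases hb : col b <;> cases hyy : col y <;> simp_all

lemma MaxCfg.head_deg (hs : 2 ≤ s) {p : V} {q : List V} (h : MaxCfg G s F (p :: q)) :
    dg G p (HH F) + 1 ≤ s :=
  end_deg hcol h.1.1 hs h.1.2.1 h.1.2.2.1 h.1.2.2.2.1 h.nbr

lemma Cfg.col_ne {p z : V} {q : List V} (h : Cfg G s F (p :: q)) (hz : z ∈ q.getLast?) :
    col p ≠ col z := by
  have h1 := col_last hcol q p h.2.2.1 z (by
    rcases q with _ | ⟨a, q⟩
    · simp at hz
    · rw [List.getLast?_cons_cons]; exact hz)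
  have h2 := h.2.2.2.2.1
  rw [List.length_cons, Nat.even_add_one, ← h1] at h2
  exact fun e => h2 e.symm

lemma MaxCfg.last_deg (hs : 2 ≤ s) {p z : V} {q : List V} (h : MaxCfg G s F (p :: q))
    (hz : z ∈ q.getLast?) : dg G z (HH F) + 1 ≤ s := by
  obtain ⟨l, rfl⟩ : ∃ l, q = l ++ [z] := by
    rcases List.eq_nil_or_concat q with rfl | ⟨l, b, rfl⟩
    · simp at hz
    · simp at hz; subst hz; exact ⟨l, by simp⟩
  have := h.reverse
  simp only [List.reverse_cons, List.reverse_append, List.reverse_nil, List.nil_append,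
    List.cons_append] at this
  exact this.head_deg hcol hs

lemma deg_a (hs : 2 ≤ s) {P Q : List V} {a : V} (hP : MaxCfg G s F P) (h : Two G s F P (a :: Q))
    (hm : ∀ B, Two G s F P B → B.length ≤ Q.length + 1) (hlt : P.length < 2 * s)
    (hcola : ∀ p ∈ P.head?, col p = col a) : dg G a (HH F) + 1 ≤ s := by
  obtain ⟨h1, h2, h3, h4, h5, h6, h7, h8, h9, h10, h11⟩ := h
  -- Q is a path
  have hle : Q.length + 1 ≤ P.length := by
    refine hP.2 F (a :: Q) ⟨h1, h3, h6, h8, h10, ?_⟩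
    have := (PM.pathE h9 h2 h5).union h11 (by
      rw [Finset.disjoint_left]
      intro x hx hx'
      rw [Finset.mem_sdiff, Finset.mem_union] at hx'
      tauto)
    convert this using 1
    ext x
    simp only [Finset.mem_sdiff, Finset.mem_union, List.mem_toFinset]
    have e1 := h7 x
    have e2 := h4 x
    tauto
  have hnb : (HH F).filter (fun y => G.Adj a y) ⊆
      ((P.take (P.length - (Q.length + 1))).toFinset ∪ (a :: Q).toFinset).filter
        (fun y => G.Adj a y) := by
    intro y hy
    rw [Finset.mem_filter] at hy ⊢
    refine ⟨?_, hy.2⟩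
    rw [Finset.mem_union, List.mem_toFinset, List.mem_toFinset]
    by_contra hcon
    rw [not_or] at hcon
    by_cases hyP : y ∈ P
    · obtain ⟨l1, l2, rfl⟩ := List.append_of_mem hyP
      have hev : Even (l1.length + 1) := by
        have hc : (l1 ++ [y]).IsChain G.Adj := by
          rw [← List.singleton_append, ← List.append_assoc] at h5
          exact h5.left_of_append
        have hya := hcol a y hy.2
        rcases l1 with _ | ⟨p, l1⟩
        · exact absurd (hcola y (by simp)) (Ne.symm hya)
        · have := col_last hcol (l1 ++ [y]) p hc y (by simp [glc1])
          have hpa := hcola p (by simp)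
          rw [List.length_append, List.length_singleton] at this
          rw [List.length_cons, Nat.even_add_one, ← this]
          rw [hpa]
          exact fun e => hya e.symm
      have hcfg : Cfg G s F ((l1 ++ [y]) ++ a :: Q) := by
        refine ⟨h1, ?_, ?_, ?_, ?_, ?_⟩
        · rw [List.nodup_append]
          refine ⟨?_, h3, ?_⟩
          · rw [← List.singleton_append, ← List.append_assoc] at h2
            exact h2.of_append_left
          · intro b hb c hc hbc
            subst hbc
            refine h4 b ?_ hc
            simp only [List.mem_append, List.mem_cons, List.mem_nil_iff, or_false] at hb ⊢
            tauto
        · rw [List.isChain_append]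
          refine ⟨?_, h6, ?_⟩
          · rw [← List.singleton_append, ← List.append_assoc] at h5
            exact h5.left_of_append
          · intro b hb c hc
            simp at hb hc
            subst hb hc
            exact hy.2.symm
        · intro b hb
          rw [List.mem_append] at hb
          rcases hb with hb | hb
          · apply h7
            simp only [List.mem_append, List.mem_cons, List.mem_nil_iff, or_false] at hb ⊢
            tauto
          · exact h8 b hb
        · rw [List.length_append, List.length_append, List.length_singleton]
          exact hev.add h10
        · have hl2 : Even l2.length := by
            have : (l1 ++ y :: l2).length = (l1.length + 1) + l2.length := by simp; omega
            rw [this, Nat.even_add] at h9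
            exact h9.1 hev
          have hdd := List.nodup_append.1 h2
          have hl2' := List.nodup_cons.1 hdd.2.1
          have := (PM.pathE hl2 hl2'.2 ((List.isChain_cons.1 (List.isChain_append.1 h5).2.1)).2).union
            h11 (by
              rw [Finset.disjoint_left]
              intro x hx hx'
              simp only [Finset.mem_sdiff, Finset.mem_union, List.mem_toFinset, List.mem_append,
                List.mem_cons] at hx hx'
              tauto)
          convert this using 1
          ext x
          have e1 := h7 x
          have e2 := h4 x
          have e3 : x ∈ l2 → x ≠ y := fun h e => hl2'.1 (e ▸ h)
          have e4 : x ∈ l2 → x ∉ l1 := fun h h' => hdd.2.2 x h' x (List.mem_cons_of_mem _ h) rfl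
          simp only [Finset.mem_sdiff, Finset.mem_union, List.mem_toFinset, List.mem_append,
            List.mem_cons, List.not_mem_nil, or_false] at e1 e2 ⊢
          exact prop_aux e1 e2 e3 e4
      have h12 := hP.2 _ _ hcfg
      apply hcon.1
      rw [List.mem_take_iff_getElem]
      simp only [List.length_append, List.length_cons, List.length_nil] at h12 ⊢
      exact ⟨l1.length, by omega, by simp⟩
    · have hy' : y ∈ HH F \ (P.toFinset ∪ (a :: Q).toFinset) := by
        rw [Finset.mem_sdiff, Finset.mem_union, List.mem_toFinset, List.mem_toFinset]
        tauto
      obtain ⟨z, hz, hyz, hpm⟩ := h11.mate y hy'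
      have hzz := hz
      rw [Finset.mem_sdiff, Finset.mem_union, List.mem_toFinset, List.mem_toFinset, not_or] at hz
      have := hm (z :: y :: a :: Q) ⟨h1, h2, ?_, ?_, h5, ?_, h7, ?_, h9, ?_, ?_⟩
      · simp at this
      · rw [List.nodup_cons, List.nodup_cons]
        refine ⟨?_, hcon.2, h3⟩
        rw [List.mem_cons, not_or]
        exact ⟨hyz.ne', hz.2.2⟩
      · intro x hx hx'
        rw [List.mem_cons, List.mem_cons] at hx'
        rcases hx' with rfl | rfl | h
        · exact hz.2.1 hx
        · exact hyP hx
        · exact h4 x hx h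
      · rw [List.isChain_cons_cons, List.isChain_cons_cons]
        exact ⟨hyz.symm, hy.2.symm, h6⟩
      · intro x hx
        rw [List.mem_cons, List.mem_cons] at hx
        rcases hx with rfl | rfl | h
        · exact hz.1
        · exact hy.1
        · exact h8 x h
      · rw [List.length_cons, List.length_cons, Nat.even_add_one, Nat.even_add_one, not_not]
        exact h10
      · convert hpm using 1
        ext x
        simp only [Finset.mem_sdiff, List.mem_toFinset, List.mem_cons, Finset.mem_erase,
          Finset.mem_union]
        tauto
  have hk1 := Finset.card_le_card hnb
  have hdis : Disjoint (P.take (P.length - (Q.length + 1))).toFinset (a :: Q).toFinset := by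
    rw [Finset.disjoint_left]
    intro x hx hx'
    rw [List.mem_toFinset] at hx hx'
    exact h4 x (List.mem_of_mem_take hx) hx'
  have hk2 := dg_union (G := G) (v := a) hdis
  have hev2 : Even (P.take (P.length - (Q.length + 1))).length := by
    rw [List.length_take, min_eq_left (Nat.sub_le _ _), Nat.even_sub hle]
    rw [List.length_cons] at h10
    tauto
  have hk3 := dg_list_even hcol (v := a) (h2.sublist (List.take_sublist (P.length - (Q.length + 1)) P))
    (h5.take _) hev2
  have hk4 := dg_list_even hcol (v := a) h3 h6 h10
  rw [List.length_take] at hk3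
  rw [List.length_cons] at hk4
  unfold dg at hk2 hk3 hk4 ⊢
  omega

variable (hs : 3 ≤ s) (hno : ∀ F, Fam G s F → F.card < k)
  (hdeg : ∀ v, (s - 1) * k + 1 ≤ dg G v Finset.univ)
include hs hno hdeg

/-- four good vertices -/
lemma step3_aux {p a z b : V} {P Q : List V} (hP : MaxCfg G s F (p :: P))
    (h : Two G s F (p :: P) (a :: Q)) (hm : ∀ B, Two G s F (p :: P) B → B.length ≤ Q.length + 1)
    (hlt : P.length + 1 < 2 * s) (hcola : col p = col a) (hz : z ∈ P.getLast?)
    (hb : b ∈ Q.getLast?) : False := by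
  have hb' : b ∈ (a :: Q).getLast? := by
    rcases Q with _ | ⟨c, Q⟩
    · simp at hb
    · rw [List.getLast?_cons_cons]; exact hb
  have hz' : z ∈ (p :: P).getLast? := by
    rcases P with _ | ⟨c, P⟩
    · simp at hz
    · rw [List.getLast?_cons_cons]; exact hz
  have hcpz : col p ≠ col z := hP.1.col_ne hcol hz
  have hcab : col a ≠ col b := by
    have h1 := col_last hcol Q a h.2.2.2.2.2.1 b hb'
    have h2 := h.2.2.2.2.2.2.2.2.2.1
    rw [List.length_cons, Nat.even_add_one, ← h1] at h2
    exact fun e => h2 e.symm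
  have hczb : col z = col b := by
    cases e1 : col p <;> cases e2 : col a <;> cases e3 : col z <;> cases e4 : col b <;> simp_all
  have dp := hP.head_deg hcol (by omega)
  have dz := hP.last_deg hcol (by omega) hz
  have da := deg_a hcol (by omega) hP h hm (by simpa using hlt) (by simpa using hcola)
  have db : dg G b (HH F) + 1 ≤ s := by
    obtain ⟨l, rfl⟩ : ∃ l, Q = l ++ [b] := by
      rcases List.eq_nil_or_concat Q with rfl | ⟨l, c, rfl⟩
      · simp at hb
      · simp at hb; subst hb; exact ⟨l, by simp⟩
    have h' := h.revA.revB
    have e : (a :: (l ++ [b])).reverse = b :: (a :: l).reverse := by simp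
    rw [e] at h'
    refine deg_a hcol (by omega) hP.reverse h' ?_ (by simpa using hlt) ?_
    · intro B hB
      have := hm B.reverse (by simpa using hB.revA.revB)
      simpa using this
    · intro w hw
      rw [List.head?_reverse] at hw
      have : w = z := by
        rw [Option.mem_def] at hw hz'
        rw [hw] at hz'
        simpa using hz'
      rw [this, hczb]
  have hF := hP.1.1
  have hpH : p ∈ HH F := hP.1.2.2.2.1 p (by simp)
  have hzH : z ∈ HH F := hP.1.2.2.2.1 z (List.mem_of_mem_getLast? hz')
  have haH : a ∈ HH F := h.2.2.2.2.2.2.2.1 a (by simp)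
  have hbH : b ∈ HH F := h.2.2.2.2.2.2.2.1 b (List.mem_of_mem_getLast? hb')
  have gp := good hF.1 (hno F hF.1) (by omega) (hdeg p) (j := 0) (by omega)
  have gz := good hF.1 (hno F hF.1) (by omega) (hdeg z) (j := 0) (by omega)
  have ga := good hF.1 (hno F hF.1) (by omega) (hdeg a) (j := 0) (by omega)
  have gb := good hF.1 (hno F hF.1) (by omega) (hdeg b) (j := 0) (by omega)
  obtain ⟨C, hC, hpos⟩ := exists_pos (F := F)
    (f := fun C => ex G s p C + ex G s z C + ex G s a C + ex G s b C) (by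
    rw [Finset.sum_add_distrib, Finset.sum_add_distrib, Finset.sum_add_distrib]
    push_cast at gp gz ga gb
    omega)
  have hCs : C.card = 2 * s := by
    by_contra h
    have h1 := ex_nonpos_H hcol hF (by omega) hC h hpH
    have h2 := ex_nonpos_H hcol hF (by omega) hC h hzH
    have h3 := ex_nonpos_H hcol hF (by omega) hC h haH
    have h4 := ex_nonpos_H hcol hF (by omega) hC h hbH
    omega
  have hCc := (hF.1.1 C hC).1
  have lp := dg_le_s hcol hCc hCs p
  have lz := dg_le_s hcol hCc hCs z
  have la := dg_le_s hcol hCc hCs a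
  have lb := dg_le_s hcol hCc hCs b
  unfold ex at hpos
  have hcpb : col p ≠ col b := hczb ▸ hcpz
  have hcaz : col a ≠ col z := hcola ▸ hcpz
  have hjoin : ∀ (u v w : V) (A B : List V), Two G s F (u :: A) B → v ∈ A.getLast? →
      w ∈ B.getLast? → col u ≠ col v → col u ≠ col w →
      A.length + B.length = P.length + Q.length + 1 →
      3 * s < dg G v C + dg G w C + 2 * dg G u C → False := by
    intro u v w A B hT hv hw huv huw hlen hd
    have huH : u ∈ HH F := hT.2.2.2.2.2.2.1 u (by simp)
    obtain ⟨x, hx, h1, h2, h3⟩ := pick2 hcol hCc hCs (mem_HH.1 huH C hC) huv huw hd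
    obtain ⟨F', hF', -⟩ := hT.join hC hCs hx h3 (by
      intro y hy
      rw [Option.mem_def] at hy hv
      rw [hy] at hv
      simp at hv; subst hv; exact h1) (by
      intro y hy
      rw [Option.mem_def] at hy hw
      rw [hy] at hw
      simp at hw; subst hw; exact h2)
    have := hP.2 _ _ hF'
    simp only [List.length_append, List.length_cons, List.length_reverse] at this
    omega
  obtain ⟨P', rfl⟩ : ∃ l, P = l ++ [z] := by
    rcases List.eq_nil_or_concat P with rfl | ⟨l, c, rfl⟩
    · simp at hz
    · simp at hz; subst hz; exact ⟨l, by simp⟩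
  obtain ⟨Q', rfl⟩ : ∃ l, Q = l ++ [b] := by
    rcases List.eq_nil_or_concat Q with rfl | ⟨l, c, rfl⟩
    · simp at hb
    · simp at hb; subst hb; exact ⟨l, by simp⟩
  have e1 : (p :: (P' ++ [z])).reverse = z :: (p :: P').reverse := by simp
  have e2 : (a :: (Q' ++ [b])).reverse = b :: (a :: Q').reverse := by simp
  have T1 := hjoin p z b _ _ h hz hb' hcpz hcpb (by simp; omega)
  have T2 := hjoin a b z _ _ h.symm hb hz' hcab hcaz (by simp; omega)
  have h3 := h.revA.revB
  rw [e1, e2] at h3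
  have T3 := hjoin z p a _ _ h3 (by simp) (by simp [glc1]) hcpz.symm hcaz.symm (by simp; omega)
  have T4 := hjoin b a p _ _ h3.symm (by simp) (by simp [glc1]) hcab.symm hcpb.symm (by simp; omega)
  clear hjoin hm hlt gp gz ga gb dp dz da db
  rw [imp_false, not_lt] at T1 T2 T3 T4
  have q1 : dg G p C = dg G a C := by omega
  have q2 : dg G z C = dg G b C := by omega
  omega

lemma step3 {P : List V} (hP : MaxCfg G s F P) (hH : 2 * s ≤ (HH F).card) : 2 * s ≤ P.length := by
  by_contra hlt
  push Not at hlt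
  -- P nonempty
  have hPne : ∀ a b, a ∈ HH F → b ∈ HH F → G.Adj a b → a ∉ P → b ∉ P →
      PM G (((HH F \ P.toFinset).erase a).erase b) → 0 < P.length ∧ Two G s F P [a, b] := by
    intro a b ha hb hab ha' hb' hpm
    have hT : Two G s F P [a, b] := by
      refine ⟨hP.1.1, hP.1.2.1, by simp [hab.ne], ?_, hP.1.2.2.1, by simp [hab], hP.1.2.2.2.1, ?_,
        hP.1.2.2.2.2.1, by simp, ?_⟩
      · intro x hx hx'
        simp at hx'
        rcases hx' with rfl | rfl
        · exact ha' hx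
        · exact hb' hx
      · intro x hx
        simp at hx
        rcases hx with rfl | rfl
        · exact ha
        · exact hb
      · convert hpm using 1
        ext x
        simp only [Finset.mem_sdiff, List.mem_toFinset, List.mem_cons, Finset.mem_erase,
          Finset.mem_union, List.not_mem_nil]
        tauto
    refine ⟨?_, hT⟩
    by_contra h0
    have hP0 : P = [] := List.length_eq_zero_iff.1 (by omega)
    subst hP0
    have := hP.2 F [a, b] ⟨hT.1, hT.2.2.1, hT.2.2.2.2.2.1, hT.2.2.2.2.2.2.2.1, by simp, by
      have := hT.2.2.2.2.2.2.2.2.2.2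
      simpa using this⟩
    simp at this
  obtain ⟨a, ha⟩ : (HH F \ P.toFinset).Nonempty := by
    rw [← Finset.card_pos]
    have h1 := Finset.le_card_sdiff P.toFinset (HH F)
    have h2 := List.toFinset_card_of_nodup hP.1.2.1
    omega
  obtain ⟨b, hb, hab, hpm⟩ := hP.1.2.2.2.2.2.mate a ha
  rw [Finset.mem_sdiff, List.mem_toFinset] at ha hb
  obtain ⟨hpos, hT0⟩ := hPne a b ha.1 hb.1 hab ha.2 hb.2 hpm
  obtain ⟨Q, hQ, hmax⟩ := exists_max (fun Q => Two G s F P Q) List.length (Fintype.card V)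
    (fun Q hQ => by
      rw [← List.toFinset_card_of_nodup hQ.2.2.1]; exact Finset.card_le_univ _) ⟨_, hT0⟩
  have hQ2 := hmax _ hT0
  simp only [List.length_cons, List.length_nil] at hQ2
  have hfin : ∀ Q, Two G s F P Q → (∀ b, Two G s F P b → b.length ≤ Q.length) →
      (∀ p ∈ P.head?, ∀ a ∈ Q.head?, col p = col a) → False := by
    intro Q hQ hmax hc
    have hQ2 := hmax _ hT0
    simp only [List.length_cons, List.length_nil] at hQ2
    have hPe := hP.1.2.2.2.2.1
    rcases P with _ | ⟨p, P⟩
    · simp at hpos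
    rcases List.eq_nil_or_concat P with rfl | ⟨P', z, rfl⟩
    · simp at hPe
    rcases Q with _ | ⟨a, Q⟩
    · simp at hQ2
    rcases List.eq_nil_or_concat Q with rfl | ⟨Q', b, rfl⟩
    · simp at hQ2
    exact step3_aux hcol hs hno hdeg hP hQ hmax hlt (hc p (by simp) a (by simp)) (z := z) (b := b)
      (by simp) (by simp)
  by_cases hc : ∀ p ∈ P.head?, ∀ a ∈ Q.head?, col p = col a
  · exact hfin Q hQ hmax hc
  · apply hfin Q.reverse hQ.revB (by simpa using hmax)
    intro p hp y hy
    rw [List.head?_reverse] at hy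
    push Not at hc
    obtain ⟨p', hp', a, ha, hpa⟩ := hc
    have : p' = p := by
      rw [Option.mem_def] at hp hp'
      rw [hp] at hp'
      simpa using hp'.symm
    subst this
    rcases Q with _ | ⟨a', Q⟩
    · simp at ha
    simp at ha
    subst ha
    have h1 := col_last hcol Q a' hQ.2.2.2.2.2.1 y hy
    have h2 := hQ.2.2.2.2.2.2.2.2.2.1
    rw [List.length_cons, Nat.even_add_one, ← h1] at h2
    cases e1 : col p' <;> cases e2 : col a' <;> cases e3 : col y <;> simp_all

lemma tread {p : V} {q : List V} (hP : MaxCfg G s F (p :: q)) :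
    ∃ F' x, MaxCfg G s F' (q ++ [x]) ∧ HH F ⊆ insert p (HH F') := by
  rcases List.eq_nil_or_concat q with rfl | ⟨q', z, rfl⟩
  · have := hP.1.2.2.2.2.1
    simp at this
  have dp := hP.head_deg hcol (by omega)
  have dz := hP.last_deg hcol (by omega) (z := z) (by simp)
  have hc := hP.1.col_ne hcol (z := z) (by simp)
  have hF := hP.1.1
  have hpH : p ∈ HH F := hP.1.2.2.2.1 p (by simp)
  have hzH : z ∈ HH F := hP.1.2.2.2.1 z (by simp)
  have gp := good hF.1 (hno F hF.1) (by omega) (hdeg p) (j := 0) (by omega)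
  have gz := good hF.1 (hno F hF.1) (by omega) (hdeg z) (j := 0) (by omega)
  obtain ⟨C, hC, hpos⟩ := exists_pos (F := F)
    (f := fun C => ex G s p C + ex G s z C) (by
    rw [Finset.sum_add_distrib]
    push_cast at gp gz
    omega)
  have hCs : C.card = 2 * s := by
    by_contra h
    have h1 := ex_nonpos_H hcol hF (by omega) hC h hpH
    have h2 := ex_nonpos_H hcol hF (by omega) hC h hzH
    omega
  have hCc := (hF.1.1 C hC).1
  have lp := dg_le_s hcol hCc hCs p
  have lz := dg_le_s hcol hCc hCs z
  unfold ex at hpos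
  obtain ⟨x, hx, h1, h3⟩ := pick1 hcol hCc hCs (mem_HH.1 hpH C hC) hc (by omega)
  have hT : Two G s F (p :: q'.concat z) [] := by
    obtain ⟨a1, a2, a3, a4, a5, a6⟩ := hP.1
    exact ⟨a1, a2, by simp, by simp, a3, by simp, a4, by simp, a5, by simp, by simpa using a6⟩
  obtain ⟨F', hF', hHH⟩ := hT.join hC hCs hx h3 (by simpa using h1) (by simp)
  refine ⟨F', x, ⟨by simpa using hF', ?_⟩, ?_⟩
  · intro F'' P'' h''
    have := hP.2 F'' P'' h''
    simpa using this
  · rw [hHH]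
    intro y hy
    rw [Finset.mem_insert, Finset.mem_insert, Finset.mem_erase]
    tauto

lemma semi2 {p1 p2 : V} {q : List V} (hP : MaxCfg G s F (p1 :: p2 :: q)) :
    dg G p2 (HH F) ≤ s := by
  obtain ⟨F', x, h, hsub⟩ := tread hcol hs hno hdeg hP
  have h1 := h.head_deg hcol (by omega)
  have h2 := dg_mono (G := G) (v := p2) hsub
  have h3 := dg_insert_le (G := G) (v := p2) (x := p1) (A := HH F')
  omega

lemma semi3 {p1 p2 p3 : V} {q : List V} (hP : MaxCfg G s F (p1 :: p2 :: p3 :: q)) :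
    dg G p3 (HH F) ≤ s := by
  obtain ⟨F', x, h, hsub⟩ := tread hcol hs hno hdeg hP
  have h1 := semi2 hcol hs hno hdeg h
  have h2 := dg_mono (G := G) (v := p3) hsub
  have h3 := dg_insert_not (G := G) (v := p3) (x := p1) (A := HH F') (by
    intro hadj
    have hc := hP.1.2.2.1
    rw [List.isChain_cons_cons, List.isChain_cons_cons] at hc
    have e1 := hcol _ _ hc.1
    have e2 := hcol _ _ hc.2.1
    have e3 := hcol _ _ hadj
    cases a1 : col p1 <;> cases a2 : col p2 <;> cases a3 : col p3 <;> simp_all)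
  omega

omit hcol hs hno hdeg in
lemma moveA {p : V} {q : List V} (hP : Cfg G s F (p :: q)) (hs : 2 ≤ s) (hl : 2 * s ≤ q.length + 1)
    {C : Finset V} (hC : C ∈ F) (hCs : C.card = 2 * s) {x : V} (hx : x ∈ C)
    (hcyc : CycSet G (insert p (C.erase x))) (h1 : ∀ y ∈ q.head?, G.Adj y x)
    (h2 : ∀ y ∈ q.getLast?, G.Adj y x) : False := by
  obtain ⟨a1, a2, a3, a4, a5, a6⟩ := hP
  have hxH : x ∉ HH F := fun h => mem_HH.1 h C hC hx
  have hpC : p ∉ C := mem_HH.1 (a4 p (by simp)) C hC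
  have hxq : x ∉ q := fun h => hxH (a4 x (List.mem_cons_of_mem _ h))
  rw [List.nodup_cons] at a2
  have hB : IsCyc G (x :: q) := by
    refine ⟨by rw [List.nodup_cons]; exact ⟨hxq, a2.2⟩, by simp; omega, ?_, ?_⟩
    · rw [List.isChain_cons]
      exact ⟨fun y hy => (h1 y hy).symm, (List.isChain_cons.1 a3).2⟩
    · intro a ha b hb
      simp at hb
      subst hb
      apply h2
      rcases q with _ | ⟨c, q⟩
      · simp at hl; omega
      · rw [List.getLast?_cons_cons] at ha; exact ha
  refine imp2H a1 hC hCs hcyc ⟨_, hB, rfl⟩ ?_ ?_ ?_ ?_ ?_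
  · rw [Finset.card_insert_of_notMem (fun h => hpC (Finset.mem_of_mem_erase h)),
      Finset.card_erase_of_mem hx]
    omega
  · rw [hB.card]; simpa using hl
  · rw [Finset.disjoint_left]
    intro y hy hy'
    rw [List.mem_toFinset, List.mem_cons] at hy'
    rw [Finset.mem_insert, Finset.mem_erase] at hy
    rcases hy with rfl | hy
    · rcases hy' with rfl | h
      · exact hpC hx
      · exact a2.1 h
    · rcases hy' with h | h
      · exact hy.1 h
      · exact mem_HH.1 (a4 y (List.mem_cons_of_mem _ h)) C hC hy.2
  · intro y hy
    rw [Finset.mem_insert] at hy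
    rw [Finset.mem_union]
    rcases hy with rfl | h
    · exact Or.inl (a4 y (by simp))
    · exact Or.inr (Finset.mem_of_mem_erase h)
  · intro y hy
    rw [List.mem_toFinset, List.mem_cons] at hy
    rw [Finset.mem_union]
    rcases hy with rfl | h
    · exact Or.inr hx
    · exact Or.inl (a4 y (List.mem_cons_of_mem _ h))

lemma final4 (h4 : 4 ≤ s) {P : List V} (hP : MaxCfg G s F P) (hl : 2 * s ≤ P.length) : False := by
  rcases P with _ | ⟨p1, _ | ⟨p2, q⟩⟩
  · simp at hl; omega
  · simp at hl; omega
  rcases List.eq_nil_or_concat q with rfl | ⟨q, z1, rfl⟩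
  · simp at hl; omega
  rcases List.eq_nil_or_concat q with rfl | ⟨q, z2, rfl⟩
  · simp at hl; omega
  have hR := hP.reverse
  have e : (p1 :: p2 :: (q.concat z2).concat z1).reverse =
    z1 :: z2 :: (p1 :: p2 :: q).reverse := by simp
  rw [e] at hR
  have d1 := hP.head_deg hcol (by omega)
  have d2 := semi2 hcol hs hno hdeg hP
  have d3 := hR.head_deg hcol (by omega)
  have d4 := semi2 hcol hs hno hdeg hR
  have hF := hP.1.1
  have g1 := good hF.1 (hno F hF.1) (by omega) (hdeg p1) (j := 0) (by omega)
  have g2 := good hF.1 (hno F hF.1) (by omega) (hdeg p2) (j := 1) (by omega)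
  have g3 := good hF.1 (hno F hF.1) (by omega) (hdeg z1) (j := 0) (by omega)
  have g4 := good hF.1 (hno F hF.1) (by omega) (hdeg z2) (j := 1) (by omega)
  have m1 : p1 ∈ HH F := hP.1.2.2.2.1 p1 (by simp)
  have m2 : p2 ∈ HH F := hP.1.2.2.2.1 p2 (by simp)
  have m3 : z1 ∈ HH F := hP.1.2.2.2.1 z1 (by simp)
  have m4 : z2 ∈ HH F := hP.1.2.2.2.1 z2 (by simp)
  obtain ⟨C, hC, hpos⟩ := exists_pos (F := F)
    (f := fun C => 3 * ex G s p1 C + ex G s p2 C + 3 * ex G s z1 C + ex G s z2 C) (by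
    rw [Finset.sum_add_distrib, Finset.sum_add_distrib, Finset.sum_add_distrib, ← Finset.mul_sum,
      ← Finset.mul_sum]
    push_cast at g1 g2 g3 g4
    omega)
  have hCs : C.card = 2 * s := by
    by_contra h
    have h1 := ex_nonpos_H hcol hF (by omega) hC h m1
    have h2 := ex_nonpos_H hcol hF (by omega) hC h m2
    have h3 := ex_nonpos_H hcol hF (by omega) hC h m3
    have h4 := ex_nonpos_H hcol hF (by omega) hC h m4
    omega
  have hCc := (hF.1.1 C hC).1
  unfold ex at hpos
  have c1 := hP.1.col_ne hcol (z := z1) (by simp [glc2])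
  have hch := hP.1.2.2.1
  have hch' := hR.1.2.2.1
  rw [List.isChain_cons_cons] at hch hch'
  have c2 := hcol _ _ hch.1
  have c3 := hcol _ _ hch'.1
  by_cases hA : 3 * s < dg G p2 C + dg G z1 C + 2 * dg G p1 C
  · obtain ⟨x, hx, h1, h2, h3⟩ := pick2 hcol hCc hCs (mem_HH.1 m1 C hC) c2 c1 hA
    exact moveA hP.1 (by omega) (by simpa using hl) hC hCs hx h3 (by simpa using h1)
      (by simpa [glc2] using h2)
  · obtain ⟨x, hx, h1, h2, h3⟩ := pick2 hcol hCc hCs (mem_HH.1 m3 C hC) c3 c1.symm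
      (show 3 * s < dg G z2 C + dg G p1 C + 2 * dg G z1 C by omega)
    exact moveA hR.1 (by omega) (by simp at hl ⊢; omega) hC hCs hx h3 (by simpa using h1)
      (by simpa [glc2] using h2)

end configs
end Wang
namespace Wang
section finite

/-- certificates: kind, hexagon, second piece, third piece -/
abbrev Ct := ℕ × List ℕ × List ℕ × List ℕ

def opn : List ℕ → List (ℕ × ℕ)
  | a :: b :: l => (a, b) :: opn (b :: l)
  | _ => []

def cls (l : List ℕ) : List (ℕ × ℕ) := opn (l ++ l.take 1)

def prs (c : Ct) : List (ℕ × ℕ) :=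
  cls c.2.1 ++
    if c.1 = 0 then cls c.2.2.1
    else if c.1 = 1 then opn c.2.2.1
    else opn c.2.2.1 ++ (opn c.2.2.2 ++
      if c.1 = 2 then [(c.2.2.1.getD 0 0, c.2.2.1.getD 3 0)]
      else [(c.2.2.2.reverse.getD 0 0, c.2.2.2.reverse.getD 3 0)])

def cod (p : ℕ × ℕ) : ℕ := if p.1 < 10 then 6 * p.1 + (p.2 - 10) else 6 * p.2 + (p.1 - 10)

def okv (w : ℕ → ℕ) (p : ℕ × ℕ) : Bool :=
  (decide (p.1 < 7) && decide (10 ≤ p.2) && decide (p.2 < 16) && decide ((p.1 + p.2) % 2 = 1)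
    && decide (0 < w p.1)) ||
  (decide (p.2 < 7) && decide (10 ≤ p.1) && decide (p.1 < 16) && decide ((p.1 + p.2) % 2 = 1)
    && decide (0 < w p.2))

def isfx (FX : List (ℕ × ℕ)) (p : ℕ × ℕ) : Bool := FX.contains p || FX.contains (p.2, p.1)

def need (FX : List (ℕ × ℕ)) (c : Ct) : List ℕ := ((prs c).filter (fun p => !isfx FX p)).map cod

def valid (FX : List (ℕ × ℕ)) (w : ℕ → ℕ) (c : Ct) : Bool :=
  (prs c).all (fun p => isfx FX p || okv w p)

def srch (cs : List (List ℕ)) (w : ℕ → ℕ) : ℕ → List ℕ → ℕ → Bool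
  | 0, _, _ => false
  | n + 1, miss, b =>
    match cs.find? (fun c => c.all (fun e => !(miss.contains e))) with
    | none => false
    | some c => c.all (fun e => decide (b < w (e / 6)) || srch cs w n (e :: miss) (b - w (e / 6)))

lemma srch_sound (cs : List (List ℕ)) (w : ℕ → ℕ) (E U : ℕ → Prop) (B : ℕ)
    (hU : ∀ c ∈ cs, ∀ e ∈ c, U e)
    (hB : ∀ L : List ℕ, L.Nodup → (∀ e ∈ L, U e ∧ ¬ E e) → (L.map (fun e => w (e / 6))).sum ≤ B) :
    ∀ (n : ℕ) (miss : List ℕ) (b : ℕ), miss.Nodup → (∀ e ∈ miss, U e ∧ ¬ E e) →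
      (miss.map (fun e => w (e / 6))).sum + b = B → srch cs w n miss b = true →
      ∃ c ∈ cs, ∀ e ∈ c, E e := by
  intro n
  induction n with
  | zero => intro miss b _ _ _ h; simp [srch] at h
  | succ n ih =>
    intro miss b h1 h2 h3 h
    rw [srch] at h
    split at h
    · simp at h
    · rename_i c hc
      by_cases hall : ∀ e ∈ c, E e
      · exact ⟨c, List.mem_of_find?_eq_some hc, hall⟩
      · push Not at hall
        obtain ⟨e, hec, hE⟩ := hall
        have hp := List.find?_some hc
        rw [List.all_eq_true] at hp h
        have hem : e ∉ miss := by
          have := hp e hec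
          simpa using this
        have hn : (e :: miss).Nodup := List.nodup_cons.2 ⟨hem, h1⟩
        have ha : ∀ e' ∈ e :: miss, U e' ∧ ¬ E e' := by
          intro e' he'
          rcases List.mem_cons.1 he' with rfl | h'
          · exact ⟨hU c (List.mem_of_find?_eq_some hc) _ hec, hE⟩
          · exact h2 e' h'
        have hb := hB _ hn ha
        rw [List.map_cons, List.sum_cons] at hb
        have h4 := h e hec
        rw [Bool.or_eq_true, decide_eq_true_eq] at h4
        rcases h4 with h4 | h4
        · omega
        · refine ih (e :: miss) (b - w (e / 6)) hn ha ?_ h4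
          rw [List.map_cons, List.sum_cons]
          omega

variable {V : Type*} [DecidableEq V] {G : SimpleGraph V} [DecidableRel G.Adj]

def Uset (w : ℕ → ℕ) (e : ℕ) : Prop := e < 42 ∧ (e / 6 + e % 6) % 2 = 1 ∧ 0 < w (e / 6)

lemma fiber_card (φ : ℕ → V) (C : Finset V) (hC : ∀ x ∈ C, ∃ j, j < 6 ∧ φ (10 + j) = x)
    (hpar : ∀ i j, i < 7 → j < 6 → G.Adj (φ i) (φ (10 + j)) → (i + j) % 2 = 1) (w : ℕ → ℕ)
    (S : Finset ℕ) (hS : ∀ e ∈ S, Uset w e ∧ ¬ G.Adj (φ (e / 6)) (φ (10 + e % 6))) (i : ℕ) (hi : i < 7) :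
    (S.filter (fun e => e / 6 = i)).card + dg G (φ i) C ≤ 3 := by
  set J := (Finset.range 6).filter (fun j => (i + j) % 2 = 1) with hJ
  have hJc : J.card = 3 := by
    rw [hJ]
    interval_cases i <;> rfl
  have h1 : (S.filter (fun e => e / 6 = i)).card ≤
      (J.filter (fun j => ¬ G.Adj (φ i) (φ (10 + j)))).card := by
    apply Finset.card_le_card_of_injOn (fun e => e % 6)
    · intro e he
      rw [Finset.mem_coe, Finset.mem_filter] at he
      have := hS e he.1
      rw [Finset.mem_coe, Finset.mem_filter, hJ, Finset.mem_filter, Finset.mem_range]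
      have h2 := he.2
      subst h2
      exact ⟨⟨Nat.mod_lt _ (by norm_num), this.1.2.1⟩, this.2⟩
    · intro a ha b hb hab
      rw [Finset.mem_coe, Finset.mem_filter] at ha hb
      simp only at hab
      omega
  have h2 : dg G (φ i) C ≤ (J.filter (fun j => G.Adj (φ i) (φ (10 + j)))).card := by
    unfold dg
    refine le_trans (Finset.card_le_card (t := (J.filter (fun j => G.Adj (φ i) (φ (10 + j)))).image
      (fun j => φ (10 + j))) ?_) Finset.card_image_le
    intro x hx
    rw [Finset.mem_filter] at hx
    obtain ⟨j, hj, rfl⟩ := hC x hx.1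
    rw [Finset.mem_image]
    refine ⟨j, ?_, rfl⟩
    rw [Finset.mem_filter, hJ, Finset.mem_filter, Finset.mem_range]
    exact ⟨⟨hj, hpar i j hi hj hx.2⟩, hx.2⟩
  have h3 := Finset.card_filter_add_card_filter_not (s := J) (fun j => G.Adj (φ i) (φ (10 + j)))
  omega

theorem fin_main (FX : List (ℕ × ℕ)) (w : ℕ → ℕ) (cs : List Ct) (φ : ℕ → V) (C : Finset V)
    (hFX : ∀ p ∈ FX, G.Adj (φ p.1) (φ p.2))
    (hC : ∀ x ∈ C, ∃ j, j < 6 ∧ φ (10 + j) = x)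
    (hpar : ∀ i j, i < 7 → j < 6 → G.Adj (φ i) (φ (10 + j)) → (i + j) % 2 = 1)
    (hd : 3 * ∑ i ∈ Finset.range 7, w i ≤ (∑ i ∈ Finset.range 7, w i * dg G (φ i) C) + 5)
    (hval : cs.all (valid FX w) = true) (hsr : srch (cs.map (need FX)) w 7 [] 5 = true) :
    ∃ c ∈ cs, ∀ p ∈ prs c, G.Adj (φ p.1) (φ p.2) := by
  rw [List.all_eq_true] at hval
  have hcod : ∀ p, okv w p = true → Uset w (cod p) ∧
      ((G.Adj (φ (cod p / 6)) (φ (10 + cod p % 6))) → G.Adj (φ p.1) (φ p.2)) := by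
    rintro ⟨a, b⟩ h
    simp only [okv, Bool.or_eq_true, Bool.and_eq_true, decide_eq_true_eq] at h
    rcases h with h | h
    · have e0 : cod (a, b) = 6 * a + (b - 10) := by
        unfold cod; rw [if_pos (show (a, b).1 < 10 by simp; omega)]
      have e1 : cod (a, b) / 6 = a := by omega
      have e2 : 10 + cod (a, b) % 6 = b := by omega
      refine ⟨⟨by omega, by omega, ?_⟩, ?_⟩
      · rw [e1]; exact h.2
      · rw [e1, e2]; exact id
    · have e0 : cod (a, b) = 6 * b + (a - 10) := by
        unfold cod; rw [if_neg (show ¬ (a, b).1 < 10 by simp; omega)]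
      have e1 : cod (a, b) / 6 = b := by omega
      have e2 : 10 + cod (a, b) % 6 = a := by omega
      refine ⟨⟨by omega, by omega, ?_⟩, ?_⟩
      · rw [e1]; exact h.2
      · rw [e1, e2]; exact fun h => h.symm
  obtain ⟨nd, hnd, hE⟩ := srch_sound (cs.map (need FX)) w
    (fun e => G.Adj (φ (e / 6)) (φ (10 + e % 6))) (Uset w) 5 (by
      intro nd hnd e he
      rw [List.mem_map] at hnd
      obtain ⟨c, hc, rfl⟩ := hnd
      unfold need at he
      rw [List.mem_map] at he
      obtain ⟨p, hp, rfl⟩ := he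
      rw [List.mem_filter] at hp
      have hv := hval c hc
      unfold valid at hv
      rw [List.all_eq_true] at hv
      have := hv p hp.1
      rw [Bool.or_eq_true] at this
      rcases this with h | h
      · simp [h] at hp
      · exact (hcod p h).1) (by
      intro L hL hLa
      have e1 : (L.map (fun e => w (e / 6))).sum = ∑ e ∈ L.toFinset, w (e / 6) :=
        (List.sum_toFinset _ hL).symm
      rw [e1]
      have e2 : ∑ e ∈ L.toFinset, w (e / 6) =
          ∑ i ∈ Finset.range 7, ∑ e ∈ L.toFinset.filter (fun e => e / 6 = i), w (e / 6) := by
        rw [Finset.sum_fiberwise_of_maps_to]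
        intro e he
        have := (hLa e (List.mem_toFinset.1 he)).1.1
        rw [Finset.mem_range]
        omega
      rw [e2]
      have e3 : ∀ i ∈ Finset.range 7, (∑ e ∈ L.toFinset.filter (fun e => e / 6 = i), w (e / 6)) +
          w i * dg G (φ i) C ≤ 3 * w i := by
        intro i hi
        have h1 : ∑ e ∈ L.toFinset.filter (fun e => e / 6 = i), w (e / 6) =
            (L.toFinset.filter (fun e => e / 6 = i)).card * w i := by
          rw [Finset.sum_congr rfl (g := fun _ => w i), Finset.sum_const, smul_eq_mul]
          intro e he
          rw [(Finset.mem_filter.1 he).2]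
        rw [h1]
        have h2 := fiber_card φ C hC hpar w L.toFinset
          (fun e he => hLa e (List.mem_toFinset.1 he)) i (Finset.mem_range.1 hi)
        nlinarith
      have e4 := Finset.sum_le_sum e3
      rw [Finset.sum_add_distrib, ← Finset.mul_sum] at e4
      omega)
    7 [] 5 (by simp) (by simp) (by simp) hsr
  rw [List.mem_map] at hnd
  obtain ⟨c, hc, rfl⟩ := hnd
  refine ⟨c, hc, ?_⟩
  intro p hp
  have hv := hval c hc
  unfold valid at hv
  rw [List.all_eq_true] at hv
  by_cases hfx : isfx FX p = true
  · unfold isfx at hfx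
    rw [Bool.or_eq_true, List.contains_iff_mem, List.contains_iff_mem] at hfx
    rcases hfx with h | h
    · exact hFX p h
    · exact (hFX _ h).symm
  · have hv' := hv p hp
    rw [Bool.or_eq_true] at hv'
    have hok := hv'.resolve_left hfx
    apply (hcod p hok).2
    apply hE
    unfold need
    rw [List.mem_map]
    refine ⟨p, ?_, rfl⟩
    rw [List.mem_filter]
    exact ⟨hp, by simpa using hfx⟩

lemma opn_chain (φ : ℕ → V) : ∀ l : List ℕ, (∀ p ∈ opn l, G.Adj (φ p.1) (φ p.2)) →
    (l.map φ).IsChain G.Adj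
  | [], _ => by simp
  | [a], _ => by simp
  | a :: b :: l, h => by
    rw [opn] at h
    rw [List.map_cons, List.map_cons, List.isChain_cons_cons]
    refine ⟨h (a, b) (by simp), ?_⟩
    have := opn_chain φ (b :: l) (fun p hp => h p (List.mem_cons_of_mem _ hp))
    rwa [List.map_cons] at this

lemma cls_cyc (φ : ℕ → V) (l : List ℕ) (hn : (l.map φ).Nodup) (hl : 3 ≤ l.length)
    (h : ∀ p ∈ cls l, G.Adj (φ p.1) (φ p.2)) : IsCyc G (l.map φ) := by
  rcases l with _ | ⟨a, l⟩
  · simp at hl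
  have h1 := opn_chain φ _ h
  rw [List.map_append, List.isChain_append] at h1
  refine ⟨hn, by simpa using hl, h1.1, ?_⟩
  intro x hx y hy
  apply h1.2.2 x hx
  simpa using hy

def FX6 : List (ℕ × ℕ) := [(0, 1), (1, 2), (3, 4), (4, 5),
  (10, 11), (11, 12), (12, 13), (13, 14), (14, 15), (15, 10)]

def FX7 : List (ℕ × ℕ) := [(0, 1), (1, 2), (2, 3), (3, 4), (4, 5), (5, 6),
  (10, 11), (11, 12), (12, 13), (13, 14), (14, 15), (15, 10)]

def wI : ℕ → ℕ := fun i => [2, 1, 0, 0, 1, 2, 0].getD i 0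
def wII : ℕ → ℕ := fun i => [1, 0, 1, 1, 1, 2, 0].getD i 0
def wL : ℕ → ℕ := fun i => [1, 1, 1, 1, 0, 1, 1].getD i 0

def certsI : List Ct :=
  [(3, [0, 1, 10, 15, 14, 13], [2], [3, 4, 5, 12, 11]),
   (1, [0, 11, 10, 15, 14, 13], [3, 4, 5, 12, 1, 2], []),
   (1, [0, 11, 12, 13, 14, 15], [3, 4, 5, 10, 1, 2], []),
   (2, [4, 5, 14, 13, 12, 11], [10, 15, 0, 1, 2], [3]),
   (1, [5, 12, 11, 10, 15, 14], [3, 4, 13, 0, 1, 2], []),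
   (2, [4, 5, 10, 11, 12, 13], [14, 15, 0, 1, 2], [3]),
   (2, [4, 5, 14, 15, 10, 11], [12, 13, 0, 1, 2], [3]),
   (1, [5, 10, 15, 14, 13, 12], [3, 4, 11, 0, 1, 2], []),
   (1, [5, 10, 11, 12, 13, 14], [3, 4, 15, 0, 1, 2], []),
   (3, [0, 1, 14, 13, 12, 11], [2], [3, 4, 5, 10, 15]),
   (3, [0, 1, 12, 11, 10, 15], [2], [3, 4, 5, 14, 13]),
   (1, [0, 13, 12, 11, 10, 15], [3, 4, 5, 14, 1, 2], [])]

def certsII : List Ct :=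
  [(1, [4, 5, 12, 11, 10, 15], [3, 14, 13, 0, 1, 2], []),
   (0, [0, 1, 2, 15, 14, 13], [3, 4, 5, 10, 11, 12], []),
   (0, [0, 1, 2, 13, 12, 11], [3, 4, 5, 14, 15, 10], []),
   (1, [5, 10, 11, 12, 13, 14], [3, 4, 15, 2, 1, 0], []),
   (1, [4, 5, 10, 15, 14, 13], [3, 12, 11, 0, 1, 2], []),
   (1, [5, 12, 11, 10, 15, 14], [3, 4, 13, 0, 1, 2], []),
   (1, [5, 12, 11, 10, 15, 14], [3, 4, 13, 2, 1, 0], []),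
   (1, [5, 10, 15, 14, 13, 12], [3, 4, 11, 2, 1, 0], []),
   (1, [4, 5, 10, 11, 12, 13], [3, 14, 15, 0, 1, 2], []),
   (1, [5, 10, 15, 14, 13, 12], [3, 4, 11, 0, 1, 2], []),
   (0, [0, 1, 2, 11, 12, 13], [3, 4, 5, 10, 15, 14], []),
   (0, [0, 1, 2, 15, 10, 11], [3, 4, 5, 12, 13, 14], []),
   (0, [0, 1, 2, 13, 14, 15], [3, 4, 5, 12, 11, 10], []),
   (0, [0, 1, 2, 11, 10, 15], [3, 4, 5, 14, 13, 12], [])]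

def certsL0 : List Ct :=
  [(0, [0, 1, 10, 11, 12, 13], [2, 3, 4, 5, 14, 15], []),
   (0, [0, 1, 2, 15, 14, 13], [3, 4, 5, 10, 11, 12], []),
   (0, [0, 13, 12, 11, 10, 15], [1, 2, 3, 4, 5, 14], []),
   (0, [0, 1, 14, 13, 12, 11], [2, 3, 4, 5, 10, 15], []),
   (0, [1, 2, 13, 12, 11, 10], [3, 4, 5, 6, 15, 14], []),
   (0, [0, 1, 2, 13, 14, 15], [3, 4, 5, 12, 11, 10], []),
   (0, [1, 2, 3, 4, 5, 12], [6, 11, 10, 15, 14, 13], []),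
   (0, [0, 1, 2, 11, 10, 15], [3, 4, 5, 14, 13, 12], []),
   (0, [2, 3, 4, 5, 6, 13], [1, 12, 11, 10, 15, 14], []),
   (0, [2, 3, 4, 5, 6, 11], [1, 10, 15, 14, 13, 12], []),
   (0, [0, 1, 2, 11, 12, 13], [3, 4, 5, 10, 15, 14], []),
   (0, [0, 1, 2, 13, 12, 11], [3, 4, 5, 10, 15, 14], []),
   (0, [1, 2, 3, 4, 5, 14], [6, 13, 12, 11, 10, 15], []),
   (0, [1, 2, 3, 4, 5, 10], [6, 11, 12, 13, 14, 15], []),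
   (0, [1, 2, 11, 12, 13, 14], [3, 4, 5, 6, 15, 10], []),
   (0, [1, 2, 11, 10, 15, 14], [3, 4, 5, 6, 13, 12], []),
   (0, [0, 1, 2, 15, 10, 11], [3, 4, 5, 12, 13, 14], []),
   (0, [1, 2, 15, 10, 11, 12], [3, 4, 5, 6, 13, 14], []),
   (0, [0, 11, 10, 15, 14, 13], [1, 2, 3, 4, 5, 12], []),
   (0, [0, 1, 2, 13, 12, 11], [3, 4, 5, 14, 15, 10], [])]

/-- structural requirements on certificates -/
def shp (c : Ct) : Bool :=
  decide (c.1 < 4) && decide (c.2.1.length = 6) && decide (c.2.2.1.length + c.2.2.2.length = 6) &&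
  (c.2.1 ++ (c.2.2.1 ++ c.2.2.2)).isPerm [0, 1, 2, 3, 4, 5, 10, 11, 12, 13, 14, 15] &&
  (decide (c.1 ≠ 0) || c.2.2.2.isEmpty) &&
  (decide (c.1 ≠ 1) || (c.2.2.2.isEmpty && decide (c.2.2.1.head? = some 3) &&
    decide (c.2.2.1.getLast? = some 2 ∨ c.2.2.1.getLast? = some 0))) &&
  (decide (c.1 < 2) || (decide (c.2.2.1.getLast? = some 2) && decide (c.2.2.2.head? = some 3))) &&
  (decide (c.1 ≠ 2) || decide (4 ≤ c.2.2.1.length)) &&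
  (decide (c.1 ≠ 3) || decide (4 ≤ c.2.2.2.length))

def shpL (c : Ct) : Bool :=
  decide (c.1 = 0) && decide (c.2.1.length = 6) && decide (c.2.2.1.length = 6) &&
  (c.2.1 ++ c.2.2.1).all (fun i => [0, 1, 2, 3, 4, 5, 6, 10, 11, 12, 13, 14, 15].contains i) &&
  decide (c.2.1 ++ c.2.2.1).Nodup

lemma chkI : certsI.all (valid FX6 wI) = true ∧ srch (certsI.map (need FX6)) wI 7 [] 5 = true ∧
    certsI.all (fun c => shp c && !(c.1 == 1 && decide (c.2.2.1.getLast? = some 0))) = true := by decide +kernel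
lemma chkII : certsII.all (valid FX6 wII) = true ∧ srch (certsII.map (need FX6)) wII 7 [] 5 = true ∧
    certsII.all (fun c => shp c && decide (c.1 < 2)) = true := by decide +kernel
lemma chkL : certsL0.all (valid FX7 wL) = true ∧ srch (certsL0.map (need FX7)) wL 7 [] 5 = true ∧
    certsL0.all shpL = true := by decide +kernel

end finite
end Wang
namespace Wang
section three
variable {V : Type*} [Fintype V] [DecidableEq V] {G : SimpleGraph V} [DecidableRel G.Adj]
variable {F : Finset (Finset V)} {k : ℕ}

lemma cyc_of_chain {l : List V} (hn : l.Nodup) (hl : 3 ≤ l.length)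
    (h1 : (l ++ l.take 1).IsChain G.Adj) : IsCyc G l := by
  rcases l with _ | ⟨a, l⟩
  · simp at hl
  rw [List.isChain_append] at h1
  refine ⟨hn, hl, h1.1, ?_⟩
  intro x hx y hy
  apply h1.2.2 x hx
  simpa using hy

def Chord (G : SimpleGraph V) (P : List V) : Prop :=
  ∃ a b c d l, P = a :: b :: c :: d :: l ∧ G.Adj a d

def ids6 : List ℕ := [0, 1, 2, 3, 4, 5, 10, 11, 12, 13, 14, 15]

lemma cert_data {c : Ct} (h : shp c = true) :
    c.1 < 4 ∧ c.2.1.length = 6 ∧ c.2.2.1.length + c.2.2.2.length = 6 ∧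
    (c.2.1 ++ (c.2.2.1 ++ c.2.2.2)).Perm ids6 ∧ (c.1 = 0 → c.2.2.2 = []) ∧
    (c.1 = 1 → c.2.2.2 = [] ∧ c.2.2.1.head? = some 3 ∧
      (c.2.2.1.getLast? = some 2 ∨ c.2.2.1.getLast? = some 0)) ∧
    (2 ≤ c.1 → c.2.2.1.getLast? = some 2 ∧ c.2.2.2.head? = some 3) ∧
    (c.1 = 2 → 4 ≤ c.2.2.1.length) ∧ (c.1 = 3 → 4 ≤ c.2.2.2.length) := by
  simp only [shp, Bool.and_eq_true, Bool.or_eq_true, decide_eq_true_eq, List.isPerm_iff,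
    List.isEmpty_iff] at h
  obtain ⟨⟨⟨⟨⟨⟨⟨⟨h1, h2⟩, h3⟩, h4⟩, h5⟩, h6⟩, h7⟩, h8⟩, h9⟩ := h
  refine ⟨h1, h2, h3, h4, ?_, ?_, ?_, ?_, ?_⟩
  · intro h; exact h5.resolve_left (by omega)
  · intro h
    have := h6.resolve_left (by omega)
    exact ⟨this.1.1, this.1.2, this.2⟩
  · intro h; exact h7.resolve_left (by omega)
  · intro h; exact h8.resolve_left (by omega)
  · intro h; exact h9.resolve_left (by omega)

set_option maxHeartbeats 1000000 in
lemma use_cert (φ : ℕ → V) {M : List V} {C : Finset V}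
    (hP : Cfg G 3 F (φ 0 :: φ 1 :: φ 2 :: (M ++ [φ 3, φ 4, φ 5]))) (hC : C ∈ F)
    (hC6 : C.card = 2 * 3)
    (hCe : ([10, 11, 12, 13, 14, 15].map φ).toFinset = C) {c : Ct} (hc : shp c = true)
    (he : ∀ p ∈ prs c, G.Adj (φ p.1) (φ p.2))
    (hch : c.1 = 1 → c.2.2.1.getLast? = some 0 → ∀ y ∈ (M ++ [φ 3]).head?, G.Adj (φ 0) y) :
    2 ≤ c.1 ∧ ∃ F' P', Cfg G 3 F' P' ∧ P'.length = M.length + 6 ∧ Chord G P' := by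
  obtain ⟨kd, A, B, W⟩ := c
  obtain ⟨k4, hA, hBW, hperm, hk0, hk1, hk2, hk22, hk3⟩ := cert_data hc
  simp only at k4 hA hBW hperm hk0 hk1 hk2 hk22 hk3 hch
  have hp := hperm.map φ
  obtain ⟨hopt, hPn, hPc, hPH, hPe, hPM⟩ := hP
  have hCH : ∀ x ∈ HH F, x ∉ C := fun x hx hx' => mem_HH.1 hx C hC hx'
  have hCn : ([10, 11, 12, 13, 14, 15].map φ).Nodup := by
    rw [← Multiset.coe_nodup, ← Multiset.toFinset_card_eq_card_iff_nodup]
    rw [← List.toFinset_coe] at hCe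
    rw [hCe, hC6]; simp
  have hCm : ∀ x, x ∈ C ↔ x ∈ [10, 11, 12, 13, 14, 15].map φ := by
    intro x; rw [← hCe, List.mem_toFinset]
  have hidm : ∀ x, x ∈ ids6.map φ ↔ x ∈ [φ 0, φ 1, φ 2, φ 3, φ 4, φ 5] ∨ x ∈ C := by
    intro x
    rw [hCm]
    simp only [ids6, List.map_cons, List.map_nil, List.mem_cons, List.not_mem_nil, or_false]
    simp only [or_assoc]
  have hpp : (φ 0 :: φ 1 :: φ 2 :: (M ++ [φ 3, φ 4, φ 5])).Perm
      ([φ 0, φ 1, φ 2, φ 3, φ 4, φ 5] ++ M) := by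
    refine List.Perm.cons _ (List.Perm.cons _ (List.Perm.cons _ ?_))
    exact List.perm_append_comm
  have hPm : ∀ x, x ∈ φ 0 :: φ 1 :: φ 2 :: (M ++ [φ 3, φ 4, φ 5]) ↔
      x ∈ [φ 0, φ 1, φ 2, φ 3, φ 4, φ 5] ∨ x ∈ M := by
    intro x
    exact hpp.mem_iff.trans List.mem_append
  have h6H : ∀ x ∈ [φ 0, φ 1, φ 2, φ 3, φ 4, φ 5], x ∈ HH F :=
    fun x hx => hPH x ((hPm x).2 (Or.inl hx))
  have hMH : ∀ x ∈ M, x ∈ HH F := fun x hx => hPH x ((hPm x).2 (Or.inr hx))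
  have hPn' := hpp.nodup_iff.1 hPn
  rw [List.nodup_append] at hPn'
  obtain ⟨n6, nM, n6M⟩ := hPn'
  have hM6 : ∀ x ∈ M, x ∉ [φ 0, φ 1, φ 2, φ 3, φ 4, φ 5] := fun x hx hx' => n6M x hx' x hx rfl
  have hidn : (ids6.map φ).Nodup := by
    have e : ids6.map φ = [φ 0, φ 1, φ 2, φ 3, φ 4, φ 5] ++ [10, 11, 12, 13, 14, 15].map φ := rfl
    rw [e, List.nodup_append]
    refine ⟨n6, hCn, ?_⟩
    intro a ha b hb hab
    subst hab
    exact hCH a (h6H a ha) ((hCm a).2 hb)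
  have hMid : ∀ x ∈ M, x ∉ ids6.map φ := by
    intro x hx hx'
    rcases (hidm x).1 hx' with h | h
    · exact hM6 x hx h
    · exact hCH x (hMH x hx) h
  have hABWn := hp.nodup_iff.2 hidn
  rw [List.map_append, List.map_append] at hABWn hp
  rw [List.nodup_append] at hABWn
  obtain ⟨hAn, hBWn, hABd⟩ := hABWn
  have hAid : ∀ x ∈ A.map φ, x ∈ ids6.map φ := fun x hx =>
    hp.subset (List.mem_append_left _ hx)
  have hBWid : ∀ x ∈ B.map φ ++ W.map φ, x ∈ ids6.map φ := fun x hx =>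
    hp.subset (List.mem_append_right _ hx)
  have hidsub : ∀ x ∈ ids6.map φ, x ∈ HH F ∪ C := by
    intro x hx
    rw [Finset.mem_union]
    exact ((hidm x).1 hx).imp (h6H x) id
  have hAe : ∀ p ∈ cls A, G.Adj (φ p.1) (φ p.2) := fun p hp =>
    he p (by unfold prs; exact List.mem_append_left _ hp)
  have hAcyc := cls_cyc φ A hAn (by omega) hAe
  have hAset : CycSet G (A.map φ).toFinset := ⟨_, hAcyc, rfl⟩
  have hAcard : (A.map φ).toFinset.card = 2 * 3 := by
    rw [hAcyc.card, List.length_map, hA]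
  have hAsub : (A.map φ).toFinset ⊆ HH F ∪ C := by
    intro x hx
    rw [List.mem_toFinset] at hx
    exact hidsub x (hAid x hx)
  have hmid : (φ 2 :: (M ++ [φ 3])).IsChain G.Adj := by
    have h2 := (List.isChain_cons_cons.1 (List.isChain_cons_cons.1 hPc).2).2
    refine List.IsChain.infix h2 ⟨[], [φ 4, φ 5], by simp⟩
  have he2 : ∀ p ∈ (if kd = 0 then cls B
    else if kd = 1 then opn B
    else opn B ++ (opn W ++
      if kd = 2 then [(B.getD 0 0, B.getD 3 0)]
      else [(W.reverse.getD 0 0, W.reverse.getD 3 0)])), G.Adj (φ p.1) (φ p.2) := fun p hp =>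
    he p (by unfold prs; exact List.mem_append_right _ hp)
  clear he hc
  rcases (show kd = 0 ∨ kd = 1 ∨ 2 ≤ kd by omega) with h0 | h1 | h2
  · exfalso
    rw [if_pos h0] at he2
    have hW := hk0 h0
    subst hW
    simp only [List.map_nil, List.append_nil, List.length_nil, add_zero] at *
    have hBcyc := cls_cyc φ B hBWn (by omega) he2
    refine imp2H hopt hC hC6 hAset ⟨_, hBcyc, rfl⟩ hAcard (by rw [hBcyc.card, List.length_map, hBW]) ?_
      hAsub ?_
    · rw [Finset.disjoint_left]
      intro x hx hx'
      rw [List.mem_toFinset] at hx hx'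
      exact hABd x hx x hx' rfl
    · intro x hx
      rw [List.mem_toFinset] at hx
      exact hidsub x (hBWid x hx)
  · exfalso
    rw [if_neg (by omega), if_pos h1] at he2
    obtain ⟨hW, hhd, hlast⟩ := hk1 h1
    subst hW
    simp only [List.map_nil, List.append_nil, List.length_nil, add_zero] at *
    have hBc := opn_chain φ B he2
    have hcyc : IsCyc G (B.map φ ++ M) := by
      apply cyc_of_chain
      · rw [List.nodup_append]
        refine ⟨hBWn, nM, ?_⟩
        intro a ha b hb hab
        subst hab
        exact hMid a hb (hBWid a ha)
      · simp; omega
      · have e : (B.map φ ++ M).take 1 = [φ 3] := by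
          rcases B with _ | ⟨b, B⟩
          · simp at hhd
          · simp at hhd; subst hhd; simp
        rw [e, List.append_assoc, List.isChain_append]
        refine ⟨hBc, (List.isChain_cons.1 hmid).2, ?_⟩
        intro x hx y hy
        rw [List.getLast?_map] at hx
        rcases hlast with h | h
        · rw [h] at hx
          simp at hx
          subst hx
          exact (List.isChain_cons.1 hmid).1 y hy
        · have := hch h1 h y hy
          rw [h] at hx
          simp at hx
          subst hx
          exact this
    refine imp2H hopt hC hC6 hAset ⟨_, hcyc, rfl⟩ hAcard (by
      rw [hcyc.card, List.length_append, List.length_map, hBW]; omega) ?_ hAsub ?_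
    · rw [Finset.disjoint_left]
      intro x hx hx'
      rw [List.mem_toFinset] at hx hx'
      rw [List.mem_append] at hx'
      rcases hx' with h | h
      · exact hABd x hx x h rfl
      · exact hMid x h (hAid x hx)
    · intro x hx
      rw [List.mem_toFinset, List.mem_append] at hx
      rcases hx with h | h
      · exact hidsub x (hBWid x h)
      · exact Finset.mem_union_left _ (hMH x h)
  · refine ⟨h2, ?_⟩
    rw [if_neg (by omega), if_neg (by omega)] at he2
    obtain ⟨hlast, hhd⟩ := hk2 h2
    have hBc := opn_chain φ B (fun p hp => he2 p (List.mem_append_left _ hp))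
    have hWc := opn_chain φ W (fun p hp => he2 p
      (List.mem_append_right _ (List.mem_append_left _ hp)))
    have hlst := fun p hp => he2 p
      (List.mem_append_right _ (List.mem_append_right _ hp))
    obtain ⟨hopt', hHH⟩ := exchange hopt hC hC6 hAset hAcard hAsub
    have hBW' := List.nodup_append.1 hBWn
    have hcfg : Cfg G 3 (insert (A.map φ).toFinset (F.erase C)) (B.map φ ++ (M ++ W.map φ)) := by
      refine ⟨hopt', ?_, ?_, ?_, ?_, ?_⟩
      · rw [List.nodup_append]
        refine ⟨hBW'.1, ?_, ?_⟩
        · rw [List.nodup_append]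
          refine ⟨nM, hBW'.2.1, ?_⟩
          intro a ha b hb hab
          subst hab
          exact hMid a ha (hBWid a (List.mem_append_right _ hb))
        · intro a ha b hb hab
          subst hab
          rcases List.mem_append.1 hb with h | h
          · exact hMid a h (hBWid a (List.mem_append_left _ ha))
          · exact hBW'.2.2 a ha a h rfl
      · have hW3 : ∃ W', W = 3 :: W' := by
          rcases W with _ | ⟨b, W⟩
          · simp at hhd
          · simp at hhd; subst hhd; exact ⟨_, rfl⟩
        obtain ⟨W', rfl⟩ := hW3
        have hm2 := List.isChain_cons.1 hmid
        rw [List.isChain_append]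
        refine ⟨hBc, ?_, ?_⟩
        · rw [List.isChain_append]
          refine ⟨hm2.2.left_of_append, hWc, ?_⟩
          intro x hx y hy
          refine (List.isChain_append.1 hm2.2).2.2 x hx y ?_
          simpa using hy
        · intro x hx y hy
          rw [List.getLast?_map, hlast] at hx
          simp at hx
          subst hx
          refine hm2.1 y ?_
          rcases M with _ | ⟨m, M⟩
          · simpa using hy
          · simpa using hy
      · intro x hx
        rw [hHH, Finset.mem_sdiff, List.mem_toFinset]
        rw [List.mem_append, List.mem_append] at hx
        rcases hx with h | h | h
        · exact ⟨hidsub x (hBWid x (List.mem_append_left _ h)), fun hA =>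
            hABd x hA x (List.mem_append_left _ h) rfl⟩
        · exact ⟨Finset.mem_union_left _ (hMH x h), fun hA => hMid x h (hAid x hA)⟩
        · exact ⟨hidsub x (hBWid x (List.mem_append_right _ h)), fun hA =>
            hABd x hA x (List.mem_append_right _ h) rfl⟩
      · simp only [List.length_cons, List.length_append, List.length_map, List.length_nil] at hPe ⊢
        rw [Nat.even_iff] at hPe ⊢
        omega
      · rw [hHH]
        convert hPM using 1
        ext x
        have a1 := (hp.mem_iff (a := x)).trans (hidm x)
        have a2 := hPm x
        have a3 := hCH x
        have a4 := h6H x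
        rw [List.mem_append, List.mem_append] at a1
        simp only [Finset.mem_sdiff, Finset.mem_union, List.mem_toFinset, a2]
        rw [List.mem_append, List.mem_append]
        clear * - a1 a3 a4
        tauto
    rcases (show kd = 2 ∨ kd = 3 by omega) with h | h
    · refine ⟨_, _, hcfg, by simp; omega, ?_⟩
      rw [if_pos h] at hlst
      have := hk22 h
      rcases B with _ | ⟨b0, _ | ⟨b1, _ | ⟨b2, _ | ⟨b3, B⟩⟩⟩⟩
      · simp at this
      · simp at this
      · simp at this
      · simp at this
      · refine ⟨φ b0, φ b1, φ b2, φ b3, _, rfl, ?_⟩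
        simpa using hlst
    · refine ⟨_, _, hcfg.reverse, by simp; omega, ?_⟩
      rw [if_neg (by omega)] at hlst
      have := hk3 h
      rw [List.reverse_append, List.reverse_append, ← List.map_reverse]
      rw [← List.length_reverse] at this
      generalize W.reverse = W' at this hlst
      rcases W' with _ | ⟨b0, _ | ⟨b1, _ | ⟨b2, _ | ⟨b3, B⟩⟩⟩⟩
      · simp at this
      · simp at this
      · simp at this
      · simp at this
      · refine ⟨φ b0, φ b1, φ b2, φ b3, _, rfl, ?_⟩
        simpa using hlst

variable {col : V → Bool} (hcol : ∀ a b, G.Adj a b → col a ≠ col b)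
include hcol

lemma hex {C : Finset V} (hC : CycSet G C) (h6 : C.card = 2 * 3) (b : Bool) :
    ∃ c0 c1 c2 c3 c4 c5, [c0, c1, c2, c3, c4, c5].toFinset = C ∧ G.Adj c0 c1 ∧ G.Adj c1 c2 ∧
      G.Adj c2 c3 ∧ G.Adj c3 c4 ∧ G.Adj c4 c5 ∧ G.Adj c5 c0 ∧ col c0 = b := by
  have h1 := cyc_color hcol hC b
  have h2 : (C.filter (fun x => col x = b)).Nonempty := by
    rw [← Finset.card_pos]; omega
  obtain ⟨x, hx⟩ := h2
  rw [Finset.mem_filter] at hx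
  obtain ⟨t, ht, hte⟩ := cycSet_head hC hx.1
  have hl := ht.card
  rw [hte, h6] at hl
  simp only [List.length_cons] at hl
  match t, hl with
  | [c1, c2, c3, c4, c5], _ =>
    refine ⟨x, c1, c2, c3, c4, c5, hte, ?_⟩
    have h3 := ht.2.2.1
    have h4 := ht.2.2.2 c5 (by simp) x (by simp)
    simp at h3
    exact ⟨h3.1, h3.2.1, h3.2.2.1, h3.2.2.2.1, h3.2.2.2.2, h4, hx.2⟩

lemma fin_app (u : ℕ → V) (PF : List (ℕ × ℕ)) (w : ℕ → ℕ) (cs : List Ct) {C : Finset V}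
    (hC : CycSet G C) (h6 : C.card = 2 * 3) (b : Bool)
    (hu : ∀ i, i < 7 → col (u i) = (if i % 2 = 0 then b else !b))
    (hPF : ∀ p ∈ PF, p.1 < 10 ∧ p.2 < 10 ∧ G.Adj (u p.1) (u p.2))
    (hd : 3 * ∑ i ∈ Finset.range 7, w i ≤ (∑ i ∈ Finset.range 7, w i * dg G (u i) C) + 5)
    (FX : List (ℕ × ℕ))
    (hFX : FX = PF ++ [(10, 11), (11, 12), (12, 13), (13, 14), (14, 15), (15, 10)])
    (hval : cs.all (valid FX w) = true) (hsr : srch (cs.map (need FX)) w 7 [] 5 = true) :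
    ∃ φ : ℕ → V, (∀ i, i < 10 → φ i = u i) ∧ ([10, 11, 12, 13, 14, 15].map φ).toFinset = C ∧
      ∃ c ∈ cs, ∀ p ∈ prs c, G.Adj (φ p.1) (φ p.2) := by
  obtain ⟨c0, c1, c2, c3, c4, c5, hCe, a0, a1, a2, a3, a4, a5, hb⟩ := hex hcol hC h6 b
  have hφ : ∀ i, i < 10 → (fun i => if i < 10 then u i else [c0, c1, c2, c3, c4, c5].getD (i - 10) c0) i
      = u i := by
    intro i hi
    simp [hi]
  refine ⟨fun i => if i < 10 then u i else [c0, c1, c2, c3, c4, c5].getD (i - 10) c0, hφ, hCe, ?_⟩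
  apply fin_main FX w cs (fun i => if i < 10 then u i else [c0, c1, c2, c3, c4, c5].getD (i - 10) c0) C
    ?_ ?_ ?_ ?_ hval hsr
  · intro p hp
    rw [hFX, List.mem_append] at hp
    rcases hp with h | h
    · obtain ⟨h1, h2, h3⟩ := hPF p h
      rw [if_pos h1, if_pos h2]
      exact h3
    · simp only [List.mem_cons, List.not_mem_nil, or_false] at h
      rcases h with rfl | rfl | rfl | rfl | rfl | rfl
      · exact a0
      · exact a1
      · exact a2
      · exact a3
      · exact a4
      · exact a5
  · intro x hx
    rw [← hCe] at hx
    simp only [List.mem_toFinset, List.mem_cons, List.not_mem_nil, or_false] at hx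
    rcases hx with rfl | rfl | rfl | rfl | rfl | rfl
    · exact ⟨0, by norm_num, rfl⟩
    · exact ⟨1, by norm_num, rfl⟩
    · exact ⟨2, by norm_num, rfl⟩
    · exact ⟨3, by norm_num, rfl⟩
    · exact ⟨4, by norm_num, rfl⟩
    · exact ⟨5, by norm_num, rfl⟩
  · intro i j hi hj hadj
    rw [if_pos (show i < 10 by omega)] at hadj
    have h1 := hcol _ _ hadj
    rw [hu i hi] at h1
    have h2 : col ([c0, c1, c2, c3, c4, c5].getD j c0) = (if j % 2 = 0 then b else !b) := by
      have b0 := hcol _ _ a0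
      have b1 := hcol _ _ a1
      have b2 := hcol _ _ a2
      have b3 := hcol _ _ a3
      have b4 := hcol _ _ a4
      rw [hb] at b0
      have e1 : col c1 = !b := by cases h : col c1 <;> cases b <;> simp_all
      rw [e1] at b1
      have e2 : col c2 = b := by cases h : col c2 <;> cases b <;> simp_all
      rw [e2] at b2
      have e3 : col c3 = !b := by cases h : col c3 <;> cases b <;> simp_all
      rw [e3] at b3
      have e4 : col c4 = b := by cases h : col c4 <;> cases b <;> simp_all
      rw [e4] at b4
      have e5 : col c5 = !b := by cases h : col c5 <;> cases b <;> simp_all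
      interval_cases j
      · exact hb
      · exact e1
      · exact e2
      · exact e3
      · exact e4
      · exact e5
    have e : 10 + j - 10 = j := by omega
    simp only [show ¬ (10 + j < 10) by omega, if_false, e] at h1
    rw [h2] at h1
    by_contra hne
    apply h1
    by_cases hi2 : i % 2 = 0
    · rw [if_pos hi2, if_pos (by omega)]
    · rw [if_neg hi2, if_neg (by omega)]
  · refine le_trans hd (Nat.add_le_add_right (le_of_eq (Finset.sum_congr rfl ?_)) _)
    intro i hi
    rw [if_pos (show i < 10 by have := Finset.mem_range.1 hi; omega)]

lemma core {p1 p2 p3 q1 q2 q3 : V} {M : List V} {C : Finset V} (w : ℕ → ℕ) (cs : List Ct)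
    (hP : Cfg G 3 F (p1 :: p2 :: p3 :: (M ++ [q1, q2, q3]))) (hC : C ∈ F) (h6 : C.card = 2 * 3)
    (hd : 3 * (w 0 + w 1 + w 2 + w 3 + w 4 + w 5) ≤ w 0 * dg G p1 C + w 1 * dg G p2 C +
      w 2 * dg G p3 C + w 3 * dg G q1 C + w 4 * dg G q2 C + w 5 * dg G q3 C + 5) (hw : w 6 = 0)
    (hval : cs.all (valid FX6 w) = true) (hsr : srch (cs.map (need FX6)) w 7 [] 5 = true)
    (hshp : ∀ c ∈ cs, shp c = true)
    (hch : ∀ c ∈ cs, c.1 = 1 → c.2.2.1.getLast? = some 0 → ∀ y ∈ (M ++ [q1]).head?, G.Adj p1 y) :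
    ∃ c ∈ cs, 2 ≤ c.1 ∧ ∃ F' P', Cfg G 3 F' P' ∧ P'.length = M.length + 6 ∧ Chord G P' := by
  have hc3 := hP.col_ne hcol (z := q3) (by simp [List.getLast?_append, List.getLast?_cons])
  have hchain := hP.2.2.1
  have hR := hP.reverse.2.2.1
  have e : (p1 :: p2 :: p3 :: (M ++ [q1, q2, q3])).reverse = q3 :: q2 :: q1 ::
    (p1 :: p2 :: p3 :: M).reverse := by simp
  rw [e] at hR
  rw [List.isChain_cons_cons, List.isChain_cons_cons] at hchain hR
  have e1 := hcol _ _ hchain.1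
  have e2 := hcol _ _ hchain.2.1
  have e3 := hcol _ _ hR.1
  have e4 := hcol _ _ hR.2.1
  obtain ⟨φ, hφ, hφC, c, hc, hce⟩ := fin_app hcol (fun i => [p1, p2, p3, q1, q2, q3, p1].getD i p1)
    [(0, 1), (1, 2), (3, 4), (4, 5)] w cs (hP.1.1.1 C hC).1 h6 (col p1) (by
      intro i hi
      have b1 : col p2 = !col p1 := by cases h : col p2 <;> cases h' : col p1 <;> simp_all
      have b2 : col p3 = col p1 := by cases h : col p3 <;> cases h' : col p1 <;> simp_all
      have b3 : col q3 = !col p1 := by cases h : col q3 <;> cases h' : col p1 <;> simp_all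
      have b4 : col q2 = col p1 := by cases h : col q2 <;> cases h' : col p1 <;> simp_all
      have b5 : col q1 = !col p1 := by cases h : col q1 <;> cases h' : col p1 <;> simp_all
      interval_cases i
      · rfl
      · exact b1
      · exact b2
      · exact b5
      · exact b4
      · exact b3
      · rfl) (by
      intro p hp
      simp only [List.mem_cons, List.not_mem_nil, or_false] at hp
      rcases hp with rfl | rfl | rfl | rfl
      · exact ⟨by norm_num, by norm_num, hchain.1⟩
      · exact ⟨by norm_num, by norm_num, hchain.2.1⟩
      · exact ⟨by norm_num, by norm_num, hR.2.1.symm⟩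
      · exact ⟨by norm_num, by norm_num, hR.1.symm⟩) (by
      simp only [Finset.sum_range_succ, Finset.sum_range_zero, hw]
      simpa using hd) FX6 rfl hval hsr
  have f0 : φ 0 = p1 := hφ 0 (by norm_num)
  have f1 : φ 1 = p2 := hφ 1 (by norm_num)
  have f2 : φ 2 = p3 := hφ 2 (by norm_num)
  have f3 : φ 3 = q1 := hφ 3 (by norm_num)
  have f4 : φ 4 = q2 := hφ 4 (by norm_num)
  have f5 : φ 5 = q3 := hφ 5 (by norm_num)
  refine ⟨c, hc, use_cert φ (M := M) ?_ hC h6 hφC (hshp c hc) hce ?_⟩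
  · rw [f0, f1, f2, f3, f4, f5]; exact hP
  · rw [f0, f3]; exact hch c hc

variable (hno : ∀ F, Fam G 3 F → F.card < k) (hdeg : ∀ v, (3 - 1) * k + 1 ≤ dg G v Finset.univ)
include hno hdeg

lemma caseI {p1 p2 p3 q1 q2 q3 : V} {M : List V}
    (hP : MaxCfg G 3 F (p1 :: p2 :: p3 :: (M ++ [q1, q2, q3])))
    (hnc : ∀ F' P', MaxCfg G 3 F' P' → ¬ Chord G P') : False := by
  have hR := hP.reverse
  have e : (p1 :: p2 :: p3 :: (M ++ [q1, q2, q3])).reverse = q3 :: q2 :: q1 ::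
    (p1 :: p2 :: p3 :: M).reverse := by simp
  rw [e] at hR
  have d1 := hP.head_deg hcol (by omega)
  have d2 := semi2 hcol (by omega) hno hdeg hP
  have d3 := hR.head_deg hcol (by omega)
  have d4 := semi2 hcol (by omega) hno hdeg hR
  have hF := hP.1.1
  have g1 := good hF.1 (hno F hF.1) (by omega) (hdeg p1) (j := 0) (by omega)
  have g2 := good hF.1 (hno F hF.1) (by omega) (hdeg p2) (j := 1) (by omega)
  have g3 := good hF.1 (hno F hF.1) (by omega) (hdeg q3) (j := 0) (by omega)
  have g4 := good hF.1 (hno F hF.1) (by omega) (hdeg q2) (j := 1) (by omega)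
  have m1 : p1 ∈ HH F := hP.1.2.2.2.1 p1 (by simp)
  have m2 : p2 ∈ HH F := hP.1.2.2.2.1 p2 (by simp)
  have m3 : q3 ∈ HH F := hP.1.2.2.2.1 q3 (by simp)
  have m4 : q2 ∈ HH F := hP.1.2.2.2.1 q2 (by simp)
  obtain ⟨C, hC, hpos⟩ := exists_pos (F := F)
    (f := fun C => 2 * ex G 3 p1 C + ex G 3 p2 C + 2 * ex G 3 q3 C + ex G 3 q2 C) (by
    rw [Finset.sum_add_distrib, Finset.sum_add_distrib, Finset.sum_add_distrib, ← Finset.mul_sum,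
      ← Finset.mul_sum]
    push_cast at g1 g2 g3 g4
    omega)
  have hCs : C.card = 2 * 3 := by
    by_contra h
    have h1 := ex_nonpos_H hcol hF (by omega) hC h m1
    have h2 := ex_nonpos_H hcol hF (by omega) hC h m2
    have h3 := ex_nonpos_H hcol hF (by omega) hC h m3
    have h4 := ex_nonpos_H hcol hF (by omega) hC h m4
    omega
  unfold ex at hpos
  obtain ⟨hv, hsr, hsh⟩ := chkI
  rw [List.all_eq_true] at hsh
  obtain ⟨c, hc, h2, F', P', hcfg, hlen, hchd⟩ := core hcol wI certsI hP.1 hC hCs (by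
    simp [wI]
    omega) rfl hv hsr (fun c hc => by
      have := hsh c hc
      rw [Bool.and_eq_true] at this
      exact this.1) (fun c hc h1 h2 => by
      have := hsh c hc
      simp [h1, h2] at this)
  refine hnc F' P' ⟨hcfg, ?_⟩ hchd
  intro F'' P'' h
  have := hP.2 F'' P'' h
  simp at this
  omega

lemma caseII {p1 p2 p3 q1 q2 q3 : V} {M : List V}
    (hP : MaxCfg G 3 F (p1 :: p2 :: p3 :: (M ++ [q1, q2, q3])))
    (hch : ∀ y ∈ (M ++ [q1]).head?, G.Adj p1 y) : False := by
  have hR := hP.reverse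
  have e : (p1 :: p2 :: p3 :: (M ++ [q1, q2, q3])).reverse = q3 :: q2 :: q1 ::
    (p1 :: p2 :: p3 :: M).reverse := by simp
  rw [e] at hR
  have hP' : MaxCfg G 3 F (p3 :: p2 :: p1 :: (M ++ [q1, q2, q3])) := by
    have hpm : (p3 :: p2 :: p1 :: (M ++ [q1, q2, q3])).Perm (p1 :: p2 :: p3 :: (M ++ [q1, q2, q3])) := by
      have : ([p3, p2, p1] : List V).Perm [p1, p2, p3] := List.reverse_perm [p1, p2, p3]
      exact this.append_right (M ++ [q1, q2, q3])
    obtain ⟨⟨h1, h2, h3, h4, h5, h6⟩, h7⟩ := hP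
    refine ⟨⟨h1, hpm.nodup_iff.2 h2, ?_, fun x hx => h4 x (hpm.subset hx), h5, ?_⟩, h7⟩
    · rw [List.isChain_cons_cons, List.isChain_cons_cons, List.isChain_cons] at h3 ⊢
      refine ⟨h3.2.1.symm, h3.1.symm, ?_, h3.2.2.2⟩
      intro y hy
      apply hch
      rcases M with _ | ⟨m, M⟩
      · simpa using hy
      · simpa using hy
    · rw [List.toFinset_eq_of_perm _ _ hpm]; exact h6
  have d1 := hP.head_deg hcol (by omega)
  have d2 := hP'.head_deg hcol (by omega)
  have d3 := hR.head_deg hcol (by omega)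
  have d4 := semi2 hcol (by omega) hno hdeg hR
  have d5 := semi3 hcol (by omega) hno hdeg hR
  have hF := hP.1.1
  have g1 := good hF.1 (hno F hF.1) (by omega) (hdeg p1) (j := 0) (by omega)
  have g2 := good hF.1 (hno F hF.1) (by omega) (hdeg p3) (j := 0) (by omega)
  have g3 := good hF.1 (hno F hF.1) (by omega) (hdeg q3) (j := 0) (by omega)
  have g4 := good hF.1 (hno F hF.1) (by omega) (hdeg q2) (j := 1) (by omega)
  have g5 := good hF.1 (hno F hF.1) (by omega) (hdeg q1) (j := 1) (by omega)
  have m1 : p1 ∈ HH F := hP.1.2.2.2.1 p1 (by simp)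
  have m2 : p3 ∈ HH F := hP.1.2.2.2.1 p3 (by simp)
  have m3 : q3 ∈ HH F := hP.1.2.2.2.1 q3 (by simp)
  have m4 : q2 ∈ HH F := hP.1.2.2.2.1 q2 (by simp)
  have m5 : q1 ∈ HH F := hP.1.2.2.2.1 q1 (by simp)
  obtain ⟨C, hC, hpos⟩ := exists_pos (F := F)
    (f := fun C => ex G 3 p1 C + ex G 3 p3 C + 2 * ex G 3 q3 C + ex G 3 q2 C + ex G 3 q1 C) (by
    rw [Finset.sum_add_distrib, Finset.sum_add_distrib, Finset.sum_add_distrib,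
      Finset.sum_add_distrib, ← Finset.mul_sum]
    push_cast at g1 g2 g3 g4 g5
    omega)
  have hCs : C.card = 2 * 3 := by
    by_contra h
    have h1 := ex_nonpos_H hcol hF (by omega) hC h m1
    have h2 := ex_nonpos_H hcol hF (by omega) hC h m2
    have h3 := ex_nonpos_H hcol hF (by omega) hC h m3
    have h4 := ex_nonpos_H hcol hF (by omega) hC h m4
    have h5 := ex_nonpos_H hcol hF (by omega) hC h m5
    omega
  unfold ex at hpos
  obtain ⟨hv, hsr, hsh⟩ := chkII
  rw [List.all_eq_true] at hsh
  obtain ⟨c, hc, h2, -⟩ := core hcol wII certsII hP.1 hC hCs (by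
    simp [wII]
    omega) rfl hv hsr (fun c hc => by
      have := hsh c hc
      rw [Bool.and_eq_true] at this
      exact this.1) (fun _ _ _ _ => hch)
  have := hsh c hc
  rw [Bool.and_eq_true, decide_eq_true_eq] at this
  omega

lemma split6 {P : List V} (h : 6 ≤ P.length) : ∃ p1 p2 p3 M q1 q2 q3,
    P = p1 :: p2 :: p3 :: (M ++ [q1, q2, q3]) := by
  rcases P with _ | ⟨p1, _ | ⟨p2, _ | ⟨p3, R⟩⟩⟩
  · simp at h
  · simp at h
  · simp at h
  rcases List.eq_nil_or_concat R with rfl | ⟨R, q3, rfl⟩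
  · simp at h
  rcases List.eq_nil_or_concat R with rfl | ⟨R, q2, rfl⟩
  · simp at h
  rcases List.eq_nil_or_concat R with rfl | ⟨R, q1, rfl⟩
  · simp at h
  exact ⟨p1, p2, p3, R, q1, q2, q3, by simp⟩

theorem final3 {P : List V} (hP : MaxCfg G 3 F P) (hl : 2 * 3 ≤ P.length) : False := by
  by_cases hnc : ∀ F' P', MaxCfg G 3 F' P' → ¬ Chord G P'
  · obtain ⟨p1, p2, p3, M, q1, q2, q3, rfl⟩ := split6 hcol hno hdeg hl
    exact caseI hcol hno hdeg hP hnc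
  · push Not at hnc
    obtain ⟨F', P', hP', hch⟩ := hnc
    have hl' : 6 ≤ P'.length := le_trans hl (hP'.2 F P hP.1)
    obtain ⟨p1, p2, p3, M, q1, q2, q3, rfl⟩ := split6 hcol hno hdeg hl'
    refine caseII hcol hno hdeg hP' ?_
    obtain ⟨a, b, c, d, l, he, had⟩ := hch
    intro y hy
    rcases M with _ | ⟨m, M⟩ <;> simp at he hy <;> obtain ⟨rfl, rfl, rfl, rfl, -⟩ := he <;> subst hy <;>
      exact had

end three
end Wang
namespace Wang
section step0
variable {V : Type*} [Fintype V] [DecidableEq V] {G : SimpleGraph V} [DecidableRel G.Adj]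
variable {F : Finset (Finset V)} {s k : ℕ}

lemma impD (hF : Opt G s F) {A B C D : Finset V} (hC : C ∈ F) (hD : D ∈ F)
    (hCs : C.card = 2 * s) (hDs : 2 * s < D.card) (hA : CycSet G A) (hB : CycSet G B)
    (hAs : A.card = 2 * s) (hBs : B.card = 2 * s) (hAB : Disjoint A B) (hAsub : A ⊆ D ∪ C)
    (hBsub : B ⊆ D ∪ C) : False := by
  refine imp2 hF hC hCs hA hB hAs hBs.ge hAB ?_
  intro C' hC' hne hle
  have : Disjoint C' (D ∪ C) := by
    rw [Finset.disjoint_union_right]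
    refine ⟨hF.1.2 C' hC' D hD ?_, hF.1.2 C' hC' C hC hne⟩
    rintro rfl
    omega
  exact ⟨this.mono_right hAsub, this.mono_right hBsub⟩

lemma moveD (hF : Opt G s F) (hs : 2 ≤ s) {p : V} {q : List V} {C D : Finset V} (hC : C ∈ F)
    (hD : D ∈ F) (hCs : C.card = 2 * s) (hDs : 2 * s < D.card) (hn : (p :: q).Nodup)
    (hch : (p :: q).IsChain G.Adj) (hsub : ∀ x ∈ p :: q, x ∈ D) (hl : q.length + 1 = 2 * s)
    {x : V} (hx : x ∈ C) (hcyc : CycSet G (insert p (C.erase x))) (h1 : ∀ y ∈ q.head?, G.Adj y x)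
    (h2 : ∀ y ∈ q.getLast?, G.Adj y x) : False := by
  have hCD : Disjoint C D := hF.1.2 C hC D hD (by rintro rfl; omega)
  have hxD : x ∉ D := fun h => Finset.disjoint_left.1 hCD hx h
  have hpD : p ∈ D := hsub p (by simp)
  have hpC : p ∉ C := fun h => Finset.disjoint_left.1 hCD h hpD
  have hxq : x ∉ q := fun h => hxD (hsub x (List.mem_cons_of_mem _ h))
  rw [List.nodup_cons] at hn
  have hB : IsCyc G (x :: q) := by
    refine ⟨by rw [List.nodup_cons]; exact ⟨hxq, hn.2⟩, by simp; omega, ?_, ?_⟩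
    · rw [List.isChain_cons]
      exact ⟨fun y hy => (h1 y hy).symm, (List.isChain_cons.1 hch).2⟩
    · intro a ha b hb
      simp at hb
      subst hb
      rcases q with _ | ⟨c, q⟩
      · simp at hl; omega
      · rw [List.getLast?_cons_cons] at ha
        exact h2 a ha
  have hpx : p ≠ x := fun h => hxD (h ▸ hpD)
  refine impD hF hC hD hCs hDs hcyc ⟨_, hB, rfl⟩ ?_ ?_ ?_ ?_ ?_
  · rw [Finset.card_insert_of_notMem (fun h => hpC (Finset.mem_of_mem_erase h)),
      Finset.card_erase_of_mem hx]
    omega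
  · rw [hB.card]; simpa using hl
  · rw [Finset.disjoint_left]
    intro y hy hy'
    rw [List.mem_toFinset, List.mem_cons] at hy'
    rw [Finset.mem_insert, Finset.mem_erase] at hy
    rcases hy with rfl | ⟨h, h'⟩
    · rcases hy' with h | h
      · exact hpx h
      · exact hn.1 h
    · rcases hy' with h'' | h''
      · exact h h''
      · exact Finset.disjoint_left.1 hCD h' (hsub y (List.mem_cons_of_mem _ h''))
  · intro y hy
    rw [Finset.mem_insert, Finset.mem_erase] at hy
    rw [Finset.mem_union]
    rcases hy with rfl | h
    · exact Or.inl hpD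
    · exact Or.inr h.2
  · intro y hy
    rw [List.mem_toFinset, List.mem_cons] at hy
    rw [Finset.mem_union]
    rcases hy with rfl | h
    · exact Or.inr hx
    · exact Or.inl (hsub y (List.mem_cons_of_mem _ h))

variable {col : V → Bool} (hcol : ∀ a b, G.Adj a b → col a ≠ col b)
include hcol

lemma card_color (hF : Fam G s F) (c : Bool) :
    2 * (Finset.univ.filter (fun x => col x = c)).card =
      2 * ((HH F).filter (fun x => col x = c)).card + ∑ C ∈ F, C.card := by
  have h1 : Finset.univ.filter (fun x => col x = c) = (HH F).filter (fun x => col x = c) ∪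
      (F.biUnion id).filter (fun x => col x = c) := by
    rw [← Finset.filter_union]
    congr 1
    unfold HH
    simp
  have h2 : Disjoint ((HH F).filter (fun x => col x = c))
      ((F.biUnion id).filter (fun x => col x = c)) :=
    Finset.disjoint_filter_filter Finset.sdiff_disjoint
  rw [h1, Finset.card_union_of_disjoint h2, mul_add]
  congr 1
  rw [Finset.filter_biUnion, Finset.card_biUnion, Finset.mul_sum]
  · apply Finset.sum_congr rfl
    intro C hC
    exact cyc_color hcol (hF.1 C hC).1 c
  · intro C hC D hD hne
    exact Finset.disjoint_filter_filter (hF.2 C hC D hD hne)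

lemma ex_nonpos_D (hF : Opt G s F) (hs : 2 ≤ s) {C D : Finset V} (hD : D ∈ F)
    (hmax : ∀ E ∈ F, E.card ≤ D.card) (hC : C ∈ F.erase D) (hCs : C.card ≠ 2 * s) {v : V}
    (hv : v ∈ D) : ex G s v C ≤ 0 := by
  rw [Finset.mem_erase] at hC
  have hCD := hF.1.2 C hC.2 D hD hC.1
  refine ex_nonpos hcol hF hs hC.2 hCs (fun h => Finset.disjoint_left.1 hCD h hv) ?_
  intro E hE hvE
  by_cases h : E = D
  · rw [h]; exact hmax C hC.2
  · exact absurd hv (Finset.disjoint_left.1 (hF.1.2 E hE D hD h) hvE)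

variable (hs : 3 ≤ s) (hno : ∀ F, Fam G s F → F.card < k)
  (hdeg : ∀ v, (s - 1) * k + 1 ≤ dg G v Finset.univ)
include hs hno hdeg

lemma sum_D (hF : Opt G s F) {D : Finset V} (hD : D ∈ F) (hDs : 2 * s < D.card)
    (hH : ∀ c, ((HH F).filter (fun x => col x = c)).card + 1 ≤ s) {v : V} (hv : v ∈ D) :
    1 ≤ ∑ C ∈ F.erase D, ex G s v C := by
  have hDc := (hF.1.1 D hD).1
  have heven := cyc_color hcol hDc true
  have h1 : dg G v D + 1 ≤ s := by
    by_contra hcon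
    obtain ⟨C, c1, c2, c3, c4⟩ := shorter_in hcol hs hDc (by omega) hv (by omega)
    obtain ⟨E, hE, hEc, hEd⟩ := star hF c1 c3
    apply hEd
    refine (hF.1.2 E hE D hD ?_).mono_right c2
    rintro rfl
    omega
  have h2 : dg G v (HH F) + 1 ≤ s := by
    have := Finset.card_le_card (nbr_sub hcol v (HH F))
    have := hH (!(col v))
    unfold dg
    omega
  have h3 : dg G v Finset.univ = dg G v (HH F) + dg G v (F.biUnion id) := by
    rw [← dg_union]
    · congr 1
      unfold HH
      simp
    · exact Finset.sdiff_disjoint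
  have h4 := sum_ex (G := G) (s := s) hF.1.2 v
  rw [← Finset.add_sum_erase F _ hD] at h4
  have h5 := hdeg v
  have h6 := hno F hF.1
  have h7 : F.card ≤ k - 1 := by omega
  obtain ⟨s', rfl⟩ : ∃ s', s = s' + 1 := ⟨s - 1, by omega⟩
  obtain ⟨j, rfl⟩ : ∃ j, k = F.card + 1 + j := ⟨k - 1 - F.card, by omega⟩
  unfold ex at h4 ⊢
  rw [Nat.add_sub_cancel] at h5
  zify at h1 h2 h3 h5
  push_cast at h4 ⊢
  nlinarith [mul_nonneg (Int.natCast_nonneg s') (Int.natCast_nonneg j)]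

lemma long4 (h4 : 4 ≤ s) (hF : Opt G s F) {D : Finset V} (hD : D ∈ F) (hDs : 2 * s < D.card)
    (hmax : ∀ E ∈ F, E.card ≤ D.card)
    (hH : ∀ c, ((HH F).filter (fun x => col x = c)).card + 1 ≤ s) : False := by
  obtain ⟨l, hl, rfl⟩ := (hF.1.1 D hD).1
  have hlen := hl.card
  have hL1 : (l.take (2 * s)).length = 2 * s := by rw [List.length_take]; omega
  have hLn : (l.take (2 * s)).Nodup := hl.1.sublist (List.take_sublist _ _)
  have hLc : (l.take (2 * s)).IsChain G.Adj := hl.2.2.1.take _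
  have hLD : ∀ x ∈ l.take (2 * s), x ∈ l.toFinset := fun x hx =>
    List.mem_toFinset.2 (List.mem_of_mem_take hx)
  generalize l.take (2 * s) = P at hL1 hLn hLc hLD
  generalize l.toFinset = D at *
  clear hl hlen
  rcases P with _ | ⟨p1, _ | ⟨p2, q⟩⟩
  · simp at hL1; omega
  · simp at hL1; omega
  rcases List.eq_nil_or_concat q with rfl | ⟨q, z1, rfl⟩
  · simp at hL1; omega
  rcases List.eq_nil_or_concat q with rfl | ⟨q, z2, rfl⟩
  · simp at hL1; omega
  have e : (p1 :: p2 :: (q.concat z2).concat z1).reverse =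
    z1 :: z2 :: (p1 :: p2 :: q).reverse := by simp
  have hRn := List.nodup_reverse.2 hLn
  have hRc := chain_reverse hLc
  have hRD : ∀ x ∈ (p1 :: p2 :: (q.concat z2).concat z1).reverse, x ∈ D :=
    fun x hx => hLD x (List.mem_reverse.1 hx)
  rw [e] at hRn hRc hRD
  have m1 : p1 ∈ D := hLD p1 (by simp)
  have m2 : p2 ∈ D := hLD p2 (by simp)
  have m3 : z1 ∈ D := hLD z1 (by simp)
  have m4 : z2 ∈ D := hLD z2 (by simp)
  have g1 := sum_D hcol hs hno hdeg hF hD hDs hH m1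
  have g2 := sum_D hcol hs hno hdeg hF hD hDs hH m2
  have g3 := sum_D hcol hs hno hdeg hF hD hDs hH m3
  have g4 := sum_D hcol hs hno hdeg hF hD hDs hH m4
  obtain ⟨C, hC, hpos⟩ := exists_pos (F := F.erase D)
    (f := fun C => 3 * ex G s p1 C + ex G s p2 C + 3 * ex G s z1 C + ex G s z2 C) (by
    rw [Finset.sum_add_distrib, Finset.sum_add_distrib, Finset.sum_add_distrib, ← Finset.mul_sum,
      ← Finset.mul_sum]
    omega)
  have hCs : C.card = 2 * s := by
    by_contra h
    have h1 := ex_nonpos_D hcol hF (by omega) hD hmax hC h m1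
    have h2 := ex_nonpos_D hcol hF (by omega) hD hmax hC h m2
    have h3 := ex_nonpos_D hcol hF (by omega) hD hmax hC h m3
    have h4 := ex_nonpos_D hcol hF (by omega) hD hmax hC h m4
    omega
  have hC' := (Finset.mem_erase.1 hC).2
  have hCc := (hF.1.1 C hC').1
  have hCD := hF.1.2 C hC' D hD (Finset.mem_erase.1 hC).1
  have hnC : ∀ v ∈ D, v ∉ C := fun v hv h => Finset.disjoint_left.1 hCD h hv
  unfold ex at hpos
  have c1 : col p1 ≠ col z1 := by
    have h1 := col_last hcol _ p1 hLc z1 (by simp [List.getLast?_cons])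
    intro h
    have := h1.1 h.symm
    simp only [List.length_cons] at hL1
    rw [Nat.even_iff] at this
    simp only [List.length_cons] at this
    omega
  have hch := List.isChain_cons_cons.1 hLc
  have hch' := List.isChain_cons_cons.1 hRc
  have c2 := hcol _ _ hch.1
  have c3 := hcol _ _ hch'.1
  by_cases hA : 3 * s < dg G p2 C + dg G z1 C + 2 * dg G p1 C
  · obtain ⟨x, hx, h1, h2, h3⟩ := pick2 hcol hCc hCs (hnC _ m1) c2 c1 hA
    exact moveD hF (by omega) hC' hD hCs hDs hLn hLc hLD (by simpa using hL1) hx h3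
      (by simpa using h1) (by simpa [glc2] using h2)
  · obtain ⟨x, hx, h1, h2, h3⟩ := pick2 hcol hCc hCs (hnC _ m3) c3 c1.symm
      (show 3 * s < dg G z2 C + dg G p1 C + 2 * dg G z1 C by omega)
    exact moveD hF (by omega) hC' hD hCs hDs hRn hRc hRD (by simp at hL1 ⊢; omega) hx h3
      (by simpa using h1) (by simpa [glc2] using h2)

end step0
end Wang
namespace Wang
section step0b
variable {V : Type*} [Fintype V] [DecidableEq V] {G : SimpleGraph V} [DecidableRel G.Adj]
variable {F : Finset (Finset V)} {s k : ℕ}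
variable {col : V → Bool} (hcol : ∀ a b, G.Adj a b → col a ≠ col b)
include hcol

lemma long3 (hno : ∀ F, Fam G 3 F → F.card < k)
    (hdeg : ∀ v, (3 - 1) * k + 1 ≤ dg G v Finset.univ)
    (hF : Opt G 3 F) {D : Finset V} (hD : D ∈ F) (hDs : 2 * 3 < D.card)
    (hmax : ∀ E ∈ F, E.card ≤ D.card)
    (hH : ∀ c, ((HH F).filter (fun x => col x = c)).card + 1 ≤ 3) : False := by
  obtain ⟨l, hl, rfl⟩ := (hF.1.1 D hD).1
  have hlen := hl.card
  have hL1 : (l.take 7).length = 7 := by rw [List.length_take]; omega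
  have hLn : (l.take 7).Nodup := hl.1.sublist (List.take_sublist _ _)
  have hLc : (l.take 7).IsChain G.Adj := hl.2.2.1.take _
  have hLD : ∀ x ∈ l.take 7, x ∈ l.toFinset := fun x hx =>
    List.mem_toFinset.2 (List.mem_of_mem_take hx)
  generalize l.take 7 = P at hL1 hLn hLc hLD
  generalize l.toFinset = D at *
  clear hl hlen
  match P, hL1 with
  | [p0, p1, p2, p3, p4, p5, p6], _ =>
  have m0 : p0 ∈ D := hLD p0 (by simp)
  have m1 : p1 ∈ D := hLD p1 (by simp)
  have m2 : p2 ∈ D := hLD p2 (by simp)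
  have m3 : p3 ∈ D := hLD p3 (by simp)
  have m5 : p5 ∈ D := hLD p5 (by simp)
  have m6 : p6 ∈ D := hLD p6 (by simp)
  have g0 := sum_D hcol (by norm_num) hno hdeg hF hD hDs hH m0
  have g1 := sum_D hcol (by norm_num) hno hdeg hF hD hDs hH m1
  have g2 := sum_D hcol (by norm_num) hno hdeg hF hD hDs hH m2
  have g3 := sum_D hcol (by norm_num) hno hdeg hF hD hDs hH m3
  have g5 := sum_D hcol (by norm_num) hno hdeg hF hD hDs hH m5
  have g6 := sum_D hcol (by norm_num) hno hdeg hF hD hDs hH m6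
  obtain ⟨C, hC, hpos⟩ := exists_pos (F := F.erase D)
    (f := fun C => ex G 3 p0 C + ex G 3 p1 C + ex G 3 p2 C + ex G 3 p3 C + ex G 3 p5 C
      + ex G 3 p6 C) (by
    simp only [Finset.sum_add_distrib]
    omega)
  have hCs : C.card = 2 * 3 := by
    by_contra h
    have h0 := ex_nonpos_D hcol hF (by omega) hD hmax hC h m0
    have h1 := ex_nonpos_D hcol hF (by omega) hD hmax hC h m1
    have h2 := ex_nonpos_D hcol hF (by omega) hD hmax hC h m2
    have h3 := ex_nonpos_D hcol hF (by omega) hD hmax hC h m3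
    have h5 := ex_nonpos_D hcol hF (by omega) hD hmax hC h m5
    have h6 := ex_nonpos_D hcol hF (by omega) hD hmax hC h m6
    omega
  have hC' := (Finset.mem_erase.1 hC).2
  have hCc := (hF.1.1 C hC').1
  have hCD := hF.1.2 C hC' D hD (Finset.mem_erase.1 hC).1
  have hnC : ∀ v ∈ D, v ∉ C := fun v hv h => Finset.disjoint_left.1 hCD h hv
  unfold ex at hpos
  have hc := hLc
  simp only [List.isChain_cons_cons, List.isChain_singleton, and_true] at hc
  obtain ⟨a0, a1, a2, a3, a4, a5⟩ := hc
  obtain ⟨hv, hsr, hsh⟩ := chkL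
  rw [List.all_eq_true] at hsh
  obtain ⟨φ, hφ, hφC, c, hc, hce⟩ := fin_app hcol
    (fun i => [p0, p1, p2, p3, p4, p5, p6].getD i p0)
    [(0, 1), (1, 2), (2, 3), (3, 4), (4, 5), (5, 6)] wL certsL0 hCc hCs (col p0) (by
      intro i hi
      have b0 := hcol _ _ a0
      have b1 := hcol _ _ a1
      have b2 := hcol _ _ a2
      have b3 := hcol _ _ a3
      have b4 := hcol _ _ a4
      have b5 := hcol _ _ a5
      have e1 : col p1 = !col p0 := by cases h : col p1 <;> cases h' : col p0 <;> simp_all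
      rw [e1] at b1
      have e2 : col p2 = col p0 := by cases h : col p2 <;> cases h' : col p0 <;> simp_all
      rw [e2] at b2
      have e3 : col p3 = !col p0 := by cases h : col p3 <;> cases h' : col p0 <;> simp_all
      rw [e3] at b3
      have e4 : col p4 = col p0 := by cases h : col p4 <;> cases h' : col p0 <;> simp_all
      rw [e4] at b4
      have e5 : col p5 = !col p0 := by cases h : col p5 <;> cases h' : col p0 <;> simp_all
      rw [e5] at b5
      have e6 : col p6 = col p0 := by cases h : col p6 <;> cases h' : col p0 <;> simp_all
      interval_cases i
      · rfl
      · exact e1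
      · exact e2
      · exact e3
      · exact e4
      · exact e5
      · exact e6) (by
      intro p hp
      simp only [List.mem_cons, List.not_mem_nil, or_false] at hp
      rcases hp with rfl | rfl | rfl | rfl | rfl | rfl
      · exact ⟨by norm_num, by norm_num, a0⟩
      · exact ⟨by norm_num, by norm_num, a1⟩
      · exact ⟨by norm_num, by norm_num, a2⟩
      · exact ⟨by norm_num, by norm_num, a3⟩
      · exact ⟨by norm_num, by norm_num, a4⟩
      · exact ⟨by norm_num, by norm_num, a5⟩) (by
      simp only [Finset.sum_range_succ, Finset.sum_range_zero, wL]
      simp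
      omega) FX7 rfl hv hsr
  have hshc := hsh c hc
  obtain ⟨kd, A, B, W⟩ := c
  simp only [shpL, Bool.and_eq_true, decide_eq_true_eq, List.all_eq_true,
    List.contains_iff_mem] at hshc
  obtain ⟨⟨⟨⟨h0, hA⟩, hB⟩, hids⟩, hnd⟩ := hshc
  subst h0
  have hCn : ([10, 11, 12, 13, 14, 15].map φ).Nodup := by
    rw [← Multiset.coe_nodup, ← Multiset.toFinset_card_eq_card_iff_nodup]
    have hCe := hφC
    rw [← List.toFinset_coe] at hCe
    rw [hCe, hCs]; simp
  have hup : [0, 1, 2, 3, 4, 5, 6].map φ = [p0, p1, p2, p3, p4, p5, p6] := by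
    simp only [List.map_cons, List.map_nil]
    rw [hφ 0 (by norm_num), hφ 1 (by norm_num), hφ 2 (by norm_num), hφ 3 (by norm_num),
      hφ 4 (by norm_num), hφ 5 (by norm_num), hφ 6 (by norm_num)]
    rfl
  have hidm : ∀ x ∈ [0, 1, 2, 3, 4, 5, 6, 10, 11, 12, 13, 14, 15].map φ, x ∈ D ∪ C := by
    intro x hx
    have e : [0, 1, 2, 3, 4, 5, 6, 10, 11, 12, 13, 14, 15].map φ =
      [0, 1, 2, 3, 4, 5, 6].map φ ++ [10, 11, 12, 13, 14, 15].map φ := rfl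
    rw [e, hup, List.mem_append] at hx
    rw [Finset.mem_union]
    rcases hx with h | h
    · exact Or.inl (hLD x h)
    · right; rw [← hφC]; exact List.mem_toFinset.2 h
  have hidn : ([0, 1, 2, 3, 4, 5, 6, 10, 11, 12, 13, 14, 15].map φ).Nodup := by
    have e : [0, 1, 2, 3, 4, 5, 6, 10, 11, 12, 13, 14, 15].map φ =
      [0, 1, 2, 3, 4, 5, 6].map φ ++ [10, 11, 12, 13, 14, 15].map φ := rfl
    rw [e, hup, List.nodup_append]
    refine ⟨hLn, hCn, ?_⟩
    intro a ha b hb hab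
    subst hab
    refine hnC a (hLD a ha) ?_
    rw [← hφC]
    exact List.mem_toFinset.2 hb
  have hinj := List.inj_on_of_nodup_map hidn
  have hABn : ((A ++ B).map φ).Nodup :=
    hnd.map_on (fun x hx y hy h => hinj (hids x hx) (hids y hy) h)
  rw [List.map_append, List.nodup_append] at hABn
  have hAc := cls_cyc φ A hABn.1 (by omega) (fun p hp => hce p (by
    unfold prs; exact List.mem_append_left _ hp))
  have hBc := cls_cyc φ B hABn.2.1 (by omega) (fun p hp => hce p (by
    unfold prs; exact List.mem_append_right _ hp))
  refine impD hF hC' hD hCs hDs ⟨_, hAc, rfl⟩ ⟨_, hBc, rfl⟩ (by rw [hAc.card, List.length_map, hA])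
    (by rw [hBc.card, List.length_map, hB]) ?_ ?_ ?_
  · rw [Finset.disjoint_left]
    intro x hx hx'
    exact hABn.2.2 x (List.mem_toFinset.1 hx) x (List.mem_toFinset.1 hx') rfl
  · intro x hx
    obtain ⟨i, hi, rfl⟩ := List.mem_map.1 (List.mem_toFinset.1 hx)
    exact hidm _ (List.mem_map_of_mem (hids i (List.mem_append_left _ hi)))
  · intro x hx
    obtain ⟨i, hi, rfl⟩ := List.mem_map.1 (List.mem_toFinset.1 hx)
    exact hidm _ (List.mem_map_of_mem (hids i (List.mem_append_right _ hi)))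

variable (hs : 3 ≤ s) (hno : ∀ F, Fam G s F → F.card < k)
  (hdeg : ∀ v, (s - 1) * k + 1 ≤ dg G v Finset.univ)
include hs hno hdeg

lemma step0 (hbig : ∀ c, s * k ≤ (Finset.univ.filter (fun x => col x = c)).card)
    (hbal : ∀ F, Opt G s F → ((HH F).filter (fun x => col x = true)).card =
      ((HH F).filter (fun x => col x = false)).card)
    (hF : Opt G s F) : 2 * s ≤ (HH F).card := by
  have hsum : (HH F).card = ((HH F).filter (fun x => col x = true)).card +
      ((HH F).filter (fun x => col x = false)).card := by
    have := Finset.card_filter_add_card_filter_not (s := HH F) (fun x => col x = true)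
    simp only [Bool.not_eq_true] at this
    omega
  have hb := hbal F hF
  by_contra hcon
  by_cases hall : ∀ C ∈ F, C.card = 2 * s
  · have h1 := card_color hcol hF.1 true
    rw [Finset.sum_congr rfl hall, Finset.sum_const, smul_eq_mul] at h1
    have h2 := hbig true
    have h3 := hno F hF.1
    obtain ⟨j, rfl⟩ : ∃ j, k = F.card + 1 + j := ⟨k - 1 - F.card, by omega⟩
    nlinarith [Nat.zero_le (s * j)]
  · push Not at hall
    obtain ⟨E, hE, hEs⟩ := hall
    obtain ⟨D, hD, hmax⟩ := Finset.exists_max_image F Finset.card ⟨E, hE⟩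
    have hDs : 2 * s < D.card := by
      have := (hF.1.1 E hE).2
      have := hmax E hE
      omega
    have hH : ∀ c, ((HH F).filter (fun x => col x = c)).card + 1 ≤ s := by
      intro c
      cases c <;> omega
    by_cases h4 : 4 ≤ s
    · exact long4 hcol hs hno hdeg h4 hF hD hDs hmax hH
    · obtain rfl : s = 3 := by omega
      exact long3 hcol hno hdeg hF hD hDs hmax hH

theorem contra (hbig : ∀ c, s * k ≤ (Finset.univ.filter (fun x => col x = c)).card)
    (heq : (Finset.univ.filter (fun x => col x = true)).card =
      (Finset.univ.filter (fun x => col x = false)).card) : False := by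
  have hbal : ∀ F, Opt G s F → ((HH F).filter (fun x => col x = true)).card =
      ((HH F).filter (fun x => col x = false)).card := by
    intro F hF
    have h1 := card_color hcol hF.1 true
    have h2 := card_color hcol hF.1 false
    omega
  obtain ⟨F0, hF0, hpm⟩ := step1 hcol hs hno hdeg hbal
  obtain ⟨⟨F, P⟩, hP, hmax⟩ := exists_max
    (fun p : Finset (Finset V) × List V => Cfg G s p.1 p.2) (fun p => p.2.length) (Fintype.card V)
    (fun p hp => hp.2.1.length_le_card)
    ⟨(F0, []), hF0, by simp, by simp, by simp, by simp, by simpa using hpm⟩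
  have hM : MaxCfg G s F P := ⟨hP, fun F' P' h => hmax (F', P') h⟩
  have hl := step3 hcol hs hno hdeg hM (step0 hcol hs hno hdeg hbig hbal hM.1.1)
  by_cases h4 : 4 ≤ s
  · exact final4 hcol hs hno hdeg h4 hM hl
  · obtain rfl : s = 3 := by omega
    exact final3 hcol hno hdeg hM hl

end step0b
end Wang

/-- Wang's theorem. Let s ≥ 3, k ≥ 1. Let G be a bipartite graph with
bipartition (X,Y), |X| = |Y| ≥ s·k. If δ(G) ≥ (s−1)k + 1, then G contains k
vertex-disjoint cycles, each of length at least 2s. -/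
theorem wang_disjoint_cycles {V : Type*} [Fintype V] [DecidableEq V]
    (G : SimpleGraph V) [DecidableRel G.Adj]
    (X Y : Finset V) (hdisj : Disjoint X Y) (hcover : X ∪ Y = Finset.univ)
    (hbip : ∀ a b, G.Adj a b → (a ∈ X ∧ b ∈ Y) ∨ (a ∈ Y ∧ b ∈ X))
    (s k : ℕ) (hs : 3 ≤ s) (hk : 1 ≤ k)
    (hcard : X.card = Y.card) (hbig : s * k ≤ X.card)
    (hdeg : (s - 1) * k + 1 ≤ G.minDegree) :
    ∃ (f : Fin k → V) (c : ∀ i, G.Walk (f i) (f i)),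
      (∀ i, (c i).IsCycle) ∧ (∀ i, 2 * s ≤ (c i).length) ∧
      (∀ i j, i ≠ j → ∀ w, w ∈ (c i).support → w ∉ (c j).support) := by
  by_contra hcon
  have hX : ∀ v, v ∉ X → v ∈ Y := by
    intro v hv
    have : v ∈ X ∪ Y := by rw [hcover]; exact Finset.mem_univ v
    exact (Finset.mem_union.1 this).resolve_left hv
  have hXY : ∀ v, v ∈ Y → v ∉ X := fun v hv hv' => Finset.disjoint_left.1 hdisj hv' hv
  have hcol : ∀ a b, G.Adj a b → decide (a ∈ X) ≠ decide (b ∈ X) := by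
    intro a b hab h
    have h' : a ∈ X ↔ b ∈ X := by simpa using h
    rcases hbip a b hab with ⟨h1, h2⟩ | ⟨h1, h2⟩
    · exact hXY b h2 (h'.1 h1)
    · exact hXY a h1 (h'.2 h2)
  have hno : ∀ F, Wang.Fam G s F → F.card < k := by
    intro F hF
    by_contra hlt
    apply hcon
    have hle : Fintype.card (Fin k) ≤ Fintype.card F := by
      rw [Fintype.card_fin, Fintype.card_coe]; omega
    obtain ⟨g⟩ := Function.Embedding.nonempty_of_card_le hle
    choose f c h1 h2 h3 using fun i => Wang.cycSet_walk (hF.1 (g i).1 (g i).2).1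
    refine ⟨f, c, h1, ?_, ?_⟩
    · intro i
      rw [h2]
      exact (hF.1 (g i).1 (g i).2).2
    · intro i j hij w hw hw'
      have hd := hF.2 (g i).1 (g i).2 (g j).1 (g j).2
        (fun h => hij (g.injective (Subtype.ext h)))
      exact Finset.disjoint_left.1 hd (h3 i w hw) (h3 j w hw')
  have hdegv : ∀ v, (s - 1) * k + 1 ≤ Wang.dg G v Finset.univ := by
    intro v
    refine le_trans hdeg (le_trans (G.minDegree_le_degree v) (le_of_eq ?_))
    unfold Wang.dg
    rw [← SimpleGraph.card_neighborFinset_eq_degree]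
    congr 1
    ext x
    simp
  have hXt : Finset.univ.filter (fun x => decide (x ∈ X) = true) = X := by
    ext x
    simp
  have hYf : Finset.univ.filter (fun x => decide (x ∈ X) = false) = Y := by
    ext x
    simp only [Finset.mem_filter, Finset.mem_univ, true_and, decide_eq_false_iff_not]
    exact ⟨hX x, hXY x⟩
  refine Wang.contra (col := fun v => decide (v ∈ X)) hcol hs hno hdegv ?_ ?_
  · intro c
    cases c
    · rw [hYf, ← hcard]; exact hbig
    · rw [hXt]; exact hbig
  · rw [hXt, hYf, hcard]
end

section
/- Let G₂ be a bipartite graph with Hamilton path P = u₁u₂⋯u_s, u₁ ∈ X, and suppose G₂ contains no cycle of length at least 2t (t ≥ 3). Let C be an even cycle of length 2m ≥ 6 in a graph G with V(C) ∩ V(G₂) = ∅, and suppose u₁ is adjacent (in G) to all m vertices of V(C) ∩ Y except possibly none, i.e., d(u₁, C) = m. Let x* ∈ V(C) ∩ X be a vertex such that u_s is adjacent to all vertices of (V(C) ∩ X) \ {x*}; note then u₁x* ∉ E(G) is not required, but x* is not adjacent to u₁ since u₁ ∈ X. If x* has at least t neighbors on P, then G[V(P) ∪ V(C)] contains two vertex-disjoint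 cycles: one of length at least 2t contained in (V(P) ∪ {x*}) \ {u₁}, and one of length exactly 2m on (V(C) ∪ {u₁}) \ {x*}. -/
open SimpleGraph in
lemma exch_close {V : Type*} {G : SimpleGraph V} {a b v : V} (q : G.Walk a b) (hq : q.IsPath)
    (hl : 1 ≤ q.length) (hv : v ∉ q.support) (ha : G.Adj v a) (hb : G.Adj b v) :
    (Walk.cons ha (q.concat hb)).IsCycle := by
  rw [Walk.cons_isCycle_iff]
  refine ⟨hq.concat hv hb, ?_⟩
  rw [Walk.edges_concat]
  intro h
  rw [List.concat_eq_append, List.mem_append] at h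
  rcases h with h | h
  · exact hv (q.fst_mem_support_of_mem_edges h)
  · have hab : a = b := by
      have h' := List.mem_singleton.1 h
      rw [Sym2.eq_iff] at h'
      rcases h' with ⟨h1, h2⟩ | ⟨h1, h2⟩
      · exact h2.trans h1
      · exact h2
    subst hab
    have := (Walk.isPath_iff_nil.1 hq)
    rw [← Walk.length_eq_zero_iff] at this
    omega

open SimpleGraph in
lemma exch_parity {V : Type*} {G : SimpleGraph V} {X Y : Finset V} (hdisj : Disjoint X Y)
    (hbip : ∀ a b, G.Adj a b → (a ∈ X ∧ b ∈ Y) ∨ (a ∈ Y ∧ b ∈ X))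
    {a b : V} (p : G.Walk a b) (i j : ℕ) (h : i + j ≤ p.length) (hi : p.getVert i ∈ Y) :
    (j % 2 = 0 → p.getVert (i + j) ∈ Y) ∧ (j % 2 = 1 → p.getVert (i + j) ∈ X) := by
  induction j with
  | zero => exact ⟨fun _ => hi, fun h => by omega⟩
  | succ j ih =>
    have ih := ih (by omega)
    have hadj := hbip _ _ (p.adj_getVert_succ (i := i + j) (by omega))
    rw [Finset.disjoint_left] at hdisj
    rw [← add_assoc]
    constructor
    · intro hj
      have := hdisj (ih.2 (by omega))
      tauto
    · intro hj
      have h1 := ih.1 (by omega)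
      have : p.getVert (i + j) ∉ X := fun h => hdisj h h1
      tauto

open SimpleGraph in
lemma exch_subpath {V : Type*} [DecidableEq V]
    (G : SimpleGraph V) [DecidableRel G.Adj]
    (X Y : Finset V) (hdisj : Disjoint X Y)
    (hbip : ∀ a b, G.Adj a b → (a ∈ X ∧ b ∈ Y) ∨ (a ∈ Y ∧ b ∈ X))
    (t : ℕ) (ht : 2 ≤ t) {a b : V} (p : G.Walk a b) (hp : p.IsPath) (x : V) (hx : x ∈ X)
    (hxP : t ≤ (p.support.toFinset.filter (fun w => G.Adj x w)).card) :
    ∃ (a' b' : V) (q : G.Walk a' b'), q.IsPath ∧ q.support ⊆ p.support ∧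
      2 * (t - 1) ≤ q.length ∧ G.Adj x a' ∧ G.Adj b' x := by
  set S := (Finset.range (p.length + 1)).filter (fun i => G.Adj x (p.getVert i)) with hS
  have hcard : t ≤ S.card := by
    refine hxP.trans ?_
    refine le_trans (Finset.card_le_card ?_) (Finset.card_image_le (s := S) (f := p.getVert))
    intro w hw
    simp only [Finset.mem_filter, List.mem_toFinset] at hw
    obtain ⟨n, hn, hnl⟩ := Walk.mem_support_iff_exists_getVert.1 hw.1
    refine Finset.mem_image.2 ⟨n, ?_, hn⟩
    simp only [hS, Finset.mem_filter, Finset.mem_range]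
    exact ⟨by omega, hn ▸ hw.2⟩
  have hne : S.Nonempty := Finset.card_pos.1 (by omega)
  have hY : ∀ i ∈ S, i ≤ p.length ∧ G.Adj x (p.getVert i) ∧ p.getVert i ∈ Y := by
    intro i hi
    simp only [hS, Finset.mem_filter, Finset.mem_range] at hi
    refine ⟨by omega, hi.2, ?_⟩
    have := hbip _ _ hi.2
    have := Finset.disjoint_left.1 hdisj hx
    tauto
  obtain ⟨i0, hi0, hmin⟩ : ∃ i0 ∈ S, ∀ i ∈ S, i0 ≤ i :=
    ⟨S.min' hne, S.min'_mem hne, fun i hi => S.min'_le i hi⟩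
  obtain ⟨i1, hi1, hmax⟩ : ∃ i1 ∈ S, ∀ i ∈ S, i ≤ i1 :=
    ⟨S.max' hne, S.max'_mem hne, fun i hi => S.le_max' i hi⟩
  have hpar : ∀ i ∈ S, (i - i0) % 2 = 0 := by
    intro i hi
    have h0 := hmin i hi
    have h1 := hY i hi
    have := exch_parity hdisj hbip p i0 (i - i0) (by omega) (hY i0 hi0).2.2
    rw [Nat.add_sub_cancel' h0] at this
    by_contra hc
    exact Finset.disjoint_left.1 hdisj (this.2 (by omega)) h1.2.2
  have hc2 : S.card ≤ (Finset.range ((i1 - i0) / 2 + 1)).card := by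
    refine Finset.card_le_card_of_injOn (fun i => (i - i0) / 2) ?_ ?_
    · intro i hi
      have := hmax i hi
      have : (i - i0) / 2 ≤ (i1 - i0) / 2 := Nat.div_le_div_right (by omega)
      simp only [Finset.coe_range, Set.mem_Iio]
      omega
    · intro i hi j hj hij
      have := hpar i hi
      have := hpar j hj
      have := hmin i hi
      have := hmin j hj
      simp only at hij
      omega
  rw [Finset.card_range] at hc2
  have h01 := hmin i1 hi1
  have hl1 := (hY i1 hi1).1
  refine ⟨_, _, (p.take i1).drop i0, (hp.take i1).drop i0, ?_, ?_, ?_, (hY i1 hi1).2.1.symm⟩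
  · exact ((Walk.isSubwalk_drop _ _).trans (p.isSubwalk_take _)).support_subset
  · rw [Walk.drop_length, Walk.take_length, min_eq_left hl1]
    omega
  · rw [Walk.take_getVert, min_eq_right h01]
    exact (hY i0 hi0).2.1

/-- Let G be bipartite with parts X, Y. Let G₂ be the subgraph induced
on the support of a Hamilton path P = u₁⋯u_s of G₂ (u₁ ∈ X), containing no cycle of
length at least 2t (t ≥ 3). Let C be an even cycle of length 2m ≥ 6 in G, disjoint
from P, with u₁ adjacent to every Y-vertex of C. Let x* be an X-vertex of C such
that u_s is adjacent to all X-vertices of C except x*. If x* has at least t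
neighbors on P, then G[V(P) ∪ V(C)] contains two vertex-disjoint cycles: one of
length at least 2t with vertices in (V(P) ∪ {x*}) \ {u₁}, and one of length exactly
2m with vertices in (V(C) ∪ {u₁}) \ {x*}. -/
theorem two_disjoint_cycles_by_exchange {V : Type*} [DecidableEq V]
    (G : SimpleGraph V) [DecidableRel G.Adj]
    (X Y : Finset V) (hdisj : Disjoint X Y) (hcover : ∀ z : V, z ∈ X ∨ z ∈ Y)
    (hbip : ∀ a b, G.Adj a b → (a ∈ X ∧ b ∈ Y) ∨ (a ∈ Y ∧ b ∈ X))
    (t : ℕ) (ht : 3 ≤ t) (m : ℕ) (hm : 3 ≤ m)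
    {u₁ uₛ : V} (p : G.Walk u₁ uₛ) (hp : p.IsPath) (hu₁X : u₁ ∈ X)
    (hnocycle : ∀ (w : V) (d : G.Walk w w), d.IsCycle →
      (∀ x ∈ d.support, x ∈ p.support) → d.length < 2 * t)
    (v₀ : V) (c : G.Walk v₀ v₀) (hc : c.IsCycle) (hlen : c.length = 2 * m)
    (hpc : ∀ w, w ∈ p.support → w ∉ c.support)
    (hu₁C : ∀ z ∈ c.support, z ∈ Y → G.Adj u₁ z)
    (xstar : V) (hx₁ : xstar ∈ c.support) (hx₂ : xstar ∈ X)
    (hus : ∀ z ∈ c.support, z ∈ X → z ≠ xstar → G.Adj uₛ z)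
    (hxP : t ≤ (p.support.toFinset.filter (fun w => G.Adj xstar w)).card) :
    ∃ (w₁ : V) (d₁ : G.Walk w₁ w₁) (w₂ : V) (d₂ : G.Walk w₂ w₂),
      d₁.IsCycle ∧ 2 * t ≤ d₁.length ∧
      (∀ x ∈ d₁.support, (x ∈ p.support ∨ x = xstar) ∧ x ≠ u₁) ∧
      d₂.IsCycle ∧ d₂.length = 2 * m ∧
      (∀ x ∈ d₂.support, (x ∈ c.support ∨ x = u₁) ∧ x ≠ xstar) ∧
      (∀ x ∈ d₁.support, x ∉ d₂.support) := by
  have hXY := Finset.disjoint_left.1 hdisj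
  have hu₁c : u₁ ∉ c.support := hpc _ p.start_mem_support
  have hxp : xstar ∉ p.support := fun h => hpc _ h hx₁
  -- first cycle
  obtain ⟨a, b, q, hq, hqs, hqu, hql, hxa, hbx⟩ : ∃ (a b : V) (q : G.Walk a b), q.IsPath ∧
      q.support ⊆ p.support ∧ u₁ ∉ q.support ∧ 2 * (t - 1) ≤ q.length ∧
      G.Adj xstar a ∧ G.Adj b xstar := by
    have hnadj : ¬ G.Adj xstar u₁ := by
      intro h
      have := hbip _ _ h
      have := hXY hu₁X
      have := hXY hx₂
      tauto
    cases p with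
    | nil =>
      exfalso
      simp [Finset.filter_singleton, hnadj] at hxP
      omega
    | cons h p' =>
      rw [SimpleGraph.Walk.cons_isPath_iff] at hp
      rw [SimpleGraph.Walk.support_cons, List.toFinset_cons, Finset.filter_insert,
        if_neg hnadj] at hxP
      obtain ⟨a, b, q, h1, h2, h3, h4, h5⟩ :=
        exch_subpath G X Y hdisj hbip t (by omega) p' hp.1 xstar hx₂ hxP
      refine ⟨a, b, q, h1, ?_, fun h => hp.2 (h2 h), h3, h4, h5⟩
      intro z hz
      rw [SimpleGraph.Walk.support_cons]
      exact List.mem_cons_of_mem _ (h2 hz)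
  -- second cycle
  obtain ⟨a', b', r, hr, hrl, hrs, hrx, ha', hb'⟩ : ∃ (a' b' : V) (r : G.Walk a' b'), r.IsPath ∧
      r.length + 2 = 2 * m ∧ r.support ⊆ c.support ∧ xstar ∉ r.support ∧
      G.Adj xstar a' ∧ G.Adj b' xstar := by
    have hc' := hc.rotate (u := xstar) (hu := hx₁)
    have hl' := c.length_rotate xstar hx₁
    have hs' := fun z => (c.mem_support_rotate_iff (w := z) xstar hx₁).1
    revert hc' hl' hs'
    generalize c.rotate xstar hx₁ = e
    intro hc' hl' hs'
    cases e with
    | nil => simp at hc'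
    | cons h e' =>
      rw [SimpleGraph.Walk.cons_isCycle_iff] at hc'
      rw [SimpleGraph.Walk.length_cons] at hl'
      have hnil : ¬ e'.Nil := by
        rw [← SimpleGraph.Walk.length_eq_zero_iff]
        omega
      have hadj := e'.adj_penultimate hnil
      have hcc := e'.concat_dropLast hadj
      have hpath : (e'.dropLast.concat hadj).IsPath := by rw [hcc]; exact hc'.1
      rw [SimpleGraph.Walk.concat_isPath_iff] at hpath
      have := SimpleGraph.Walk.length_dropLast_add_one hnil
      refine ⟨_, _, e'.dropLast, hpath.1, by omega, ?_, hpath.2, h, hadj⟩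
      intro z hz
      apply hs'
      rw [SimpleGraph.Walk.support_cons]
      have hz2 := SimpleGraph.Walk.support_subset_support_concat _ hadj hz
      rw [hcc] at hz2
      exact List.mem_cons_of_mem _ hz2
  have hYa : a' ∈ Y := by
    have := hbip _ _ ha'
    have := hXY hx₂
    tauto
  have hYb : b' ∈ Y := by
    have := hbip _ _ hb'
    have := hXY hx₂
    tauto
  have hua := hu₁C a' (hrs r.start_mem_support) hYa
  have hub := (hu₁C b' (hrs r.end_mem_support) hYb).symm
  have hs1 : ∀ z ∈ (SimpleGraph.Walk.cons hxa (q.concat hbx)).support,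
      z = xstar ∨ z ∈ q.support := by
    intro z hz
    simp [SimpleGraph.Walk.support_concat] at hz
    tauto
  have hs2 : ∀ z ∈ (SimpleGraph.Walk.cons hua (r.concat hub)).support,
      z = u₁ ∨ z ∈ r.support := by
    intro z hz
    simp [SimpleGraph.Walk.support_concat] at hz
    tauto
  have hxu : xstar ≠ u₁ := fun h => hu₁c (h ▸ hx₁)
  refine ⟨_, _, _, _, exch_close q hq (by omega) (fun h => hxp (hqs h)) hxa hbx, ?_, ?_,
    exch_close r hr (by omega) (fun h => hu₁c (hrs h)) hua hub, ?_, ?_, ?_⟩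
  · rw [SimpleGraph.Walk.length_cons, SimpleGraph.Walk.length_concat]
    omega
  · intro z hz
    rcases hs1 z hz with rfl | h
    · exact ⟨Or.inr rfl, hxu⟩
    · exact ⟨Or.inl (hqs h), fun h' => hqu (h' ▸ h)⟩
  · rw [SimpleGraph.Walk.length_cons, SimpleGraph.Walk.length_concat]
    omega
  · intro z hz
    rcases hs2 z hz with rfl | h
    · exact ⟨Or.inr rfl, hxu.symm⟩
    · exact ⟨Or.inl (hrs h), fun h' => hrx (h' ▸ h)⟩
  · intro z hz hz'
    rcases hs1 z hz with h1 | h1 <;> rcases hs2 z hz' with h2 | h2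
    · exact hxu (h1.symm.trans h2)
    · exact hrx (h1 ▸ h2)
    · exact hqu (h2 ▸ h1)
    · exact hpc z (hqs h1) (hrs h2)
end
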